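/- Let F : ℂ³ → ℂ be the homogeneous quintic F(x,y,z) = (x² + y² − 2z²)(x² + 2y² − 2z²)(y − z), whose projective zero locus is the union of two smooth conics tangent to each other at the two points [√2:0:1] and [−√2:0:1], together with a line that is simply tangent to the conic x² + 2y² = 2z² at [0:1:1] and meets the conic x² + y² = 2z² transversally at [1:1:1] and [−1:1:1]. Let C ⊆ ℙ²(ℂ) be the set of points [v] with v ∈ ℂ³ \ {0} and F(v) = 0, and let U = ℙ²(ℂ) \ C. Then for every basepoint u ∈ U, the fundamental group π₁(U, u) is isomorphic to the presented group ⟨a, b | (ab)²·((ba)²)⁻¹⟩, i.e. the group with presentation ⟨a, b | (ab)² = (ba)²⟩. -/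

import Mathlib

/-- The quotient topology on the complex projective plane `ℙ²(ℂ)`, i.e. the quotient
topology induced from `ℂ³ \ {0}` by the projectivization map. -/
instance : TopologicalSpace (Projectivization ℂ (Fin 3 → ℂ)) :=
  inferInstanceAs (TopologicalSpace (Quotient (projectivizationSetoid ℂ (Fin 3 → ℂ))))

/-- The homogeneous quintic whose zero locus is the union of the two tangent conics
`x² + y² = 2z²` and `x² + 2y² = 2z²` together with the line `y = z`, which is simply
tangent to the second conic and transversal to the first. -/
noncomputable def F (v : Fin 3 → ℂ) : ℂ :=
  ((v 0) ^ 2 + (v 1) ^ 2 - 2 * (v 2) ^ 2) *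
    ((v 0) ^ 2 + 2 * (v 1) ^ 2 - 2 * (v 2) ^ 2) * ((v 1) - (v 2))

/-- The projective curve `C ⊆ ℙ²(ℂ)` defined by `F = 0`. -/
noncomputable def C : Set (Projectivization ℂ (Fin 3 → ℂ)) :=
  {p | ∃ (v : Fin 3 → ℂ) (hv : v ≠ 0), F v = 0 ∧ p = Projectivization.mk ℂ v hv}

/-- The complement `U = ℙ²(ℂ) \ C`. -/
noncomputable def U : Set (Projectivization ℂ (Fin 3 → ℂ)) := Cᶜ

/-- The single relator `(ab)²((ba)²)⁻¹` of the presentation `⟨a, b | (ab)² = (ba)²⟩`. -/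
def rels : Set (FreeGroup (Fin 2)) :=
  {(FreeGroup.of 0 * FreeGroup.of 1) ^ 2 * ((FreeGroup.of 1 * FreeGroup.of 0) ^ 2)⁻¹}

/-!
In the affine chart whose line at infinity is the tangent line `y = z`, the complement of the curve
becomes `{(x, y) | y ≠ 0, (x² - y - 2)² ≠ 16 y}`, and `y = exp (2 ω)` unwinds the conic `y = 0`.
Over a fixed `x` the remaining obstruction points are those with `exp (2 ω) = (2 ± ν)²`, where
`ν² = x² + 2`. The set of `(x, ω)` whose horizontal ray `ω + r`, `r ≥ 0`, meets no obstruction is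
open, dense and contractible, so a path with both end points in it has a well-defined class in `π₁`.
Consequently `π₁` is generated by the class `a` of a path crossing a single obstruction ray, which
does not depend on where the crossing takes place, and the class `b` of `ω ↦ ω + π i`.
Near the tangency `(-√2, 0)`, in the coordinates `s = x² - y - 2` and `y`, the complement is
invariant under `(s, y) ↦ (λ s, λ² y)` with `|λ| = 1`. A full turn of this circle action has class
`(ab)²` and commutes with `a`, which is the relation `(ab)² = (ba)²`.

There are no further relations: for group elements `β`, `γ` with `γ² β = β γ²`, gluing along the
coordinate `m = (y + 2 - x²) / √y`, in which the quartic is `m = ± 4`, gives a covering whose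
monodromy sends `a` to `β⁻¹` and `b` to `β γ⁻¹`. With `β = a⁻¹` and `γ = (ab)⁻¹` in the presented
group this is the left regular action.
-/

open CategoryTheory
open Complex (I)
open scoped Real

/-! ### Path classes inside simply connected spaces -/

section PathTransport

variable {D E Y X : Type*} [TopologicalSpace D] [TopologicalSpace E] [TopologicalSpace Y]
  [TopologicalSpace X]

/-- The image under `f` of the unique homotopy class of paths between two points of a simply
connected space. -/
noncomputable def pathTransport [SimplyConnectedSpace D] (f : C(D, Y)) (d d' : D) :
    FundamentalGroupoid.mk (f d) ⟶ FundamentalGroupoid.mk (f d') :=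
  Path.Homotopic.Quotient.map (Path.Homotopic.Quotient.mk (PathConnectedSpace.somePath d d')) f

theorem map_eq_pathTransport [SimplyConnectedSpace D] (f : C(D, Y)) {d d' : D}
    (p : Path.Homotopic.Quotient d d') : p.map f = pathTransport f d d' :=
  congrArg (fun q => Path.Homotopic.Quotient.map q f) (Subsingleton.elim _ _)

@[simp]
theorem pathTransport_self [SimplyConnectedSpace D] (f : C(D, Y)) (d : D) :
    pathTransport f d d = 𝟙 _ := (map_eq_pathTransport f (.refl d)).symm

@[simp]
theorem pathTransport_trans [SimplyConnectedSpace D] (f : C(D, Y)) (d d' d'' : D) :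
    pathTransport f d d' ≫ pathTransport f d' d'' = pathTransport f d d'' := by
  rw [← map_eq_pathTransport f
    (Path.Homotopic.Quotient.trans (.mk (PathConnectedSpace.somePath d d'))
      (.mk (PathConnectedSpace.somePath d' d'')))]
  exact ((FundamentalGroupoid.map f).map_comp
    (X := ⟨d⟩) (Y := ⟨d'⟩) (Z := ⟨d''⟩) (.mk (PathConnectedSpace.somePath d d'))
    (.mk (PathConnectedSpace.somePath d' d''))).symm

theorem pathTransport_comp [SimplyConnectedSpace D] [SimplyConnectedSpace E] (f : C(E, Y))
    (g : C(D, E)) (d d' : D) :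
    pathTransport (f.comp g) d d' = pathTransport f (g d) (g d') := by
  rw [pathTransport, Path.Homotopic.Quotient.map_comp, map_eq_pathTransport f]

theorem map_pathTransport [SimplyConnectedSpace D] (f : C(D, Y)) (g : C(Y, X)) (d d' : D) :
    (FundamentalGroupoid.map g).map (pathTransport f d d') = pathTransport (g.comp f) d d' :=
  (Path.Homotopic.Quotient.map_comp
    (p := .mk (PathConnectedSpace.somePath d d')) (f := f) (g := g)).symm

theorem pathTransport_congr [SimplyConnectedSpace D] {f g : C(D, Y)} (h : f = g) (d d' : D) :
    pathTransport f d d' = eqToHom (by rw [h]) ≫ pathTransport g d d' ≫ eqToHom (by rw [h]) := by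
  subst h
  simp only [eqToHom_refl, Category.id_comp, Category.comp_id]

instance : ContractibleSpace unitInterval :=
  (convex_Icc (0 : ℝ) 1).contractibleSpace ⟨0, by simp⟩

/-- The inclusion of a subset as a bundled continuous map. -/
def setIncl (N : Set Y) : C(N, Y) := ⟨Subtype.val, continuous_subtype_val⟩

variable (e : C(Y, X))

/-- The image under `e` of the unique path class inside the simply connected set `N`. -/
noncomputable def inTransport (N : Set Y) [SimplyConnectedSpace N] {x y : Y} (hx : x ∈ N)
    (hy : y ∈ N) : FundamentalGroupoid.mk (e x) ⟶ FundamentalGroupoid.mk (e y) :=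
  pathTransport (e.comp (setIncl N)) ⟨x, hx⟩ ⟨y, hy⟩

@[simp]
theorem inTransport_self (N : Set Y) [SimplyConnectedSpace N] {x : Y} (hx : x ∈ N) :
    inTransport e N hx hx = 𝟙 _ := pathTransport_self _ _

theorem inTransport_trans (N : Set Y) [SimplyConnectedSpace N] {x y z : Y} (hx : x ∈ N)
    (hy : y ∈ N) (hz : z ∈ N) :
    inTransport e N hx hy ≫ inTransport e N hy hz = inTransport e N hx hz :=
  pathTransport_trans _ _ _ _

theorem inTransport_eq_eqToHom (N : Set Y) [SimplyConnectedSpace N] {x y : Y} (hxy : x = y)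
    (hx : x ∈ N) (hy : y ∈ N) : inTransport e N hx hy = eqToHom (by rw [hxy]) := by
  subst hxy
  exact inTransport_self e N hx

theorem pathTransport_eq_inTransport_of_forall_mem [SimplyConnectedSpace D] (f : C(D, Y))
    (N : Set Y) [SimplyConnectedSpace N] (hf : ∀ x, f x ∈ N) (d d' : D) :
    pathTransport (e.comp f) d d' = inTransport e N (hf d) (hf d') :=
  pathTransport_comp (e.comp (setIncl N)) ⟨fun x => ⟨f x, hf x⟩, by fun_prop⟩ d d'

theorem pathTransport_eq_inTransport (p : C(unitInterval, Y)) {a b : unitInterval} (hab : a ≤ b)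
    (N : Set Y) [SimplyConnectedSpace N] (h : ∀ s ∈ Set.Icc a b, p s ∈ N) :
    pathTransport (e.comp p) a b =
      inTransport e N (h a (Set.left_mem_Icc.2 hab)) (h b (Set.right_mem_Icc.2 hab)) := by
  let clamp : C(unitInterval, unitInterval) := ⟨fun s => max a (min s b), by fun_prop⟩
  have clamp_mem : ∀ s, clamp s ∈ Set.Icc a b := fun s =>
    ⟨le_max_left _ _, max_le hab (min_le_right _ _)⟩
  have clamp_left : clamp a = a := by
    change max a (min a b) = a
    rw [min_eq_left hab, max_self]
  have clamp_right : clamp b = b := by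
    change max a (min b b) = b
    rw [min_self, max_eq_right hab]
  have key := pathTransport_eq_inTransport_of_forall_mem e (p.comp clamp) N
    (fun s => h _ (clamp_mem s)) a b
  have hclamp := pathTransport_comp (e.comp p) clamp a b
  have hleft : HEq (pathTransport (e.comp p) (clamp a) (clamp b))
      (pathTransport (e.comp p) a b) := by
    rw [clamp_left, clamp_right]
  have hright : HEq (inTransport e N (h _ (clamp_mem a)) (h _ (clamp_mem b)))
      (inTransport e N (h a (Set.left_mem_Icc.2 hab)) (h b (Set.right_mem_Icc.2 hab))) := by
    congr 1 <;> simp only [clamp_left, clamp_right] <;> exact proof_irrel_heq _ _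
  exact eq_of_heq (hleft.symm.trans ((heq_of_eq (hclamp.symm.trans key)).trans hright))

theorem inTransport_eq_of_joinedIn {M N : Set Y} [SimplyConnectedSpace M]
    [SimplyConnectedSpace N] {x y : Y} (h : JoinedIn (M ∩ N) x y) :
    inTransport e M h.source_mem.1 h.target_mem.1 =
      inTransport e N h.source_mem.2 h.target_mem.2 := by
  obtain ⟨⟨p, rfl, rfl⟩, hp⟩ := h
  exact (pathTransport_eq_inTransport_of_forall_mem e p M (fun t => (hp t).1) 0 1).symm.trans
    (pathTransport_eq_inTransport_of_forall_mem e p N (fun t => (hp t).2) 0 1)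

end PathTransport

/-! ### Loops closed up inside a simply connected set -/

section BasedClass

variable {D E Y X : Type*} [TopologicalSpace D] [TopologicalSpace E] [TopologicalSpace Y]
  [TopologicalSpace X]

variable (e : C(Y, X)) (A : Set Y) [SimplyConnectedSpace A] (z₀ : A)

/-- The loop obtained from a path class between the images of two points of `A` by joining both
ends to the base point inside `A`. -/
noncomputable def closeUp {z z' : Y} (hz : z ∈ A) (hz' : z' ∈ A)
    (m : FundamentalGroupoid.mk (e z) ⟶ FundamentalGroupoid.mk (e z')) :
    FundamentalGroup X (e z₀) :=
  inTransport e A z₀.2 hz ≫ m ≫ inv (inTransport e A z₀.2 hz')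

variable {e A z₀}

theorem closeUp_mul {z z' z'' : Y} (hz : z ∈ A) (hz' : z' ∈ A) (hz'' : z'' ∈ A)
    (m : FundamentalGroupoid.mk (e z) ⟶ FundamentalGroupoid.mk (e z'))
    (m' : FundamentalGroupoid.mk (e z') ⟶ FundamentalGroupoid.mk (e z'')) :
    closeUp e A z₀ hz' hz'' m' * closeUp e A z₀ hz hz' m = closeUp e A z₀ hz hz'' (m ≫ m') := by
  simp only [closeUp, End.mul_def, Category.assoc, IsIso.inv_hom_id_assoc]

theorem closeUp_inTransport {z z' : Y} (hz : z ∈ A) (hz' : z' ∈ A) :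
    closeUp e A z₀ hz hz' (inTransport e A hz hz') = 1 := by
  rw [closeUp, ← Category.assoc, inTransport_trans, IsIso.hom_inv_id]
  rfl

variable (e A z₀) in
open Classical in
/-- The loop in `X` obtained by closing up, inside the simply connected set `A`, a path of `Y`
whose end points lie in `A`; it is `1` if one of the end points lies outside `A`. -/
noncomputable def basedClass [SimplyConnectedSpace D] (f : C(D, Y)) (d d' : D) :
    FundamentalGroup X (e z₀) :=
  if h : f d ∈ A ∧ f d' ∈ A then closeUp e A z₀ h.1 h.2 (pathTransport (e.comp f) d d') else 1

theorem basedClass_eq [SimplyConnectedSpace D] (f : C(D, Y)) {d d' : D}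
    (h : f d ∈ A) (h' : f d' ∈ A) :
    basedClass e A z₀ f d d' = closeUp e A z₀ h h' (pathTransport (e.comp f) d d') :=
  dif_pos ⟨h, h'⟩

theorem basedClass_setIncl (N : Set Y) [SimplyConnectedSpace N] {x y : Y} (hx : x ∈ N) (hy : y ∈ N)
    (h : x ∈ A) (h' : y ∈ A) :
    basedClass e A z₀ (setIncl N) ⟨x, hx⟩ ⟨y, hy⟩ = closeUp e A z₀ h h' (inTransport e N hx hy) :=
  basedClass_eq (setIncl N) (d := ⟨x, hx⟩) (d' := ⟨y, hy⟩) h h'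

theorem basedClass_mul [SimplyConnectedSpace D] (f : C(D, Y)) {d d' d'' : D}
    (h : f d ∈ A) (h' : f d' ∈ A) (h'' : f d'' ∈ A) :
    basedClass e A z₀ f d' d'' * basedClass e A z₀ f d d' = basedClass e A z₀ f d d'' := by
  rw [basedClass_eq f h h', basedClass_eq f h' h'', basedClass_eq f h h'',
    closeUp_mul, pathTransport_trans]

theorem basedClass_self [SimplyConnectedSpace D] (f : C(D, Y)) (d : D) :
    basedClass e A z₀ f d d = 1 := by
  by_cases h : f d ∈ A
  · rw [basedClass_eq f h h, pathTransport_self, ← closeUp_inTransport h h,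
      inTransport_self]
    rfl
  · exact dif_neg fun h' => h h'.1

theorem basedClass_inv [SimplyConnectedSpace D] (f : C(D, Y)) {d d' : D}
    (h : f d ∈ A) (h' : f d' ∈ A) :
    basedClass e A z₀ f d' d = (basedClass e A z₀ f d d')⁻¹ := by
  rw [eq_inv_iff_mul_eq_one, basedClass_mul f h h' h, basedClass_self]

theorem basedClass_comp [SimplyConnectedSpace D] [SimplyConnectedSpace E] (f : C(E, Y))
    (g : C(D, E)) (d d' : D) :
    basedClass e A z₀ (f.comp g) d d' = basedClass e A z₀ f (g d) (g d') := by
  by_cases h : f (g d) ∈ A ∧ f (g d') ∈ A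
  · rw [basedClass_eq f h.1 h.2, basedClass_eq (f.comp g) h.1 h.2]
    exact congrArg (closeUp e A z₀ h.1 h.2) (pathTransport_comp (e.comp f) g d d')
  · rw [basedClass, basedClass, dif_neg h]
    exact dif_neg h

theorem basedClass_setIncl_of_forall_mem {N : Set Y} [SimplyConnectedSpace N]
    (p : C(unitInterval, Y)) (hp : ∀ t, p t ∈ N) :
    basedClass e A z₀ (setIncl N) ⟨p 0, hp 0⟩ ⟨p 1, hp 1⟩ = basedClass e A z₀ p 0 1 :=
  (basedClass_comp (setIncl N) (⟨fun t => ⟨p t, hp t⟩, by fun_prop⟩ : C(unitInterval, N)) 0 1).symm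

theorem basedClass_eq_of_eq_one [SimplyConnectedSpace D] (f : C(D, Y)) {d d' c c' : D}
    (hd : f d ∈ A) (hd' : f d' ∈ A) (hc : f c ∈ A) (hc' : f c' ∈ A)
    (h : basedClass e A z₀ f d c = 1) (h' : basedClass e A z₀ f d' c' = 1) :
    basedClass e A z₀ f d d' = basedClass e A z₀ f c c' := by
  rw [← basedClass_mul f hd hc' hd', ← basedClass_mul f hd hc hc', h, basedClass_inv f hd' hc', h',
    mul_one, inv_one, one_mul]

theorem basedClass_of_forall_mem [SimplyConnectedSpace D] (f : C(D, Y)) (d d' : D)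
    (h : ∀ x, f x ∈ A) : basedClass e A z₀ f d d' = 1 := by
  rw [basedClass_eq f (h d) (h d'),
    pathTransport_eq_inTransport_of_forall_mem e f A h, closeUp_inTransport]

theorem basedClass_eq_one_of_mem [SimplyConnectedSpace D] [SimplyConnectedSpace E]
    (f : C(E, Y)) (k : C(D, E)) {d d' : D} {x y : E} (hx : k d = x) (hy : k d' = y)
    (h : ∀ s, f (k s) ∈ A) : basedClass e A z₀ f x y = 1 := by
  rw [← hx, ← hy, ← basedClass_comp]
  exact basedClass_of_forall_mem _ _ _ h

theorem basedClass_square (f : C(unitInterval × unitInterval, Y))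
    (h₀ : ∀ s, f (s, 0) ∈ A) (h₁ : ∀ s, f (s, 1) ∈ A) :
    basedClass e A z₀ f (0, 0) (0, 1) = basedClass e A z₀ f (1, 0) (1, 1) := by
  have e₀ : basedClass e A z₀ f (0, 0) (1, 0) = 1 :=
    basedClass_eq_one_of_mem f
      (ContinuousMap.mk (fun s : unitInterval => (s, (0 : unitInterval))) (by fun_prop))
      (d := 0) (d' := 1) rfl rfl h₀
  have e₁ : basedClass e A z₀ f (0, 1) (1, 1) = 1 :=
    basedClass_eq_one_of_mem f
      (ContinuousMap.mk (fun s : unitInterval => (s, (1 : unitInterval))) (by fun_prop))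
      (d := 0) (d' := 1) rfl rfl h₁
  calc basedClass e A z₀ f (0, 0) (0, 1)
      = basedClass e A z₀ f (0, 1) (1, 1) * basedClass e A z₀ f (0, 0) (0, 1) := by
        rw [e₁, one_mul]
    _ = basedClass e A z₀ f (1, 0) (1, 1) * basedClass e A z₀ f (0, 0) (1, 0) := by
        rw [basedClass_mul f (h₀ 0) (h₁ 0) (h₁ 1),
          basedClass_mul f (h₀ 0) (h₀ 1) (h₁ 1)]
    _ = basedClass e A z₀ f (1, 0) (1, 1) := by rw [e₀, mul_one]

variable (e A z₀) in
/-- The loop in `X` below a path in `A` from the base point to a point of the same fibre. -/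
noncomputable def legLoop {z : Y} (hz : z ∈ A) (h : e z = e z₀) : FundamentalGroup X (e z₀) :=
  inTransport e A z₀.2 hz ≫ eqToHom (congrArg _ h)

end BasedClass

section Deck

variable {D Y X : Type*} [TopologicalSpace D] [TopologicalSpace Y] [TopologicalSpace X]

variable (e : C(Y, X)) (A : Set Y) [SimplyConnectedSpace A] (z₀ : A) (sh : C(Y, Y))
  (he : e.comp sh = e) (hA : ∀ z ∈ A, sh z ∈ A)

/-- The loop in `X` below a path in `A` from the base point to its image under the deck
transformation `sh`. -/
noncomputable def deckLoop : FundamentalGroup X (e z₀) :=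
  legLoop e A z₀ (hA z₀ z₀.2) (DFunLike.congr_fun he (z₀ : Y))

variable {e A z₀}

theorem inTransport_deck {z : Y} (hz : z ∈ A) :
    inTransport e A z₀.2 (hA z hz) = FundamentalGroup.toArrow (deckLoop e A z₀ sh he hA) ≫
      inTransport e A z₀.2 hz ≫ eqToHom (congrArg _ (DFunLike.congr_fun he z).symm) := by
  let shA : C(A, A) := ⟨fun z => ⟨sh z, hA z z.2⟩, by fun_prop⟩
  have hcomp := pathTransport_comp (e.comp (setIncl A)) shA z₀ ⟨z, hz⟩
  have hcongr := pathTransport_congr (f := (e.comp (setIncl A)).comp shA)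
    (g := e.comp (setIncl A))
    (ContinuousMap.ext fun x => DFunLike.congr_fun he (x : Y)) z₀ ⟨z, hz⟩
  refine (pathTransport_trans (e.comp (setIncl A)) z₀ (shA z₀) (shA ⟨z, hz⟩)).symm.trans ?_
  rw [← hcomp, hcongr]
  simp only [deckLoop, legLoop, Category.assoc]
  rfl

theorem basedClass_deck [SimplyConnectedSpace D] (f : C(D, Y)) {d d' : D}
    (h : f d ∈ A) (h' : f d' ∈ A) :
    basedClass e A z₀ (sh.comp f) d d' = (deckLoop e A z₀ sh he hA)⁻¹ *
      basedClass e A z₀ f d d' * deckLoop e A z₀ sh he hA := by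
  rw [mul_assoc, eq_inv_mul_iff_mul_eq, basedClass_eq f h h',
    basedClass_eq (sh.comp f) (hA _ h) (hA _ h')]
  have hcongr := pathTransport_congr (f := e.comp (sh.comp f)) (g := e.comp f)
    (ContinuousMap.ext fun x => DFunLike.congr_fun he (f x)) d d'
  have hleft : inTransport e A z₀.2 (y := (sh.comp f) d) (hA _ h) = _ :=
    inTransport_deck sh he hA h
  have hright : inTransport e A z₀.2 (y := (sh.comp f) d') (hA _ h') = _ :=
    inTransport_deck sh he hA h'
  simp only [closeUp, hleft, hright, hcongr, End.mul_def]
  simp [FundamentalGroup.toArrow]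

theorem legLoop_deck {z : Y} (hz : z ∈ A) (h : e z = e z₀) :
    legLoop e A z₀ (hA z hz) ((DFunLike.congr_fun he z).trans h) =
      legLoop e A z₀ hz h * deckLoop e A z₀ sh he hA := by
  rw [legLoop, legLoop, inTransport_deck sh he hA hz, End.mul_def]
  simp [FundamentalGroup.toArrow]

theorem deckLoop_comp (sh' : C(Y, Y)) (he' : e.comp sh' = e) (hA' : ∀ z ∈ A, sh' z ∈ A)
    (hcomp : e.comp (sh.comp sh') = e) :
    deckLoop e A z₀ (sh.comp sh') hcomp (fun z hz => hA _ (hA' z hz)) =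
      deckLoop e A z₀ sh' he' hA' * deckLoop e A z₀ sh he hA :=
  legLoop_deck sh he hA (hA' z₀ z₀.2) (DFunLike.congr_fun he' (z₀ : Y))

end Deck

section Generation

variable {Y X : Type*} [TopologicalSpace Y] [TopologicalSpace X]

variable (e : C(Y, X)) (A : Set Y) [SimplyConnectedSpace A] (z₀ : A)
  (H : Subgroup (FundamentalGroup X (e z₀)))

/-- A simply connected open set whose paths with end points in `A` all have based class in `H`. -/
structure IsGoodNhd (N : Set Y) : Prop where
  isOpen : IsOpen N
  simplyConnectedSpace : SimplyConnectedSpace N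
  basedClass_mem : ∀ z z' : N, (z : Y) ∈ A → (z' : Y) ∈ A → basedClass e A z₀ (setIncl N) z z' ∈ H

variable {e A z₀ H}

theorem IsGoodNhd.closeUp_inTransport_mem {N : Set Y} [SimplyConnectedSpace N]
    (hN : IsGoodNhd e A z₀ H N) {x y : Y} (hx : x ∈ N) (hy : y ∈ N) (hxA : x ∈ A) (hyA : y ∈ A) :
    closeUp e A z₀ hxA hyA (inTransport e N hx hy) ∈ H := by
  rw [← basedClass_setIncl N hx hy hxA hyA]
  exact hN.basedClass_mem ⟨x, hx⟩ ⟨y, hy⟩ hxA hyA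

/-- The induction step of `basedClass_mem_of_isGoodNhd`: density of `A` provides a point of `A` in
the overlap of two good neighbourhoods through which the path class can be rerouted. -/
theorem closeUp_mem_of_forall_Icc_mem [LocallyPathConnectedSpace Y] (hA : Dense A)
    (p : C(unitInterval, Y)) (h₀ : p 0 ∈ A) {s t : unitInterval} (hst : s ≤ t)
    {N N' : Set Y} [SimplyConnectedSpace N] [SimplyConnectedSpace N']
    (hNo : IsOpen N) (hN' : IsGoodNhd e A z₀ H N') (hpN : ∀ r ∈ Set.Icc s t, p r ∈ N)
    (hs : ∀ y (hy : y ∈ N) (hyA : y ∈ A), closeUp e A z₀ h₀ hyA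
      (pathTransport (e.comp p) 0 s ≫ inTransport e N (hpN s (Set.left_mem_Icc.2 hst)) hy) ∈ H)
    (ht : p t ∈ N') {y : Y} (hy : y ∈ N') (hyA : y ∈ A) :
    closeUp e A z₀ h₀ hyA (pathTransport (e.comp p) 0 t ≫ inTransport e N' ht hy) ∈ H := by
  have htN : p t ∈ N := hpN t (Set.right_mem_Icc.2 hst)
  have hopen : IsOpen (pathComponentIn (N ∩ N') (p t)) :=
    (hNo.inter hN'.isOpen).pathComponentIn (p t)
  obtain ⟨y', hy'A, hjoin⟩ := hA.exists_mem_open hopen ⟨_, mem_pathComponentIn_self ⟨htN, ht⟩⟩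
  obtain ⟨hy'N, hy'N'⟩ := hjoin.target_mem
  have hmul := H.mul_mem (hN'.closeUp_inTransport_mem hy'N' hy hy'A hyA) (hs y' hy'N hy'A)
  have hreroute : (pathTransport (e.comp p) 0 s ≫
      inTransport e N (hpN s (Set.left_mem_Icc.2 hst)) hy'N) ≫ inTransport e N' hy'N' hy =
      pathTransport (e.comp p) 0 t ≫ inTransport e N' ht hy := by
    rw [← inTransport_trans e N _ htN, inTransport_eq_of_joinedIn e hjoin,
      ← pathTransport_eq_inTransport e p hst N hpN, ← Category.assoc (pathTransport _ _ _)]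
    exact (congrArg (fun m => (m ≫ _) ≫ _) (pathTransport_trans (e.comp p) 0 s t)).trans
      ((Category.assoc _ _ _).trans (congrArg _ (inTransport_trans e N' ht hy'N' hy)))
  rwa [closeUp_mul, hreroute] at hmul

theorem basedClass_mem_of_isGoodNhd [LocallyPathConnectedSpace Y] (hA : Dense A)
    (p : C(unitInterval, Y)) (hp : ∀ t, ∃ N, p t ∈ N ∧ IsGoodNhd e A z₀ H N)
    (h₀ : p 0 ∈ A) (h₁ : p 1 ∈ A) : basedClass e A z₀ p 0 1 ∈ H := by
  choose N hpN hN using hp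
  obtain ⟨τ, hτ0, hmono, ⟨m, hm⟩, hτ⟩ :=
    exists_monotone_Icc_subset_open_cover_unitInterval
      (fun t => (hN t).isOpen.preimage p.continuous) fun t _ => Set.mem_iUnion.2 ⟨t, hpN t⟩
  have key : ∀ n, ∀ (N : Set Y) [SimplyConnectedSpace N], IsGoodNhd e A z₀ H N →
      ∀ (ht : p (τ n) ∈ N) (y : Y) (hy : y ∈ N) (hyA : y ∈ A), closeUp e A z₀ h₀ hyA
        (pathTransport (e.comp p) 0 (τ n) ≫ inTransport e N ht hy) ∈ H := by
    intro n
    induction n with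
    | zero =>
      intro N _ hN ht y hy hyA
      generalize τ 0 = t at hτ0 ht
      subst hτ0
      rw [pathTransport_self]
      exact (congrArg (· ∈ H) (congrArg _ (Category.id_comp _))).mpr
        (hN.closeUp_inTransport_mem ht hy h₀ hyA)
    | succ n ih =>
      intro N' _ hN' ht y hy hyA
      obtain ⟨i, hi⟩ := hτ n
      have := (hN i).simplyConnectedSpace
      exact closeUp_mem_of_forall_Icc_mem hA p h₀ (hmono n.le_succ) (hN i).isOpen hN'
        (fun _ hr => hi hr) (fun y hy hyA => ih (N i) (hN i) _ y hy hyA) ht hy hyA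
  have := (hN 1).simplyConnectedSpace
  have hend : ∀ t (htN : p t ∈ N 1), t = 1 → closeUp e A z₀ h₀ h₁
      (pathTransport (e.comp p) 0 t ≫ inTransport e (N 1) htN (hpN 1)) ∈ H →
      basedClass e A z₀ p 0 1 ∈ H := by
    rintro _ _ rfl h
    rw [inTransport_self] at h
    rw [basedClass_eq p h₀ h₁]
    exact (congrArg (· ∈ H) (congrArg _ (Category.comp_id _))).mp h
  exact hend (τ m) (hm m le_rfl ▸ hpN 1) (hm m le_rfl) (key m (N 1) (hN 1) _ _ _ h₁)

end Generation

section LoopLift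

variable {Y X : Type*} [TopologicalSpace Y] [TopologicalSpace X]

theorem eq_eqToHom_comp_of_heq {x y x' y' : X}
    {m : FundamentalGroupoid.mk x ⟶ FundamentalGroupoid.mk y}
    {m' : FundamentalGroupoid.mk x' ⟶ FundamentalGroupoid.mk y'} (hx : x = x') (hy : y = y')
    (h : HEq m m') : m' = eqToHom (congrArg _ hx.symm) ≫ m ≫ eqToHom (congrArg _ hy) := by
  subst hx hy
  simpa only [eqToHom_refl, Category.id_comp, Category.comp_id] using (eq_of_heq h).symm

variable (e : C(Y, X))

theorem pathTransport_heq_mk (p : C(unitInterval, Y)) {x y : X} (γ : Path x y)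
    (h : ∀ t, e (p t) = γ t) :
    HEq (pathTransport (e.comp p) 0 1) (Path.Homotopic.Quotient.mk γ) := by
  let ι : Path (0 : unitInterval) 1 := ⟨.id _, rfl, rfl⟩
  rw [← map_eq_pathTransport (e.comp p) (.mk ι)]
  exact Path.Homotopic.hpath_hext h

variable (A : Set Y) [SimplyConnectedSpace A] (z₀ : A)

theorem mk_eq_legLoop_mul (p : C(unitInterval, Y)) (γ : Path (e z₀) (e z₀))
    (h : ∀ t, e (p t) = γ t) (h₀ : p 0 = z₀) (h₁ : p 1 ∈ A) :
    (Path.Homotopic.Quotient.mk γ : FundamentalGroup X (e z₀)) =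
      legLoop e A z₀ h₁ ((h 1).trans γ.target) * basedClass e A z₀ p 0 1 := by
  have h₀' : p 0 ∈ A := h₀ ▸ z₀.2
  rw [basedClass_eq p h₀' h₁, legLoop, End.mul_def, closeUp,
    inTransport_eq_eqToHom e A h₀.symm z₀.2 h₀',
    eq_eqToHom_comp_of_heq (congrArg e h₀) ((h 1).trans γ.target) (pathTransport_heq_mk e p γ h)]
  simp only [Category.assoc, IsIso.inv_hom_id_assoc]

end LoopLift

/-! ### Coverings with fibre a discrete group -/

/-- Locally defined `G`-valued functions on `X` whose mutual ratios are locally constant; such data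
determine a `G`-covering of `X`. -/
structure RatioCocycle (ι X G : Type*) [TopologicalSpace X] [Group G] where
  chart : ι → Set X
  isOpen_chart : ∀ i, IsOpen (chart i)
  index : X → ι
  mem_chart : ∀ x, x ∈ chart (index x)
  value : ι → X → G
  eventually_ratio : ∀ i j, ∀ x ∈ chart i ∩ chart j,
    ∀ᶠ y in nhds x, value j y * (value i y)⁻¹ = value j x * (value i x)⁻¹

namespace RatioCocycle

variable {ι X G D : Type*} [TopologicalSpace X] [Group G] [TopologicalSpace G]
  [TopologicalSpace D] (S : RatioCocycle ι X G)

/-- The fibre bundle core with fibre `G` and transition functions the ratios of `S`. -/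
def core [DiscreteTopology G] : FiberBundleCore ι X G where
  baseSet := S.chart
  isOpen_baseSet := S.isOpen_chart
  indexAt := S.index
  mem_baseSet_at := S.mem_chart
  coordChange i j x g := S.value j x * (S.value i x)⁻¹ * g
  coordChange_self i x _ v := by simp
  continuousOn_coordChange i j := by
    rintro ⟨x, g⟩ hx
    refine ContinuousAt.continuousWithinAt ?_
    have h : (fun p : X × G => S.value j p.1 * (S.value i p.1)⁻¹ * p.2) =ᶠ[nhds (x, g)]
        fun p => S.value j x * (S.value i x)⁻¹ * p.2 := by
      filter_upwards [continuousAt_fst.eventually (S.eventually_ratio i j x hx.1)] with p hp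
      rw [hp]
    refine ContinuousAt.congr ?_ h.symm
    exact (continuous_of_discreteTopology (f := fun a : G =>
      S.value j x * (S.value i x)⁻¹ * a)).continuousAt.comp continuousAt_snd
  coordChange_comp i j k x _ v := by simp [mul_assoc]

variable [DiscreteTopology G]

theorem isCoveringMap : IsCoveringMap (Bundle.TotalSpace.proj : S.core.TotalSpace → X) :=
  FiberBundle.isCoveringMap

/-- The `G`-coordinate of a point of the total space which does not depend on a chart. -/
def coord (p : S.core.TotalSpace) : G := (S.value (S.index p.1) p.1)⁻¹ * (show G from p.2)

/-- The point of the total space over `x` with a given `G`-coordinate. -/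
def point (x : X) (k : G) : S.core.TotalSpace := ⟨x, (S.value (S.index x) x * k : G)⟩

@[simp]
theorem coord_point (x : X) (k : G) : S.coord (S.point x k) = k := inv_mul_cancel_left _ _

theorem point_coord (p : S.core.TotalSpace) : S.point p.1 (S.coord p) = p := by
  obtain ⟨x, v⟩ := p
  exact congrArg (Bundle.TotalSpace.mk x) (mul_inv_cancel_left (S.value (S.index x) x) (v : G))

theorem fiberPoint_coord {y : X}
    (q : (Bundle.TotalSpace.proj : S.core.TotalSpace → X) ⁻¹' {y}) :
    (⟨S.point y (S.coord q.1), rfl⟩ :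
      (Bundle.TotalSpace.proj : S.core.TotalSpace → X) ⁻¹' {y}) = q := by
  obtain ⟨q, hq⟩ := q
  have hq' : q.1 = y := hq
  subst hq'
  exact Subtype.ext (S.point_coord q)

/-- The monodromy of the covering determined by `S`, in terms of `G`-coordinates. -/
noncomputable def monodromy {x y : X} (γ : FundamentalGroupoid.mk x ⟶ FundamentalGroupoid.mk y)
    (k : G) : G :=
  S.coord (S.isCoveringMap.monodromy γ ⟨S.point x k, rfl⟩).1

theorem monodromy_id (x : X) (k : G) : S.monodromy (𝟙 (FundamentalGroupoid.mk x)) k = k := by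
  have := congrFun (S.isCoveringMap.monodromy_refl (x := x)) ⟨S.point x k, rfl⟩
  exact (congrArg (fun e => S.coord e.1) this).trans (S.coord_point x k)

theorem monodromy_eqToHom {x y : X} (h : x = y) (k : G) :
    S.monodromy (eqToHom (congrArg FundamentalGroupoid.mk h)) k = k := by
  subst h
  exact S.monodromy_id x k

theorem monodromy_comp {x y z : X} (γ : FundamentalGroupoid.mk x ⟶ FundamentalGroupoid.mk y)
    (γ' : FundamentalGroupoid.mk y ⟶ FundamentalGroupoid.mk z) (k : G) :
    S.monodromy (γ ≫ γ') k = S.monodromy γ' (S.monodromy γ k) := by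
  have := S.isCoveringMap.monodromy_trans_apply γ γ' ⟨S.point x k, rfl⟩
  refine (congrArg (fun e => S.coord e.1) this).trans ?_
  exact congrArg (fun e => S.coord (S.isCoveringMap.monodromy γ' e).1)
    (S.fiberPoint_coord (S.isCoveringMap.monodromy γ ⟨S.point x k, rfl⟩)).symm

theorem monodromy_pathTransport [SimplyConnectedSpace D] (f : C(D, X)) (i : ι)
    (hf : ∀ x, f x ∈ S.chart i) (d d' : D) (k : G) :
    S.monodromy (pathTransport f d d') k =
      (S.value i (f d'))⁻¹ * (S.value i (f d) * k) := by
  set g := S.value i (f d) * k with hg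
  have hpt : ∀ x, ((S.core.localTriv i).toOpenPartialHomeomorph.symm (f x, g) :
      S.core.TotalSpace) = S.point (f x) ((S.value i (f x))⁻¹ * g) := by
    intro x
    rw [FiberBundleCore.localTriv_symm_apply]
    exact congrArg (fun a : G => (⟨f x, a⟩ : S.core.TotalSpace))
      (mul_assoc (S.value (S.index (f x)) (f x)) (S.value i (f x))⁻¹ g)
  let s : C(D, S.core.TotalSpace) :=
    ⟨fun x => S.point (f x) ((S.value i (f x))⁻¹ * g), by
      simp_rw [← hpt]
      refine (S.core.localTriv i).toOpenPartialHomeomorph.continuousOn_symm.comp_continuous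
        (by fun_prop) fun x => ?_
      exact (FiberBundleCore.mem_localTriv_target _ _ _).2 (hf x)⟩
  have hlift := S.isCoveringMap.monodromy_map (pathTransport s d d')
  have hproj : Path.Homotopic.Quotient.map (pathTransport s d d')
      ⟨Bundle.TotalSpace.proj, S.isCoveringMap.continuous⟩ = pathTransport f d d' :=
    map_pathTransport s ⟨Bundle.TotalSpace.proj, S.isCoveringMap.continuous⟩ d d'
  rw [hproj] at hlift
  have hstart : S.point (f d) k = s d := by simp [s, hg]
  calc S.monodromy (pathTransport f d d') k = S.coord
        (S.isCoveringMap.monodromy (pathTransport f d d') ⟨s d, rfl⟩).1 := by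
          simp only [monodromy]
          congr 4
    _ = S.coord (s d') := congrArg (fun e => S.coord e.1) hlift
    _ = _ := S.coord_point _ _

/-- The monodromy action of the fundamental group on `G`-coordinates. -/
noncomputable def monodromyHom (x : X) : FundamentalGroup X x →* Equiv.Perm G :=
  MonoidHom.toHomPerm
    { toFun := fun γ => (S.monodromy γ : Function.End G)
      map_one' := funext fun k => S.monodromy_id x k
      map_mul' := fun γ γ' => funext fun k => S.monodromy_comp γ' γ k }

theorem monodromyHom_apply {x : X} (γ : FundamentalGroup X x) (k : G) :
    S.monodromyHom x γ k = S.monodromy γ k := rfl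

end RatioCocycle

/-! ### The logarithmic cover and its ray-free part -/

/-- The complement of `y = 0` and of the quartic `(x² - y - 2)² = 16 y` in `ℂ²`: the complement of
the curve in the affine chart whose line at infinity is the tangent line. -/
def affineComplement : Set (ℂ × ℂ) := {p | p.2 ≠ 0 ∧ (p.1 ^ 2 - p.2 - 2) ^ 2 ≠ 16 * p.2}

/-- The preimage of `affineComplement` under `(x, ω) ↦ (x, exp (2 ω))`. -/
def logCover : Set (ℂ × ℂ) :=
  {p | (p.1 ^ 2 - Complex.exp p.2 ^ 2 - 2) ^ 2 ≠ 16 * Complex.exp p.2 ^ 2}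

theorem mem_logCover_iff {x w ν : ℂ} (h : ν ^ 2 = x ^ 2 + 2) :
    (x, w) ∈ logCover ↔
      Complex.exp w ^ 2 ≠ (2 + ν) ^ 2 ∧ Complex.exp w ^ 2 ≠ (2 - ν) ^ 2 := by
  have factor : (x ^ 2 - Complex.exp w ^ 2 - 2) ^ 2 - 16 * Complex.exp w ^ 2 =
      (Complex.exp w ^ 2 - (2 + ν) ^ 2) * (Complex.exp w ^ 2 - (2 - ν) ^ 2) := by
    rw [eq_sub_of_add_eq h.symm]
    ring
  rw [← sub_ne_zero, ← sub_ne_zero (b := (2 - ν) ^ 2), ← mul_ne_zero_iff, ← factor, sub_ne_zero]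
  rfl

theorem isOpen_logCover : IsOpen logCover := isOpen_ne_fun (by fun_prop) (by fun_prop)

instance : LocallyPathConnectedSpace logCover := isOpen_logCover.locallyPathConnectedSpace

/-- The covering map `(x, ω) ↦ (x, exp (2 ω))`. -/
noncomputable def logCoverMap : C(logCover, affineComplement) where
  toFun p := ⟨(p.1.1, Complex.exp p.1.2 ^ 2), pow_ne_zero _ (Complex.exp_ne_zero _), p.2⟩
  continuous_toFun := by fun_prop

theorem exp_add_int_mul_pi_sq (w : ℂ) (k : ℤ) :
    Complex.exp (w + k * (π * I)) ^ 2 = Complex.exp w ^ 2 := by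
  rw [← Complex.exp_nat_mul, ← Complex.exp_nat_mul, Complex.exp_eq_exp_iff_exists_int]
  exact ⟨k, by push_cast; ring⟩

theorem add_int_mul_pi_mem_logCover {x w : ℂ} {k : ℤ} :
    (x, w + k * (π * I)) ∈ logCover ↔ (x, w) ∈ logCover := by
  simp only [logCover, Set.mem_ofPred_eq, exp_add_int_mul_pi_sq]

/-- The deck transformation `(x, ω) ↦ (x, ω + k π i)`. -/
noncomputable def deckShift (k : ℤ) : C(logCover, logCover) where
  toFun p := ⟨(p.1.1, p.1.2 + k * (π * I)), add_int_mul_pi_mem_logCover.2 p.2⟩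
  continuous_toFun := by fun_prop

theorem logCoverMap_comp_deckShift (k : ℤ) : logCoverMap.comp (deckShift k) = logCoverMap :=
  ContinuousMap.ext fun p => Subtype.ext (Prod.ext rfl (exp_add_int_mul_pi_sq p.1.2 k))

theorem deckShift_add (j k : ℤ) : deckShift (j + k) = (deckShift k).comp (deckShift j) := by
  ext p <;> simp [deckShift, add_mul, add_assoc]

/-- The points of `logCover` from which the horizontal ray to the right stays in `logCover`. -/
def rayFree : Set logCover := {p | ∀ r : ℝ, 0 ≤ r → (p.1.1, p.1.2 + r) ∈ logCover}

theorem deckShift_mem_rayFree (k : ℤ) : ∀ p ∈ rayFree, deckShift k p ∈ rayFree := by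
  intro p hp r hr
  have h := (add_int_mul_pi_mem_logCover (k := k)).2 (hp r hr)
  rwa [add_right_comm] at h

theorem add_mem_rayFree {p : logCover} (hp : p ∈ rayFree) {r : ℝ} (hr : 0 ≤ r) :
    (⟨(p.1.1, p.1.2 + r), hp r hr⟩ : logCover) ∈ rayFree := by
  intro s hs
  simpa only [Complex.ofReal_add, add_assoc] using hp (r + s) (add_nonneg hr hs)

/-- A convex region of `ℂ × ℂ` inside `logCover` that every horizontal ray to the right enters. -/
def farRegion : Set (ℂ × ℂ) := {p | 2 + ‖p.1‖ < p.2.re}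

theorem convex_farRegion : Convex ℝ farRegion := by
  have hconv : ConvexOn ℝ Set.univ fun p : ℂ × ℂ => ‖p.1‖ :=
    (convexOn_norm convex_univ).comp_linearMap (LinearMap.fst ℝ ℂ ℂ)
  have hconc : ConcaveOn ℝ Set.univ fun p : ℂ × ℂ => p.2.re :=
    (Complex.reLm ∘ₗ LinearMap.snd ℝ ℂ ℂ).concaveOn convex_univ
  have hlt := ((convexOn_const 2 convex_univ).add hconv |>.sub hconc).convex_lt 0
  simpa only [farRegion, Set.mem_univ, true_and, Pi.add_apply, Pi.sub_apply, sub_neg] using hlt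

theorem farRegion_subset_logCover : farRegion ⊆ logCover := by
  rintro ⟨x, w⟩ (hxw : 2 + ‖x‖ < w.re)
  obtain ⟨ν, hν⟩ := IsAlgClosed.exists_pow_nat_eq (x ^ 2 + 2) (n := 2) two_pos
  have hν_le : ‖ν‖ ≤ ‖x‖ + 2 := by
    have : ‖ν‖ ^ 2 ≤ ‖x‖ ^ 2 + 2 := by
      rw [← norm_pow, ← norm_pow, hν]
      exact (norm_add_le _ _).trans (by simp)
    nlinarith [norm_nonneg ν, norm_nonneg x]
  have hexp : 4 + ‖x‖ < ‖Complex.exp w‖ := by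
    rw [Complex.norm_exp]
    have := Real.quadratic_le_exp_of_nonneg (x := w.re) (by linarith [norm_nonneg x])
    nlinarith [norm_nonneg x]
  have hne : ∀ c : ℂ, ‖c‖ ≤ 2 + ‖ν‖ → Complex.exp w ^ 2 ≠ c ^ 2 := fun c hc h => by
    have hnorm := congrArg norm h
    rw [norm_pow, norm_pow, sq_eq_sq₀ (norm_nonneg _) (norm_nonneg _)] at hnorm
    linarith
  exact (mem_logCover_iff hν).2 ⟨hne _ ((norm_add_le _ _).trans_eq (by simp)),
    hne _ ((norm_sub_le _ _).trans_eq (by simp))⟩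

theorem add_mem_farRegion {p : ℂ × ℂ} (hp : p ∈ farRegion) {r : ℝ} (hr : 0 ≤ r) :
    (p.1, p.2 + r) ∈ farRegion := by
  have hp' : 2 + ‖p.1‖ < p.2.re := hp
  change 2 + ‖p.1‖ < (p.2 + r).re
  rw [Complex.add_re, Complex.ofReal_re]
  linarith

theorem mem_rayFree_of_mem_farRegion {p : logCover} (hp : (p : ℂ × ℂ) ∈ farRegion) :
    p ∈ rayFree :=
  fun _ hr => farRegion_subset_logCover (add_mem_farRegion hp hr)

/-- A time after which the horizontal ray from a point has entered `farRegion`. -/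
noncomputable def rayTime (p : ℂ × ℂ) : ℝ := 3 + ‖p.1‖ + ‖p.2‖

theorem rayTime_nonneg (p : ℂ × ℂ) : 0 ≤ rayTime p := by unfold rayTime; positivity

@[fun_prop]
theorem continuous_rayTime : Continuous rayTime := by unfold rayTime; fun_prop

theorem add_rayTime_mem_farRegion (p : ℂ × ℂ) : (p.1, p.2 + rayTime p) ∈ farRegion := by
  have := (abs_le.1 (Complex.abs_re_le_norm p.2)).1
  change 2 + ‖p.1‖ < (p.2 + rayTime p).re
  rw [Complex.add_re, Complex.ofReal_re, rayTime]
  linarith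

theorem isOpen_rayFree : IsOpen rayFree := by
  rw [isOpen_iff_mem_nhds]
  intro p hp
  have hcompact : ∀ᶠ q : logCover in nhds p, ∀ r ∈ Set.Icc 0 (rayTime p),
      (q.1.1, q.1.2 + (r : ℂ)) ∈ logCover := by
    refine isCompact_Icc.eventually_forall_of_forall_eventually fun r hr => ?_
    have hc : Continuous fun z : logCover × ℝ => (z.1.1.1, z.1.1.2 + (z.2 : ℂ)) := by fun_prop
    exact hc.continuousAt.eventually (isOpen_logCover.mem_nhds (hp r hr.1))
  have hfar : ∀ᶠ q : logCover in nhds p, (q.1.1, q.1.2 + rayTime p) ∈ farRegion :=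
    (isOpen_lt (f := fun q : logCover => 2 + ‖q.1.1‖)
      (g := fun q : logCover => (q.1.2 + rayTime p).re) (by fun_prop) (by fun_prop)).mem_nhds
      (add_rayTime_mem_farRegion p.1)
  filter_upwards [hcompact, hfar] with q hq hqfar r hr
  rcases le_total r (rayTime p) with hle | hle
  · exact hq r ⟨hr, hle⟩
  · simpa only [add_assoc, ← Complex.ofReal_add, add_sub_cancel] using
      farRegion_subset_logCover (add_mem_farRegion hqfar (sub_nonneg.2 hle))

theorem sqrt_two_mk_mem_farRegion {w : ℂ} (hw : w.re = 4) :
    (((Real.sqrt 2 : ℝ) : ℂ), w) ∈ farRegion := by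
  have : Real.sqrt 2 < 2 := by rw [Real.sqrt_lt' two_pos]; norm_num
  change 2 + ‖((Real.sqrt 2 : ℝ) : ℂ)‖ < w.re
  rw [Complex.norm_real, Real.norm_of_nonneg (Real.sqrt_nonneg _), hw]
  linarith

/-- The chosen base point `(√2, 4)` of `logCover`. -/
noncomputable def coverBase : rayFree :=
  ⟨⟨((Real.sqrt 2 : ℝ), 4), farRegion_subset_logCover (sqrt_two_mk_mem_farRegion rfl)⟩,
    mem_rayFree_of_mem_farRegion (sqrt_two_mk_mem_farRegion rfl)⟩

instance : ContractibleSpace rayFree := by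
  have : ContractibleSpace farRegion := convex_farRegion.contractibleSpace
    ⟨_, sqrt_two_mk_mem_farRegion (w := 4) rfl⟩
  let incl : C(farRegion, rayFree) :=
    ⟨fun p => ⟨⟨p, farRegion_subset_logCover p.2⟩, mem_rayFree_of_mem_farRegion p.2⟩, by fun_prop⟩
  let push : C(rayFree, farRegion) :=
    ⟨fun p => ⟨_, add_rayTime_mem_farRegion p.1.1⟩, by fun_prop⟩
  have homotopy : (ContinuousMap.id rayFree).Homotopic (incl.comp push) := ⟨
    { toFun := fun q => ⟨⟨(q.2.1.1.1, q.2.1.1.2 + ((q.1 * rayTime q.2.1 : ℝ) : ℂ)),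
        q.2.2 _ (mul_nonneg q.1.2.1 (rayTime_nonneg _))⟩,
        add_mem_rayFree q.2.2 (mul_nonneg q.1.2.1 (rayTime_nonneg _))⟩
      continuous_toFun := by fun_prop
      map_zero_left := fun p => by ext <;> simp
      map_one_left := fun p => by ext <;> simp [incl, push] }⟩
  obtain ⟨p, hp⟩ := ((id_nullhomotopic farRegion).comp_left push).comp_right incl
  exact (contractible_iff_id_nullhomotopic _).2 ⟨p, homotopy.trans hp⟩

theorem simplyConnectedSpace_preimage_val {E : Type*} [NormedAddCommGroup E] [NormedSpace ℝ E]
    {S B : Set E} (hB : Convex ℝ B) (hne : B.Nonempty) (hBS : B ⊆ S) :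
    SimplyConnectedSpace (Subtype.val ⁻¹' B : Set S) := by
  have : ContractibleSpace B := hB.contractibleSpace hne
  let h : (Subtype.val ⁻¹' B : Set S) ≃ₜ B :=
    { toFun := fun p => ⟨p.1.1, p.2⟩
      invFun := fun p => ⟨⟨p.1, hBS p.2⟩, p.2⟩
      continuous_toFun := by fun_prop
      continuous_invFun := by fun_prop }
  have : ContractibleSpace (Subtype.val ⁻¹' B : Set S) := h.contractibleSpace
  infer_instance

theorem exists_ball_subset_logCover (z : logCover) {V : Set logCover} (hV : IsOpen V)
    (hz : z ∈ V) : ∃ ρ > 0, Metric.ball z.1 ρ ⊆ logCover ∧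
      ((↑) ⁻¹' Metric.ball z.1 ρ : Set logCover) ⊆ V := by
  obtain ⟨V', hV', rfl⟩ := isOpen_induced_iff.1 hV
  obtain ⟨ρ, hρ, h⟩ := Metric.isOpen_iff.1 (hV'.inter isOpen_logCover) z.1 ⟨hz, z.2⟩
  exact ⟨ρ, hρ, fun p hp => (h hp).2, fun p hp => (h hp).1⟩

theorem countable_setOf_exp_sq_eq (u c : ℂ) :
    {t : ℝ | ∃ r : ℝ, Complex.exp (u + t * I + r) ^ 2 = c}.Countable := by
  by_cases hc : c = 0
  · simp [hc]
  refine (Set.countable_range fun n : ℤ => c.arg / 2 + n * π - u.im).mono ?_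
  rintro t ⟨r, hr⟩
  rw [← Complex.exp_nat_mul, ← Complex.exp_log hc, Complex.exp_eq_exp_iff_exists_int] at hr
  obtain ⟨n, hn⟩ := hr
  have him : 2 * (u.im + t) = c.arg + n * (2 * π) := by
    simpa [Complex.log_im] using congrArg Complex.im hn
  exact ⟨n, by linear_combination -him / 2⟩

theorem dense_rayFree : Dense rayFree := by
  intro z
  rw [mem_closure_iff]
  intro V hV hz
  obtain ⟨ρ, hρ, hball, hballV⟩ := exists_ball_subset_logCover z hV hz
  obtain ⟨⟨x, w⟩, _⟩ := z
  obtain ⟨ν, hν⟩ := IsAlgClosed.exists_pow_nat_eq (x ^ 2 + 2) (n := 2) two_pos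
  have hcount := (countable_setOf_exp_sq_eq w ((2 + ν) ^ 2)).union
    (countable_setOf_exp_sq_eq w ((2 - ν) ^ 2))
  obtain ⟨t, ht, htρ⟩ := (hcount.dense_compl ℝ).exists_dist_lt 0 hρ
  have hmem : (x, w + t * I) ∈ Metric.ball ((x, w) : ℂ × ℂ) ρ := by
    rw [Metric.mem_ball, Prod.dist_eq, max_lt_iff, dist_self]
    exact ⟨hρ, by simpa using htρ⟩
  simp only [Set.mem_compl_iff, Set.mem_union, Set.mem_ofPred_eq, not_or, not_exists] at ht
  exact ⟨⟨_, hball hmem⟩, hballV hmem, fun r _ => (mem_logCover_iff hν).2 ⟨ht.1 r, ht.2 r⟩⟩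

/-- The class in `affineComplement` of a path in `logCover`, closed up inside `rayFree`. -/
noncomputable abbrev closedClass {D : Type*} [TopologicalSpace D] [SimplyConnectedSpace D]
    (f : C(D, logCover)) (d d' : D) :
    FundamentalGroup affineComplement (logCoverMap coverBase) :=
  basedClass logCoverMap rayFree coverBase f d d'

/-- The class in `affineComplement` of a path from the base point to its image under the deck
transformation. -/
noncomputable def shiftLoop : FundamentalGroup affineComplement (logCoverMap coverBase) :=
  deckLoop logCoverMap rayFree coverBase (deckShift 1) (logCoverMap_comp_deckShift 1)
    (deckShift_mem_rayFree 1)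

theorem deckLoop_deckShift (k : ℤ) :
    deckLoop logCoverMap rayFree coverBase (deckShift k) (logCoverMap_comp_deckShift k)
      (deckShift_mem_rayFree k) = shiftLoop ^ k := by
  let φ : Multiplicative ℤ →* FundamentalGroup affineComplement (logCoverMap coverBase) :=
    MonoidHom.mk' (fun k => deckLoop logCoverMap rayFree coverBase (deckShift k.toAdd)
      (logCoverMap_comp_deckShift _) (deckShift_mem_rayFree _)) fun j k => by
        rw [← deckLoop_comp]
        · simp only [toAdd_mul, deckShift_add]
        · rw [← deckShift_add, logCoverMap_comp_deckShift]
  have h : φ (Multiplicative.ofAdd 1 ^ k) = φ (Multiplicative.ofAdd 1) ^ k := map_zpow _ _ _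
  rwa [← ofAdd_zsmul, smul_eq_mul, mul_one] at h

theorem closedClass_deckShift {D : Type*} [TopologicalSpace D] [SimplyConnectedSpace D]
    (f : C(D, logCover)) {d d' : D} (h : f d ∈ rayFree) (h' : f d' ∈ rayFree) (k : ℤ) :
    closedClass ((deckShift k).comp f) d d' =
      (shiftLoop ^ k)⁻¹ * closedClass f d d' * shiftLoop ^ k := by
  rw [← deckLoop_deckShift]
  exact basedClass_deck (deckShift k) _ _ f h h'

/-! ### Vertical segments crossing one obstruction ray -/

/-- The vertical segment of half-length `η` at distance `r` to the left of `(x, log (2 + ν))`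
crosses a single obstruction ray. -/
structure IsCrossing (x ν : ℂ) (r η : ℝ) : Prop where
  sq_eq : ν ^ 2 = x ^ 2 + 2
  mem_slitPlane : 2 + ν ∈ Complex.slitPlane
  r_pos : 0 < r
  η_pos : 0 < η
  η_lt : η < π
  avoid : ∀ u v : ℝ, -r ≤ u → |v| ≤ η →
    Complex.exp (u + v * I) ^ 2 * (2 + ν) ^ 2 ≠ (2 - ν) ^ 2

theorem exp_sq_ne_one {u v : ℝ} (hv : |v| < π) (huv : u ≠ 0 ∨ v ≠ 0) :
    Complex.exp (u + v * I) ^ 2 ≠ 1 := by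
  intro h
  rw [← Complex.exp_nat_mul, Complex.exp_eq_one_iff] at h
  obtain ⟨n, hn⟩ := h
  have hre : u = 0 := by simpa using congrArg Complex.re hn
  have him : 2 * v = n * (2 * π) := by simpa using congrArg Complex.im hn
  have hn0 : n = 0 := by
    by_contra hn0
    have : (1 : ℝ) ≤ |(n : ℝ)| := by exact_mod_cast Int.one_le_abs hn0
    rw [show v = n * π by linarith, abs_mul, abs_of_pos Real.pi_pos] at hv
    nlinarith [Real.pi_pos]
  exact huv.elim (· hre) (· (by simpa [hn0] using him))

namespace IsCrossing

variable {x ν : ℂ} {r η : ℝ}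

theorem mem_logCover (h : IsCrossing x ν r η) {u v : ℝ} (hu : -r ≤ u) (hv : |v| ≤ η)
    (huv : u ≠ 0 ∨ v ≠ 0) : (x, Complex.log (2 + ν) + (u + v * I)) ∈ logCover := by
  have h0 := Complex.slitPlane_ne_zero h.mem_slitPlane
  rw [mem_logCover_iff h.sq_eq, Complex.exp_add, Complex.exp_log h0, mul_pow, mul_comm]
  refine ⟨fun h1 => ?_, h.avoid u v hu hv⟩
  exact exp_sq_ne_one (hv.trans_lt h.η_lt) huv (mul_eq_right₀ (pow_ne_zero 2 h0) |>.1 h1)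

theorem mem_rayFree (h : IsCrossing x ν r η) {u v : ℝ} (hu : -r ≤ u) (hv : |v| ≤ η)
    (hv0 : v ≠ 0) : (⟨_, h.mem_logCover hu hv (Or.inr hv0)⟩ : logCover) ∈ rayFree := by
  intro s hs
  have := h.mem_logCover (u := u + s) (by linarith) hv (Or.inr hv0)
  convert this using 2
  push_cast
  ring

theorem mono (h : IsCrossing x ν r η) {r' η' : ℝ} (hr : 0 < r') (hrr : r' ≤ r) (hη : 0 < η')
    (hηη : η' ≤ η) : IsCrossing x ν r' η' :=
  ⟨h.sq_eq, h.mem_slitPlane, hr, hη, hηη.trans_lt h.η_lt, fun u v hu hv =>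
    h.avoid u v (by linarith) (hv.trans hηη)⟩

theorem abs_segment_le (h : IsCrossing x ν r η) (t : unitInterval) :
    |(2 * (t : ℝ) - 1) * η| ≤ η := by
  have h0 := t.2.1
  have h1 := t.2.2
  rw [abs_mul, abs_of_pos h.η_pos]
  have : |2 * (t : ℝ) - 1| ≤ 1 := abs_le.2 ⟨by linarith, by linarith⟩
  nlinarith [h.η_pos]

/-- The upward vertical segment crossing the obstruction ray. -/
noncomputable def segment (h : IsCrossing x ν r η) : C(unitInterval, logCover) :=
  ⟨fun t => ⟨(x, Complex.log (2 + ν) + ((-r : ℝ) + ((2 * (t : ℝ) - 1) * η : ℝ) * I)),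
    h.mem_logCover le_rfl (h.abs_segment_le t) (Or.inl (by have := h.r_pos; linarith))⟩, by
      fun_prop⟩

theorem segment_zero_mem (h : IsCrossing x ν r η) : h.segment 0 ∈ rayFree :=
  h.mem_rayFree le_rfl (h.abs_segment_le 0) (by have := h.η_pos; simp; linarith)

theorem segment_one_mem (h : IsCrossing x ν r η) : h.segment 1 ∈ rayFree :=
  h.mem_rayFree le_rfl (h.abs_segment_le 1) (by
    have := h.η_pos
    simp only [Set.Icc.coe_one]
    intro h
    linarith)

/-- The class of the crossing segment. -/
noncomputable def cls (h : IsCrossing x ν r η) :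
    FundamentalGroup affineComplement (logCoverMap coverBase) :=
  closedClass h.segment 0 1

theorem cls_eq_of_family {x ν : unitInterval → ℂ} {r η : unitInterval → ℝ}
    (h : ∀ s, IsCrossing (x s) (ν s) (r s) (η s)) (hx : Continuous x) (hν : Continuous ν)
    (hr : Continuous r) (hη : Continuous η) : (h 0).cls = (h 1).cls := by
  have hlog : Continuous fun q : unitInterval × unitInterval => Complex.log (2 + ν q.1) :=
    Continuous.clog (by fun_prop) fun q => (h q.1).mem_slitPlane
  let f : C(unitInterval × unitInterval, logCover) :=
    ⟨fun q => (h q.1).segment q.2, by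
      unfold segment
      simp only [ContinuousMap.coe_mk]
      fun_prop⟩
  have hsquare : closedClass f (0, 0) (0, 1) = closedClass f (1, 0) (1, 1) := basedClass_square f
    (fun s => (h s).segment_zero_mem) (fun s => (h s).segment_one_mem)
  have e : ∀ s, (h s).cls = closedClass f (s, 0) (s, 1) := fun s =>
    basedClass_comp f ⟨fun t => (s, t), by fun_prop⟩ 0 1
  exact (e 0).trans (hsquare.trans (e 1).symm)

theorem cls_mono (h : IsCrossing x ν r η) {r' η' : ℝ} (hr : 0 < r') (hrr : r' ≤ r) (hη : 0 < η')
    (hηη : η' ≤ η) : (h.mono hr hrr hη hηη).cls = h.cls := by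
  have hs : ∀ s : unitInterval, IsCrossing x ν (r' + (s : ℝ) * (r - r'))
      (η' + (s : ℝ) * (η - η')) := fun s => by
    have h0 := s.2.1
    have h1 := s.2.2
    exact h.mono (by nlinarith) (by nlinarith) (by nlinarith) (by nlinarith)
  have := cls_eq_of_family hs continuous_const continuous_const (by fun_prop) (by fun_prop)
  convert this using 1
  · congr 1 <;> simp
  · congr 1 <;> simp

theorem cls_eq_of_eq (h : IsCrossing x ν r η) {r' η' : ℝ} (h' : IsCrossing x ν r' η') :
    h.cls = h'.cls := by
  rw [← h.cls_mono (lt_min h.r_pos h'.r_pos) (min_le_left _ _) (lt_min h.η_pos h'.η_pos)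
    (min_le_left _ _), ← h'.cls_mono (lt_min h.r_pos h'.r_pos) (min_le_right _ _)
    (lt_min h.η_pos h'.η_pos) (min_le_right _ _)]

end IsCrossing

theorem two_add_mem_slitPlane {ν : ℂ} (h : ν ∈ Complex.slitPlane) :
    2 + ν ∈ Complex.slitPlane := by
  rw [Complex.mem_slitPlane_iff] at h ⊢
  exact h.imp (fun h => by simpa using by linarith) (fun h => by simpa using h)

/-- The ratio of the square roots `2 - ν` and `2 + ν` of the two obstruction values of
`exp (2 ω)` over a point `x` with `ν² = x² + 2`. -/
noncomputable def rootRatio (ν : ℂ) : ℂ := (2 - ν) / (2 + ν)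

theorem rootRatio_im (ν : ℂ) : (rootRatio ν).im = -4 * ν.im / Complex.normSq (2 + ν) := by
  simp only [rootRatio, Complex.div_im, Complex.sub_im, Complex.add_im, Complex.sub_re,
    Complex.add_re, Complex.re_ofNat, Complex.im_ofNat]
  ring

theorem rootRatio_im_ne_zero {ν : ℂ} (hν : ν.im ≠ 0) : (rootRatio ν).im ≠ 0 := by
  have h0 : 2 + ν ≠ 0 := fun h => hν (by simpa using congrArg Complex.im h)
  rw [rootRatio_im]
  exact div_ne_zero (mul_ne_zero (by norm_num) hν) (Complex.normSq_eq_zero.not.2 h0)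

theorem norm_rootRatio_ofReal_lt_one {t : ℝ} (ht : 0 < t) : ‖rootRatio t‖ < 1 := by
  have h : rootRatio t = ((2 - t) / (2 + t) : ℝ) := by simp [rootRatio]
  rw [h, Complex.norm_real, Real.norm_eq_abs, abs_div, abs_of_pos (by positivity : 0 < 2 + t),
    div_lt_one (by positivity), abs_lt]
  constructor <;> linarith

theorem max_rootRatio_pos {ν : ℂ} (hν : ν ∈ Complex.slitPlane) :
    0 < max (1 - ‖rootRatio ν‖) |(rootRatio ν).im| := by
  by_cases him : ν.im = 0
  · have hre : 0 < ν.re := (Complex.mem_slitPlane_iff.1 hν).resolve_right (not_not.2 him)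
    rw [show ν = (ν.re : ℂ) from Complex.ext rfl him]
    exact lt_max_of_lt_left (sub_pos.2 (norm_rootRatio_ofReal_lt_one hre))
  · exact lt_max_of_lt_right (abs_pos.2 (rootRatio_im_ne_zero him))

theorem isCrossing_of_rootRatio {x ν : ℂ} {r η : ℝ} (hsq : ν ^ 2 = x ^ 2 + 2)
    (hν : ν ∈ Complex.slitPlane) (hr : 0 < r) (hη : 0 < η) (hη' : η < π / 2)
    (h : ‖rootRatio ν‖ < Real.exp (-r) ∨
      ‖rootRatio ν‖ * Real.sin η < |(rootRatio ν).im|) : IsCrossing x ν r η := by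
  have hsl := two_add_mem_slitPlane hν
  refine ⟨hsq, hsl, hr, hη, by linarith [Real.pi_pos], fun u v hu hv heq => ?_⟩
  have hexp : Complex.exp (u + v * I) ^ 2 = rootRatio ν ^ 2 := by
    rw [rootRatio, div_pow, ← heq,
      mul_div_cancel_right₀ _ (pow_ne_zero 2 (Complex.slitPlane_ne_zero hsl))]
  have hnorm : ‖rootRatio ν‖ = Real.exp u := by
    have := congrArg norm hexp
    rw [norm_pow, norm_pow, sq_eq_sq₀ (norm_nonneg _) (norm_nonneg _), Complex.norm_exp] at this
    simpa using this.symm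
  rcases h with h | h
  · rw [hnorm, Real.exp_lt_exp] at h
    linarith
  · have him : |(rootRatio ν).im| = Real.exp u * |Real.sin v| := by
      have : |(Complex.exp (u + v * I)).im| = |(rootRatio ν).im| := by
        rcases sq_eq_sq_iff_eq_or_eq_neg.1 hexp with h | h <;> simp [h]
      rw [← this, Complex.exp_im]
      simp [abs_mul]
    have hsin : |Real.sin v| ≤ Real.sin η := by
      rw [Real.abs_sin_eq_sin_abs_of_abs_le_pi (by linarith [Real.pi_pos])]
      exact Real.sin_le_sin_of_le_of_le_pi_div_two (by linarith [abs_nonneg v, Real.pi_pos])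
        hη'.le hv
    rw [hnorm, him] at h
    exact absurd (lt_of_mul_lt_mul_left h (Real.exp_pos u).le) hsin.not_gt

theorem isCrossing_of_le_max_rootRatio {x ν : ℂ} {δ M : ℝ} (hsq : ν ^ 2 = x ^ 2 + 2)
    (hν : ν ∈ Complex.slitPlane) (hδ : 0 < δ)
    (hδ_le : δ ≤ max (1 - ‖rootRatio ν‖) |(rootRatio ν).im|) (hM : ‖rootRatio ν‖ ≤ M) :
    IsCrossing x ν (δ / 2) (min (δ / (2 * (M + 1))) 1) := by
  have hM0 : 0 ≤ M := (norm_nonneg _).trans hM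
  set η := min (δ / (2 * (M + 1))) 1
  have hη : 0 < η := by positivity
  have hη_one : η ≤ 1 := min_le_right _ _
  refine isCrossing_of_rootRatio hsq hν (half_pos hδ) hη (by linarith [Real.pi_gt_three]) ?_
  rcases le_max_iff.1 hδ_le with h | h
  · left
    linarith [Real.add_one_le_exp (-(δ / 2))]
  · right
    calc ‖rootRatio ν‖ * Real.sin η ≤ M * (δ / (2 * (M + 1))) := by
          gcongr
          · exact Real.sin_nonneg_of_nonneg_of_le_pi hη.le (by linarith [Real.pi_gt_three])
          · exact (Real.sin_le hη.le).trans (min_le_left _ _)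
      _ < δ := by
          rw [mul_div_assoc', div_lt_iff₀ (by positivity)]
          nlinarith
      _ ≤ _ := h

theorem exists_isCrossing_family {x ν : unitInterval → ℂ} (hν : Continuous ν)
    (hsq : ∀ s, ν s ^ 2 = x s ^ 2 + 2) (hsl : ∀ s, ν s ∈ Complex.slitPlane) :
    ∃ r η : ℝ, ∀ s, IsCrossing (x s) (ν s) r η := by
  have hratio : Continuous fun s => rootRatio (ν s) :=
    Continuous.div (by fun_prop) (by fun_prop) fun s =>
      Complex.slitPlane_ne_zero (two_add_mem_slitPlane (hsl s))
  obtain ⟨s₀, -, hs₀⟩ := isCompact_univ.exists_isMinOn Set.univ_nonempty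
    (f := fun s => max (1 - ‖rootRatio (ν s)‖) |(rootRatio (ν s)).im|)
    ((continuous_const.sub hratio.norm).max
      (Complex.continuous_im.comp hratio).abs).continuousOn
  obtain ⟨s₁, -, hs₁⟩ := isCompact_univ.exists_isMaxOn Set.univ_nonempty
    (f := fun s => ‖rootRatio (ν s)‖) hratio.norm.continuousOn
  exact ⟨_, _, fun s => isCrossing_of_le_max_rootRatio (hsq s) (hsl s)
    (max_rootRatio_pos (hsl s₀)) (hs₀ (Set.mem_univ s)) (hs₁ (Set.mem_univ s))⟩

theorem cls_eq_of_path {x ν : unitInterval → ℂ} {x₀ ν₀ x₁ ν₁ : ℂ} {r₀ η₀ r₁ η₁ : ℝ}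
    (h₀ : IsCrossing x₀ ν₀ r₀ η₀) (h₁ : IsCrossing x₁ ν₁ r₁ η₁) (hx : Continuous x)
    (hν : Continuous ν) (hsq : ∀ s, ν s ^ 2 = x s ^ 2 + 2) (hsl : ∀ s, ν s ∈ Complex.slitPlane)
    (hx₀ : x 0 = x₀) (hν₀ : ν 0 = ν₀) (hx₁ : x 1 = x₁) (hν₁ : ν 1 = ν₁) : h₀.cls = h₁.cls := by
  subst hx₀ hν₀ hx₁ hν₁
  obtain ⟨r, η, h⟩ := exists_isCrossing_family hν hsq hsl
  rw [h₀.cls_eq_of_eq (h 0), h₁.cls_eq_of_eq (h 1)]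
  exact IsCrossing.cls_eq_of_family h hx hν continuous_const continuous_const

/-! ### All crossings have the same class -/

theorem ofReal_sqrt_two_sq : ((Real.sqrt 2 : ℝ) : ℂ) ^ 2 = 2 := by
  exact_mod_cast Real.sq_sqrt zero_le_two

theorem mul_cosh_mem_slitPlane_iff {c : ℝ} (hc : 0 < c) (ζ : ℂ) :
    c * Complex.cosh ζ ∈ Complex.slitPlane ↔
      0 < Real.cos ζ.im ∨ ζ.re ≠ 0 ∧ Real.sin ζ.im ≠ 0 := by
  have h : Complex.cosh ζ = (Real.cosh ζ.re * Real.cos ζ.im : ℝ) +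
      (Real.sinh ζ.re * Real.sin ζ.im : ℝ) * I := by
    conv_lhs => rw [← Complex.re_add_im ζ, Complex.cosh_add, Complex.cosh_mul_I,
      Complex.sinh_mul_I]
    push_cast
    ring
  have hre := congrArg Complex.re h
  have him := congrArg Complex.im h
  rw [Complex.add_re, Complex.re_ofReal_mul, Complex.ofReal_re, Complex.I_re, mul_zero,
    add_zero] at hre
  rw [Complex.add_im, Complex.im_ofReal_mul, Complex.ofReal_im, Complex.I_im, mul_one,
    zero_add] at him
  rw [Complex.mem_slitPlane_iff, Complex.re_ofReal_mul, Complex.im_ofReal_mul, hre, him,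
    mul_pos_iff_of_pos_left hc, mul_pos_iff_of_pos_left (Real.cosh_pos _), mul_ne_zero_iff,
    mul_ne_zero_iff, Real.sinh_ne_zero, and_iff_right hc.ne']

theorem mul_cosh_ofReal_mul_mem_slitPlane {c : ℝ} (hc : 0 < c) {ζ : ℂ} (hζ : |ζ.im| ≤ π)
    (h : c * Complex.cosh ζ ∈ Complex.slitPlane) (s : unitInterval) :
    c * Complex.cosh ((s : ℝ) * ζ) ∈ Complex.slitPlane := by
  rw [mul_cosh_mem_slitPlane_iff hc, Complex.re_ofReal_mul, Complex.im_ofReal_mul]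
  rw [mul_cosh_mem_slitPlane_iff hc] at h
  have habs : |(s : ℝ) * ζ.im| ≤ |ζ.im| := by
    rw [abs_mul, abs_of_nonneg s.2.1]
    exact mul_le_of_le_one_left (abs_nonneg _) s.2.2
  rcases h with hcos | ⟨hre, hsin⟩
  · left
    rw [← Real.cos_abs] at hcos ⊢
    exact hcos.trans_le (Real.cos_le_cos_of_nonneg_of_le_pi (abs_nonneg _) hζ habs)
  · rcases s.2.1.eq_or_lt with hs | hs
    · left
      simp [← hs]
    · right
      have hne_pi : |ζ.im| ≠ π := fun h => hsin <| by
        rcases (abs_eq Real.pi_pos.le).1 h with h | h <;> simp [h]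
      have hne_zero : ζ.im ≠ 0 := fun h => hsin (by simp [h])
      have hlt := abs_lt.1 (habs.trans_lt (hζ.lt_of_ne hne_pi))
      exact ⟨mul_ne_zero hs.ne' hre, fun h => mul_ne_zero hs.ne' hne_zero
        ((Real.sin_eq_zero_iff_of_lt_of_lt hlt.1 hlt.2).1 h)⟩

theorem exists_eq_sqrt_two_mul_sinh {x ν : ℂ} (hsq : ν ^ 2 = x ^ 2 + 2) :
    ∃ ζ : ℂ, |ζ.im| ≤ π ∧ x = (Real.sqrt 2 : ℝ) * Complex.sinh ζ ∧
      ν = (Real.sqrt 2 : ℝ) * Complex.cosh ζ := by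
  have hsqrt : ((Real.sqrt 2 : ℝ) : ℂ) ≠ 0 := fun h => by
    simpa [h] using ofReal_sqrt_two_sq
  set p := (ν + x) / (Real.sqrt 2 : ℝ) with hp
  have hinv : p * ((ν - x) / (Real.sqrt 2 : ℝ)) = 1 := by
    rw [hp]
    field_simp
    linear_combination hsq - ofReal_sqrt_two_sq
  have hexp : Complex.exp (Complex.log p) = p := Complex.exp_log (left_ne_zero_of_mul_eq_one hinv)
  refine ⟨Complex.log p, (Complex.log_im p).symm ▸ Complex.abs_arg_le_pi p, ?_, ?_⟩
  · rw [Complex.sinh, Complex.exp_neg, hexp, inv_eq_of_mul_eq_one_right hinv, hp]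
    field_simp
    ring
  · rw [Complex.cosh, Complex.exp_neg, hexp, inv_eq_of_mul_eq_one_right hinv, hp]
    field_simp
    ring

theorem isCrossing_two {x : ℂ} (hx : x ^ 2 = 2) {r η : ℝ} (hr : 0 < r) (hη : 0 < η)
    (hη' : η < π) : IsCrossing x 2 r η :=
  ⟨by rw [hx]; norm_num, by simp [Complex.mem_slitPlane_iff], hr, hη, hη', fun u v _ _ => by
    simp [Complex.exp_ne_zero]⟩

theorem isCrossing_base : IsCrossing (Real.sqrt 2 : ℝ) 2 (Real.log 4) (π / 4) :=
  isCrossing_two ofReal_sqrt_two_sq (Real.log_pos (by norm_num)) (by positivity)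
    (by linarith [Real.pi_pos])

/-- The common class of all crossings. -/
noncomputable def crossingClass : FundamentalGroup affineComplement (logCoverMap coverBase) :=
  isCrossing_base.cls

/-- In the coordinate `ζ` with `x = √2 sinh ζ` and `ν = √2 cosh ζ`, scaling `ζ` to `0` deforms any
crossing to the one over `x = 0`. -/
theorem IsCrossing.cls_eq_cls_zero {x ν : ℂ} {r η r₀ η₀ : ℝ} (h : IsCrossing x ν r η)
    (hν : ν ∈ Complex.slitPlane) (h₀ : IsCrossing 0 (Real.sqrt 2 : ℝ) r₀ η₀) :
    h.cls = h₀.cls := by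
  obtain ⟨ζ, hζ, rfl, rfl⟩ := exists_eq_sqrt_two_mul_sinh h.sq_eq
  refine (cls_eq_of_path h₀ h
    (x := fun s => (Real.sqrt 2 : ℝ) * Complex.sinh ((s : ℝ) * ζ))
    (ν := fun s => (Real.sqrt 2 : ℝ) * Complex.cosh ((s : ℝ) * ζ)) (by fun_prop) (by fun_prop)
    (fun s => ?_) (mul_cosh_ofReal_mul_mem_slitPlane (by positivity) hζ hν) ?_ ?_ ?_ ?_).symm
  · rw [mul_pow, mul_pow, Complex.cosh_sq, mul_add, mul_one, ofReal_sqrt_two_sq]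
  all_goals simp

theorem IsCrossing.cls_eq_crossingClass {x ν : ℂ} {r η : ℝ} (h : IsCrossing x ν r η)
    (hν : ν ∈ Complex.slitPlane) : h.cls = crossingClass := by
  obtain ⟨r₀, η₀, h₀⟩ := exists_isCrossing_family (x := fun _ => 0)
    (ν := fun _ => (Real.sqrt 2 : ℝ)) continuous_const
    (fun _ => by rw [ofReal_sqrt_two_sq, zero_pow two_ne_zero, zero_add])
    (fun _ => Complex.ofReal_mem_slitPlane.2 (by positivity))
  exact (h.cls_eq_cls_zero hν (h₀ 0)).trans
    (isCrossing_base.cls_eq_cls_zero (by simp) (h₀ 0)).symm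

/-! ### Generation by a crossing and the deck transformation -/

/-- The subgroup generated by the class of a crossing and the class of the deck transformation. -/
noncomputable def crossingSubgroup :
    Subgroup (FundamentalGroup affineComplement (logCoverMap coverBase)) :=
  Subgroup.closure {crossingClass, shiftLoop}

theorem crossingClass_mem : crossingClass ∈ crossingSubgroup :=
  Subgroup.subset_closure (by simp)

theorem shiftLoop_mem : shiftLoop ∈ crossingSubgroup := Subgroup.subset_closure (by simp)

theorem IsCrossing.closedClass_deckShift_segment_mem {x ν : ℂ} {r η : ℝ} (h : IsCrossing x ν r η)
    (hν : ν ∈ Complex.slitPlane) (k : ℤ) :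
    closedClass ((deckShift k).comp h.segment) 0 1 ∈ crossingSubgroup := by
  have hcls : closedClass h.segment 0 1 = crossingClass := h.cls_eq_crossingClass hν
  rw [closedClass_deckShift _ h.segment_zero_mem h.segment_one_mem, hcls]
  have hk := zpow_mem shiftLoop_mem k
  exact mul_mem (mul_mem (inv_mem hk) crossingClass_mem) hk

/-- A neighbourhood in `logCover` whose closed-up paths lie in `crossingSubgroup`. -/
def IsGenNhd (N : Set logCover) : Prop :=
  IsGoodNhd logCoverMap rayFree coverBase crossingSubgroup N

theorem exists_isGenNhd_of_mem_rayFree {z : logCover} (hz : z ∈ rayFree) :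
    ∃ N, z ∈ N ∧ IsGenNhd N := by
  obtain ⟨ρ, hρ, hball, hballA⟩ := exists_ball_subset_logCover z isOpen_rayFree hz
  have := simplyConnectedSpace_preimage_val (convex_ball z.1 ρ) ⟨_, Metric.mem_ball_self hρ⟩ hball
  refine ⟨Subtype.val ⁻¹' Metric.ball z.1 ρ, Metric.mem_ball_self hρ,
    Metric.isOpen_ball.preimage continuous_subtype_val, this, fun _ _ _ _ => ?_⟩
  rw [basedClass_of_forall_mem _ _ _ fun p => hballA p.2]
  exact one_mem _

/-- The preimage in `logCover` of the product of two balls. -/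
def boxNhd (x w : ℂ) (ρ R : ℝ) : Set logCover :=
  Subtype.val ⁻¹' (Metric.ball x ρ ×ˢ Metric.ball w R)

theorem isOpen_boxNhd (x w : ℂ) (ρ R : ℝ) : IsOpen (boxNhd x w ρ R) :=
  (Metric.isOpen_ball.prod Metric.isOpen_ball).preimage continuous_subtype_val

theorem simplyConnectedSpace_boxNhd {x w : ℂ} {ρ R : ℝ} (hρ : 0 < ρ) (hR : 0 < R)
    (h : Metric.ball x ρ ×ˢ Metric.ball w R ⊆ logCover) : SimplyConnectedSpace (boxNhd x w ρ R) :=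
  simplyConnectedSpace_preimage_val ((convex_ball _ _).prod (convex_ball _ _))
    ⟨(x, w), Metric.mem_ball_self hρ, Metric.mem_ball_self hR⟩ h

theorem add_ofReal_mul_sub_mem_ball {x a b : ℂ} {ρ : ℝ} (ha : a ∈ Metric.ball x ρ)
    (hb : b ∈ Metric.ball x ρ) {t : ℝ} (ht : t ∈ unitInterval) :
    a + (t : ℂ) * (b - a) ∈ Metric.ball x ρ := by
  simpa only [Complex.real_smul] using (convex_ball x ρ).add_smul_sub_mem ha hb ht

theorem closedClass_boxNhd_eq_one {x w : ℂ} {ρ R : ℝ} [SimplyConnectedSpace (boxNhd x w ρ R)]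
    (h : Metric.ball x ρ ×ˢ Metric.ball w R ⊆ logCover) (z z' : boxNhd x w ρ R)
    (hA : ∀ t ∈ unitInterval, ∀ p : logCover, p.1 = (z.1.1.1 + (t : ℂ) * (z'.1.1.1 - z.1.1.1),
      z.1.1.2 + (t : ℂ) * (z'.1.1.2 - z.1.1.2)) → p ∈ rayFree) :
    closedClass (setIncl (boxNhd x w ρ R)) z z' = 1 := by
  have hmem : ∀ t : unitInterval, (z.1.1.1 + ((t : ℝ) : ℂ) * (z'.1.1.1 - z.1.1.1),
      z.1.1.2 + ((t : ℝ) : ℂ) * (z'.1.1.2 - z.1.1.2)) ∈ Metric.ball x ρ ×ˢ Metric.ball w R :=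
    fun t => ⟨add_ofReal_mul_sub_mem_ball z.2.1 z'.2.1 t.2,
      add_ofReal_mul_sub_mem_ball z.2.2 z'.2.2 t.2⟩
  refine basedClass_eq_one_of_mem _
    (⟨fun t => ⟨⟨_, h (hmem t)⟩, hmem t⟩, by fun_prop⟩ : C(unitInterval, boxNhd x w ρ R))
    (d := 0) (d' := 1) ?_ ?_ fun s => hA s s.2 _ rfl
  · ext <;> simp
  · ext <;> simp

/-! ### Neighbourhoods of points on an obstruction ray -/

/-- A box in `logCover` whose ray-free part is the complement of the wall
`im ω = h x`. -/
structure IsWallBox (x w : ℂ) (ρ R : ℝ) (h : ℂ → ℝ) : Prop where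
  subset_logCover : Metric.ball x ρ ×ˢ Metric.ball w R ⊆ logCover
  abs_sub_lt : ∀ y ∈ Metric.ball x ρ, |h y - w.im| < R / 2
  mem_rayFree_iff : ∀ z ∈ boxNhd x w ρ R, z ∈ rayFree ↔ z.1.2.im ≠ h z.1.1

namespace IsWallBox

variable {x w : ℂ} {ρ R : ℝ} {h : ℂ → ℝ}

theorem mem_rayFree (hW : IsWallBox x w ρ R h) {z : logCover} (hz : z ∈ boxNhd x w ρ R) {σ : ℝ}
    (hσ : 0 < σ * (z.1.2.im - h z.1.1)) : z ∈ rayFree :=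
  (hW.mem_rayFree_iff z hz).2 (sub_ne_zero.1 (right_ne_zero_of_mul hσ.ne'))

theorem exists_level (hW : IsWallBox x w ρ R h) (hR : 0 < R) {σ : ℝ} (hσ : |σ| = 1) :
    ∃ v ∈ Metric.ball w R, ∀ y ∈ Metric.ball x ρ, 0 < σ * (v.im - h y) := by
  refine ⟨w + (σ * (R / 2) : ℝ) * I, ?_, fun y hy => ?_⟩
  · rw [mem_ball_iff_norm, add_sub_cancel_left, norm_mul, Complex.norm_I, mul_one,
      Complex.norm_real, Real.norm_eq_abs, abs_mul, hσ, one_mul, abs_of_pos (half_pos hR)]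
    exact half_lt_self hR
  · have := abs_lt.1 (hW.abs_sub_lt y hy)
    rw [Complex.add_im, Complex.im_ofReal_mul, Complex.I_im, mul_one]
    rcases (abs_eq zero_le_one).1 hσ with rfl | rfl <;> linarith

/-- Two points on the same side of the wall are joined through a level above or below it. -/
theorem closedClass_eq_one (hW : IsWallBox x w ρ R h) [SimplyConnectedSpace (boxNhd x w ρ R)]
    (hR : 0 < R) {σ : ℝ} (hσ : |σ| = 1) {z z' : boxNhd x w ρ R}
    (hz : 0 < σ * (z.1.1.2.im - h z.1.1.1)) (hz' : 0 < σ * (z'.1.1.2.im - h z'.1.1.1)) :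
    closedClass (setIncl (boxNhd x w ρ R)) z z' = 1 := by
  obtain ⟨v, hv, hside⟩ := hW.exists_level hR hσ
  let level (y : Metric.ball x ρ) : boxNhd x w ρ R :=
    ⟨⟨(y, v), hW.subset_logCover ⟨y.2, hv⟩⟩, y.2, hv⟩
  have hlevel (y) : (level y).1 ∈ rayFree := hW.mem_rayFree (level y).2 (hside y y.2)
  have vertical (z : boxNhd x w ρ R) (hz : 0 < σ * (z.1.1.2.im - h z.1.1.1)) :
      closedClass (setIncl (boxNhd x w ρ R)) z (level ⟨z.1.1.1, z.2.1⟩) = 1 := by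
    refine closedClass_boxNhd_eq_one hW.subset_logCover _ _ fun t ht p hp => ?_
    rw [sub_self, mul_zero, add_zero] at hp
    refine hW.mem_rayFree (σ := σ) ?_ ?_
    · rw [boxNhd, Set.mem_preimage, hp]
      exact ⟨z.2.1, add_ofReal_mul_sub_mem_ball z.2.2 hv ht⟩
    · have := convex_Ioi (0 : ℝ) |>.add_smul_sub_mem hz (hside _ z.2.1) ht
      rw [hp, Complex.add_im, Complex.im_ofReal_mul, Complex.sub_im]
      simp only [Set.mem_Ioi, smul_eq_mul] at this
      linarith
  have horizontal (y y') : closedClass (setIncl (boxNhd x w ρ R)) (level y) (level y') = 1 := by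
    refine closedClass_boxNhd_eq_one hW.subset_logCover _ _ fun t ht p hp => ?_
    rw [sub_self, mul_zero, add_zero] at hp
    have hy := add_ofReal_mul_sub_mem_ball y.2 y'.2 ht
    refine hW.mem_rayFree (σ := σ) ?_ ?_
    · rw [boxNhd, Set.mem_preimage, hp]
      exact ⟨hy, hv⟩
    · rw [hp]
      exact hside _ hy
  rw [← horizontal ⟨_, z.2.1⟩ ⟨_, z'.2.1⟩]
  exact basedClass_eq_of_eq_one _ (hW.mem_rayFree z.2 hz) (hW.mem_rayFree z'.2 hz') (hlevel _)
    (hlevel _) (vertical z hz) (vertical z' hz')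

theorem isGenNhd (hW : IsWallBox x w ρ R h) [SimplyConnectedSpace (boxNhd x w ρ R)]
    (hR : 0 < R) {lo hi : boxNhd x w ρ R} (hlo : lo.1.1.2.im < h lo.1.1.1)
    (hhi : h hi.1.1.1 < hi.1.1.2.im)
    (hcls : closedClass (setIncl (boxNhd x w ρ R)) lo hi ∈ crossingSubgroup) :
    IsGenNhd (boxNhd x w ρ R) := by
  have hloA := (hW.mem_rayFree_iff _ lo.2).2 hlo.ne
  have hhiA := (hW.mem_rayFree_iff _ hi.2).2 hhi.ne'
  have above (z z' : boxNhd x w ρ R) (hz : h z.1.1.1 < z.1.1.2.im)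
      (hz' : h z'.1.1.1 < z'.1.1.2.im) : closedClass (setIncl (boxNhd x w ρ R)) z z' = 1 :=
    hW.closedClass_eq_one hR (σ := 1) (by simp) (by linarith) (by linarith)
  have below (z z' : boxNhd x w ρ R) (hz : z.1.1.2.im < h z.1.1.1)
      (hz' : z'.1.1.2.im < h z'.1.1.1) : closedClass (setIncl (boxNhd x w ρ R)) z z' = 1 :=
    hW.closedClass_eq_one hR (σ := -1) (by simp) (by linarith) (by linarith)
  refine ⟨isOpen_boxNhd _ _ _ _, inferInstance, fun z z' hz hz' => ?_⟩
  rcases lt_or_gt_of_ne ((hW.mem_rayFree_iff _ z.2).1 hz) with hzh | hzh <;>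
    rcases lt_or_gt_of_ne ((hW.mem_rayFree_iff _ z'.2).1 hz') with hzh' | hzh'
  · change closedClass _ z z' ∈ _
    rw [below z z' hzh hzh']
    exact one_mem _
  · rwa [basedClass_eq_of_eq_one _ hz hz' hloA hhiA (below z lo hzh hlo) (above z' hi hzh' hhi)]
  · rw [basedClass_eq_of_eq_one _ hz hz' hhiA hloA (above z hi hzh hhi) (below z' lo hzh' hlo),
      basedClass_inv _ hloA hhiA]
    exact inv_mem hcls
  · change closedClass _ z z' ∈ _
    rw [above z z' hzh hzh']
    exact one_mem _

end IsWallBox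

theorem IsCrossing.mem_rayFree_iff {x ν w : ℂ} {r η : ℝ} (h : IsCrossing x ν r η) {k : ℤ}
    (hw : (x, w) ∈ logCover) (hre : -r ≤ (w - Complex.log (2 + ν)).re)
    (hre' : (w - Complex.log (2 + ν)).re < 0)
    (him : |w.im - ((Complex.log (2 + ν)).im + k * π)| ≤ η) :
    (⟨(x, w), hw⟩ : logCover) ∈ rayFree ↔ w.im ≠ (Complex.log (2 + ν)).im + k * π := by
  constructor
  · intro hA h0
    have h1 := hA (-(w - Complex.log (2 + ν)).re) (by linarith)
    have e : w + ((-(w - Complex.log (2 + ν)).re : ℝ) : ℂ) =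
        Complex.log (2 + ν) + k * (π * I) := by
      apply Complex.ext <;> simp [h0]
    change (x, w + ((-(w - Complex.log (2 + ν)).re : ℝ) : ℂ)) ∈ logCover at h1
    rw [e, add_int_mul_pi_mem_logCover, mem_logCover_iff h.sq_eq,
      Complex.exp_log (Complex.slitPlane_ne_zero h.mem_slitPlane)] at h1
    exact h1.1 rfl
  · intro h0
    convert deckShift_mem_rayFree k _ (h.mem_rayFree hre him (sub_ne_zero.2 h0)) using 1
    refine Subtype.ext (Prod.ext rfl (Complex.ext ?_ ?_))
    · simp [deckShift]
    · simp [deckShift]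
      ring

theorem exists_crossing_of_not_mem_rayFree {x w : ℂ} (hw : (x, w) ∈ logCover)
    (hA : (⟨(x, w), hw⟩ : logCover) ∉ rayFree) (hx : -(x ^ 2 + 2) ∈ Complex.slitPlane) :
    ∃ (ν : ℂ) (r : ℝ) (k : ℤ), ν ^ 2 = x ^ 2 + 2 ∧ ν.im ≠ 0 ∧ 0 < r ∧
      w = Complex.log (2 + ν) + k * (π * I) - r := by
  have him : ∀ ν : ℂ, ν ^ 2 = x ^ 2 + 2 → ν.im ≠ 0 := by
    intro ν hν h0
    rw [← hν, pow_two, Complex.mem_slitPlane_iff] at hx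
    have : ¬ ν.re * ν.re < 0 := (mul_self_nonneg _).not_gt
    simp [h0, this] at hx
  obtain ⟨r, hr0, hr⟩ : ∃ r : ℝ, 0 ≤ r ∧ (x, w + r) ∉ logCover := by
    by_contra! h
    exact hA h
  have hr_ne : r ≠ 0 := by
    rintro rfl
    exact hr (by simpa using hw)
  obtain ⟨ν, hν, hexp⟩ : ∃ ν : ℂ, ν ^ 2 = x ^ 2 + 2 ∧ Complex.exp (w + r) ^ 2 = (2 + ν) ^ 2 := by
    obtain ⟨ν, hν⟩ := IsAlgClosed.exists_pow_nat_eq (x ^ 2 + 2) (n := 2) two_pos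
    rw [mem_logCover_iff hν, not_and_or, not_not, not_not] at hr
    rcases hr with h | h
    · exact ⟨ν, hν, h⟩
    · exact ⟨-ν, by rw [neg_sq, hν], by rw [h, sub_eq_add_neg]⟩
  have h0 : 2 + ν ≠ 0 := fun h => him ν hν (by simpa using congrArg Complex.im h)
  rw [← Complex.exp_log h0, ← Complex.exp_nat_mul, ← Complex.exp_nat_mul,
    Complex.exp_eq_exp_iff_exists_int] at hexp
  obtain ⟨k, hk⟩ := hexp
  refine ⟨ν, r, k, hν, him ν hν, lt_of_le_of_ne hr0 hr_ne.symm, ?_⟩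
  push_cast at hk
  linear_combination hk / 2

theorem exists_sqrt_continuousAt {ν : ℂ} (hν : ν ≠ 0) :
    ∃ g : ℂ → ℂ, ContinuousAt g (ν ^ 2) ∧ g (ν ^ 2) = ν ∧ ∀ y, g y ^ 2 = y := by
  have hν2 := pow_ne_zero 2 hν
  refine ⟨fun y => ν * (y / ν ^ 2) ^ ((2 : ℕ) : ℂ)⁻¹, ?_, ?_, fun y => ?_⟩
  · have : ContinuousAt (fun y : ℂ => (y / ν ^ 2) ^ ((2 : ℕ) : ℂ)⁻¹) (ν ^ 2) :=
      ContinuousAt.cpow (by fun_prop) continuousAt_const (by simp [div_self hν2])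
    fun_prop
  · simp [div_self hν2]
  · rw [mul_pow, Complex.cpow_nat_inv_pow _ two_ne_zero, mul_div_cancel₀ _ hν2]

theorem exists_norm_rootRatio_mul_sin_lt {ν : ℂ} (hν : ν.im ≠ 0) :
    ∃ η > 0, η < π / 2 ∧ ‖rootRatio ν‖ * Real.sin η < |(rootRatio ν).im| := by
  have h : ∀ᶠ η in nhds (0 : ℝ), η < π / 2 ∧
      ‖rootRatio ν‖ * Real.sin η < |(rootRatio ν).im| := by
    refine (eventually_lt_nhds (by positivity)).and ?_
    refine ContinuousAt.eventually_lt (by fun_prop) (by fun_prop) ?_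
    simpa using rootRatio_im_ne_zero hν
  obtain ⟨η, h, hη⟩ := ((h.filter_mono nhdsWithin_le_nhds).and
    (self_mem_nhdsWithin (s := Set.Ioi (0 : ℝ)))).exists
  exact ⟨η, hη, h⟩

theorem exists_eventually_isCrossing {x ν : ℂ} (hν : ν ^ 2 = x ^ 2 + 2) (him : ν.im ≠ 0) {r : ℝ}
    (hr : 0 < r) : ∃ η > 0, ∃ μ : ℂ → ℂ, ContinuousAt μ x ∧ μ x = ν ∧
      ∀ᶠ y in nhds x, IsCrossing y (μ y) r η := by
  have hsl : ν ∈ Complex.slitPlane := Complex.mem_slitPlane_iff.2 (Or.inr him)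
  obtain ⟨η, hη, hη', hlt⟩ := exists_norm_rootRatio_mul_sin_lt him
  obtain ⟨g, hg, hgν, hgsq⟩ := exists_sqrt_continuousAt (Complex.slitPlane_ne_zero hsl)
  have hμ : ContinuousAt (fun y => g (y ^ 2 + 2)) x :=
    ContinuousAt.comp (g := g) (f := fun y => y ^ 2 + 2) (hν ▸ hg) (by fun_prop)
  have hμx : g (x ^ 2 + 2) = ν := hν ▸ hgν
  refine ⟨η, hη, _, hμ, hμx, ?_⟩
  have hratio : ContinuousAt (fun y => rootRatio (g (y ^ 2 + 2))) x := by
    refine ContinuousAt.div (continuousAt_const.sub hμ) (continuousAt_const.add hμ) ?_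
    rw [hμx]
    exact Complex.slitPlane_ne_zero (two_add_mem_slitPlane hsl)
  filter_upwards [hμ.eventually_mem (Complex.isOpen_slitPlane.mem_nhds (by rwa [hμx])),
    ContinuousAt.eventually_lt (f := fun y => ‖rootRatio (g (y ^ 2 + 2))‖ * Real.sin η)
      (g := fun y => |(rootRatio (g (y ^ 2 + 2))).im|) (by fun_prop)
      (Complex.continuous_im.continuousAt.comp hratio).abs (by rwa [hμx])] with y hy hy'
  exact isCrossing_of_rootRatio (hgsq _) hy hr hη hη' (Or.inr hy')

theorem isWallBox_of_isCrossing {x ν w : ℂ} {ρ R r η : ℝ} {k : ℤ} {μ : ℂ → ℂ}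
    (hw : w = Complex.log (2 + ν) + k * (π * I) - r)
    (hbox : Metric.ball x ρ ×ˢ Metric.ball w R ⊆ logCover)
    (hμ : ∀ y ∈ Metric.ball x ρ, IsCrossing y (μ y) (r + 1) η ∧
      ‖Complex.log (2 + μ y) - Complex.log (2 + ν)‖ < R / 2)
    (hRη : 2 * R ≤ η) (hRr : 2 * R ≤ r) (hR1 : 2 * R ≤ 1) :
    IsWallBox x w ρ R fun y => (Complex.log (2 + μ y)).im + k * π := by
  have hre : w.re = (Complex.log (2 + ν)).re - r := by simp [hw]
  have him : w.im = (Complex.log (2 + ν)).im + k * π := by simp [hw]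
  refine ⟨hbox, fun y hy => ?_, fun z hz => ?_⟩
  · rw [him, add_sub_add_right_eq_sub, ← Complex.sub_im]
    exact (Complex.abs_im_le_norm _).trans_lt (hμ y hy).2
  · obtain ⟨hcross, hlog⟩ := hμ _ hz.1
    have hzw := mem_ball_iff_norm.1 hz.2
    have z_re := abs_le.1 (Complex.abs_re_le_norm (z.1.2 - w))
    have z_im := abs_le.1 (Complex.abs_im_le_norm (z.1.2 - w))
    have log_re := abs_le.1 (Complex.abs_re_le_norm
      (Complex.log (2 + μ z.1.1) - Complex.log (2 + ν)))
    have log_im := abs_le.1 (Complex.abs_im_le_norm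
      (Complex.log (2 + μ z.1.1) - Complex.log (2 + ν)))
    rw [Complex.sub_re] at z_re log_re
    rw [Complex.sub_im] at z_im log_im
    refine hcross.mem_rayFree_iff z.2 ?_ ?_ ?_
    · rw [Complex.sub_re]; linarith
    · rw [Complex.sub_re]; linarith
    · rw [abs_le]; constructor <;> linarith

theorem exists_isWallBox {x ν w : ℂ} {r : ℝ} {k : ℤ} (hw : (x, w) ∈ logCover)
    (hν : ν ^ 2 = x ^ 2 + 2) (him : ν.im ≠ 0) (hr : 0 < r)
    (hwk : w = Complex.log (2 + ν) + k * (π * I) - r) :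
    ∃ ρ > 0, ∃ R > 0, ∃ h : ℂ → ℝ, IsWallBox x w ρ R h ∧ h x = w.im ∧
      IsCrossing x ν r (R / 2) := by
  have hsl : ν ∈ Complex.slitPlane := Complex.mem_slitPlane_iff.2 (Or.inr him)
  obtain ⟨ε, hε, hball, -⟩ := exists_ball_subset_logCover ⟨(x, w), hw⟩ isOpen_univ trivial
  obtain ⟨η, hη, μ, hμ, hμx, hcross⟩ :=
    exists_eventually_isCrossing hν him (by linarith : 0 < r + 1)
  obtain ⟨R, hR, hRlt⟩ := exists_between (lt_min (lt_min hε (half_pos hη))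
    (lt_min (half_pos hr) one_half_pos))
  simp only [lt_min_iff] at hRlt
  obtain ⟨⟨hRε, hRη⟩, hRr, hR1⟩ := hRlt
  have hlog : ∀ᶠ y in nhds x, ‖Complex.log (2 + μ y) - Complex.log (2 + ν)‖ < R / 2 := by
    have : ContinuousAt (fun y => Complex.log (2 + μ y)) x :=
      ContinuousAt.clog (by fun_prop) (by rw [hμx]; exact two_add_mem_slitPlane hsl)
    refine ContinuousAt.eventually_lt (by fun_prop) (by fun_prop) ?_
    rw [hμx, sub_self, norm_zero]
    exact half_pos hR
  obtain ⟨ρ', hρ', hev⟩ := Metric.eventually_nhds_iff_ball.1 (hcross.and hlog)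
  obtain ⟨ρ, hρ, hρlt⟩ := exists_between (lt_min hε hρ')
  rw [lt_min_iff] at hρlt
  have hbox : Metric.ball x ρ ×ˢ Metric.ball w R ⊆ logCover := by
    refine subset_trans ?_ hball
    rw [← ball_prod_same]
    exact Set.prod_mono (Metric.ball_subset_ball hρlt.1.le) (Metric.ball_subset_ball hRε.le)
  refine ⟨ρ, hρ, R, hR, _, isWallBox_of_isCrossing hwk hbox
    (fun y hy => hev y (Metric.ball_subset_ball hρlt.2.le hy)) (by linarith) (by linarith)
    (by linarith), by simp [hμx, hwk], ?_⟩
  exact hμx ▸ hcross.self_of_nhds.mono hr (by linarith) (half_pos hR) (by linarith)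

theorem exists_isGenNhd_of_not_mem_rayFree {x w : ℂ} (hw : (x, w) ∈ logCover)
    (hA : (⟨(x, w), hw⟩ : logCover) ∉ rayFree) (hx : -(x ^ 2 + 2) ∈ Complex.slitPlane) :
    ∃ N, (⟨(x, w), hw⟩ : logCover) ∈ N ∧ IsGenNhd N := by
  obtain ⟨ν, r, k, hν, him, hr, hwk⟩ := exists_crossing_of_not_mem_rayFree hw hA hx
  obtain ⟨ρ, hρ, R, hR, h, hwall, hhx, hcross⟩ := exists_isWallBox hw hν him hr hwk
  have := simplyConnectedSpace_boxNhd hρ hR hwall.subset_logCover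
  let seg : C(unitInterval, logCover) := (deckShift k).comp hcross.segment
  have hseg (t : unitInterval) :
      (seg t).1 = (x, w + ((2 * (t : ℝ) - 1) * (R / 2) : ℝ) * I) := by
    refine Prod.ext rfl ?_
    simp only [seg, deckShift, IsCrossing.segment, hwk, ContinuousMap.comp_apply,
      ContinuousMap.coe_mk]
    push_cast
    ring
  have hmem (t : unitInterval) : seg t ∈ boxNhd x w ρ R := by
    rw [boxNhd, Set.mem_preimage, hseg]
    refine ⟨Metric.mem_ball_self hρ, ?_⟩
    rw [mem_ball_iff_norm, add_sub_cancel_left, norm_mul, Complex.norm_I, mul_one,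
      Complex.norm_real]
    exact (hcross.abs_segment_le t).trans_lt (half_lt_self hR)
  refine ⟨boxNhd x w ρ R, ⟨Metric.mem_ball_self hρ, Metric.mem_ball_self hR⟩,
    hwall.isGenNhd hR (lo := ⟨_, hmem 0⟩) (hi := ⟨_, hmem 1⟩) ?_ ?_ ?_⟩
  · simp [hseg, hhx, hR]
  · norm_num [hseg, hhx, hR]
  · rw [closedClass, basedClass_setIncl_of_forall_mem]
    exact hcross.closedClass_deckShift_segment_mem
      (Complex.mem_slitPlane_iff.2 (Or.inr him)) k

theorem mem_rayFree_of_sin_ne_zero {x w : ℂ} (hx : -(x ^ 2 + 2) ∉ Complex.slitPlane)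
    (hs : Real.sin w.im ≠ 0) (hw : (x, w) ∈ logCover) :
    (⟨(x, w), hw⟩ : logCover) ∈ rayFree := by
  intro r _
  obtain ⟨t, ht⟩ : ∃ t : ℝ, (t : ℂ) ^ 2 = x ^ 2 + 2 := by
    simp only [Complex.mem_slitPlane_iff, Complex.neg_re, Complex.neg_im, neg_pos, neg_ne_zero,
      not_or, not_lt, not_not] at hx
    exact ⟨Real.sqrt (x ^ 2 + 2).re, Complex.ext
      (by rw [← Complex.ofReal_pow, Real.sq_sqrt hx.1, Complex.ofReal_re])
      (by rw [← Complex.ofReal_pow, Complex.ofReal_im, hx.2])⟩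
  have not_real (c : ℝ) : Complex.exp (w + r) ^ 2 ≠ (c : ℂ) ^ 2 := by
    intro hc
    have h0 : (Complex.exp (w + r)).im = 0 := by
      rcases sq_eq_sq_iff_eq_or_eq_neg.1 hc with h | h <;> rw [h] <;> simp
    rw [Complex.exp_im, mul_eq_zero, or_iff_right (Real.exp_ne_zero _)] at h0
    exact hs (by simpa using h0)
  change (x, w + (r : ℂ)) ∈ logCover
  rw [mem_logCover_iff ht]
  exact ⟨by simpa using not_real (2 + t), by simpa using not_real (2 - t)⟩

theorem exists_isGenNhd_of_generic {z : logCover}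
    (h : -(z.1.1 ^ 2 + 2) ∈ Complex.slitPlane ∨ Real.sin z.1.2.im ≠ 0) :
    ∃ N, z ∈ N ∧ IsGenNhd N := by
  by_cases hA : z ∈ rayFree
  · exact exists_isGenNhd_of_mem_rayFree hA
  · exact exists_isGenNhd_of_not_mem_rayFree z.2 hA
      (h.elim id fun h => not_not.1 fun hx => hA (mem_rayFree_of_sin_ne_zero hx h z.2))

/-! ### Generic points -/

/-- The points `(x, ω)` for which `x² + 2` lies off `[0, ∞)` and `im ω` off `π ℤ`; near such a
point at most one obstruction ray is met. -/
def genericSet : Set (ℂ × ℂ) :=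
  {p | -(p.1 ^ 2 + 2) ∈ Complex.slitPlane ∧ Real.sin p.2.im ≠ 0}

theorem dense_genericSet : Dense genericSet := by
  have h0 : Dense ({0}ᶜ : Set ℝ) := dense_compl_singleton 0
  have h1 : Dense {x : ℂ | -(x ^ 2 + 2) ∈ Complex.slitPlane} := by
    refine ((h0.preimage Complex.isOpenMap_re).inter_of_isOpen_left
      (h0.preimage Complex.isOpenMap_im)
      (isOpen_compl_singleton.preimage Complex.continuous_re)).mono ?_
    rintro x ⟨hre, him⟩
    refine Complex.mem_slitPlane_iff.2 (Or.inr ?_)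
    have : (-(x ^ 2 + 2)).im = -2 * (x.re * x.im) := by simp [pow_two]; ring
    rw [this]
    exact mul_ne_zero (by norm_num) (mul_ne_zero hre him)
  have h2 : Dense {w : ℂ | Real.sin w.im ≠ 0} := by
    have h3 : {t : ℝ | Real.sin t = 0}.Countable :=
      (Set.countable_range fun n : ℤ => n * π).mono fun t ht => Real.sin_eq_zero_iff.1 ht
    exact (h3.dense_compl ℝ).preimage Complex.isOpenMap_im
  exact h1.prod h2

theorem exists_generic_closedClass_eq_one {x w : ℂ} {ρ R : ℝ}
    [SimplyConnectedSpace (boxNhd x w ρ R)]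
    (h : Metric.ball x ρ ×ˢ Metric.ball w R ⊆ logCover) (z : boxNhd x w ρ R)
    (hz : (z : logCover) ∈ rayFree) :
    ∃ z' : boxNhd x w ρ R, (z' : logCover) ∈ rayFree ∧
      closedClass (setIncl (boxNhd x w ρ R)) z z' = 1 ∧ z'.1.1 ∈ genericSet := by
  obtain ⟨ε, hε, h1, h2⟩ := exists_ball_subset_logCover z.1
    (isOpen_rayFree.inter (isOpen_boxNhd x w ρ R)) ⟨hz, z.2⟩
  obtain ⟨p, hp, hball⟩ := dense_genericSet.exists_mem_open Metric.isOpen_ball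
    ⟨z.1.1, Metric.mem_ball_self hε⟩
  have h3 : (⟨p, h1 hball⟩ : logCover) ∈ rayFree ∩ boxNhd x w ρ R := h2 hball
  refine ⟨⟨⟨p, h1 hball⟩, h3.2⟩, h3.1, closedClass_boxNhd_eq_one h _ _ fun t ht q hq => ?_, hp⟩
  have hseg := (convex_ball z.1.1 ε).add_smul_sub_mem (Metric.mem_ball_self hε) hball ht
  have hq' : (q : ℂ × ℂ) = z.1.1 + t • (p - z.1.1) := by rw [hq]; ext <;> simp
  exact (h2 (hq'.symm ▸ hseg : q.1 ∈ Metric.ball z.1.1 ε)).1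

/-- The path moves first `x` at a height avoiding the rays over real `x² + 2 ≥ 0`, and then `ω` over
an `x` away from these values. -/
theorem closedClass_boxNhd_mem_of_generic {x w : ℂ} {ρ R : ℝ}
    [SimplyConnectedSpace (boxNhd x w ρ R)]
    (h : Metric.ball x ρ ×ˢ Metric.ball w R ⊆ logCover) {a b : boxNhd x w ρ R}
    (ha : (a : logCover) ∈ rayFree) (hb : (b : logCover) ∈ rayFree)
    (hsin : Real.sin a.1.1.2.im ≠ 0) (hslit : -(b.1.1.1 ^ 2 + 2) ∈ Complex.slitPlane) :
    closedClass (setIncl (boxNhd x w ρ R)) a b ∈ crossingSubgroup := by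
  have hmem : ∀ t : unitInterval,
      (a.1.1.1 + ((min (2 * (t : ℝ)) 1 : ℝ) : ℂ) * (b.1.1.1 - a.1.1.1),
        a.1.1.2 + ((max (2 * (t : ℝ) - 1) 0 : ℝ) : ℂ) * (b.1.1.2 - a.1.1.2)) ∈
      Metric.ball x ρ ×ˢ Metric.ball w R := fun t => by
    have t0 := t.2.1
    have t1 := t.2.2
    exact ⟨add_ofReal_mul_sub_mem_ball a.2.1 b.2.1 ⟨by positivity, min_le_right _ _⟩,
      add_ofReal_mul_sub_mem_ball a.2.2 b.2.2
        ⟨le_max_right _ _, max_le (by linarith) zero_le_one⟩⟩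
  let p : C(unitInterval, logCover) := ⟨fun t => ⟨_, h (hmem t)⟩, by fun_prop⟩
  have hp0 : p 0 = a := by refine Subtype.ext (Prod.ext ?_ ?_) <;> simp [p]
  have hp1 : p 1 = b := by refine Subtype.ext (Prod.ext ?_ ?_) <;> norm_num [p]
  have hgen (t : unitInterval) : ∃ N, p t ∈ N ∧ IsGenNhd N := by
    apply exists_isGenNhd_of_generic
    rcases le_total (2 * (t : ℝ)) 1 with ht | ht
    · right
      have hmax : max (2 * (t : ℝ) - 1) 0 = 0 := max_eq_right (by linarith)
      simpa [p, hmax] using hsin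
    · left
      simpa [p, min_eq_right ht] using hslit
  have key := basedClass_mem_of_isGoodNhd dense_rayFree p hgen (hp0 ▸ ha) (hp1 ▸ hb)
  rw [← basedClass_setIncl_of_forall_mem p (N := boxNhd x w ρ R) hmem] at key
  convert key
  · exact Subtype.ext hp0.symm
  · exact Subtype.ext hp1.symm

theorem exists_isGenNhd (z : logCover) : ∃ N, z ∈ N ∧ IsGenNhd N := by
  obtain ⟨ε, hε, hball, -⟩ := exists_ball_subset_logCover z isOpen_univ trivial
  have hbox : Metric.ball z.1.1 ε ×ˢ Metric.ball z.1.2 ε ⊆ logCover := by rwa [ball_prod_same]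
  have := simplyConnectedSpace_boxNhd hε hε hbox
  refine ⟨boxNhd z.1.1 z.1.2 ε ε, ⟨Metric.mem_ball_self hε, Metric.mem_ball_self hε⟩,
    isOpen_boxNhd _ _ _ _, inferInstance, fun a b ha hb => ?_⟩
  obtain ⟨a', ha', haa', hagen⟩ := exists_generic_closedClass_eq_one hbox a ha
  obtain ⟨b', hb', hbb', hbgen⟩ := exists_generic_closedClass_eq_one hbox b hb
  rw [basedClass_eq_of_eq_one _ ha hb ha' hb' haa' hbb']
  exact closedClass_boxNhd_mem_of_generic hbox ha' hb' hagen.2 hbgen.1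

theorem closedClass_mem (p : C(unitInterval, logCover)) (h₀ : p 0 ∈ rayFree) (h₁ : p 1 ∈ rayFree) :
    closedClass p 0 1 ∈ crossingSubgroup :=
  basedClass_mem_of_isGoodNhd dense_rayFree p (fun t => exists_isGenNhd (p t)) h₀ h₁

theorem exists_lift (γ : C(unitInterval, affineComplement)) (z : logCover)
    (h : logCoverMap z = γ 0) :
    ∃ p : C(unitInterval, logCover), (∀ t, logCoverMap (p t) = γ t) ∧ p 0 = z := by
  have hz : (γ 0).1.2 = Complex.exp z.1.2 ^ 2 := by rw [← h]; rfl
  obtain ⟨Γ, hΓ, hΓ0⟩ := Complex.isCoveringMap_exp.exists_path_lifts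
    (⟨fun t => ⟨(γ t).1.2, (γ t).2.1⟩, by fun_prop⟩ : C(unitInterval, {w : ℂ // w ≠ 0}))
    (2 * z.1.2) (Subtype.ext (hz.trans (Complex.exp_nat_mul _ 2).symm))
  have hΓ' : ∀ t, Complex.exp (Γ t / 2) ^ 2 = (γ t).1.2 := by
    intro t
    rw [← Complex.exp_nat_mul, Nat.cast_ofNat, mul_div_cancel₀ _ two_ne_zero]
    exact congrArg Subtype.val (congrFun hΓ t)
  have hmem : ∀ t, ((γ t).1.1, Γ t / 2) ∈ logCover := fun t => by
    change ((γ t).1.1 ^ 2 - Complex.exp (Γ t / 2) ^ 2 - 2) ^ 2 ≠ 16 * Complex.exp (Γ t / 2) ^ 2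
    rw [hΓ']
    exact (γ t).2.2
  refine ⟨⟨fun t => ⟨_, hmem t⟩, by fun_prop⟩, fun t => Subtype.ext (Prod.ext rfl (hΓ' t)),
    Subtype.ext (Prod.ext (congrArg (fun p => p.1.1) h.symm) ?_)⟩
  change Γ 0 / 2 = z.1.2
  rw [hΓ0, mul_div_cancel_left₀ _ two_ne_zero]

theorem exists_deckShift_eq {z z' : logCover} (h : logCoverMap z = logCoverMap z') :
    ∃ k : ℤ, z = deckShift k z' := by
  have h1 : z.1.1 = z'.1.1 := congrArg (fun p => p.1.1) h
  have h2 : Complex.exp z.1.2 ^ 2 = Complex.exp z'.1.2 ^ 2 := congrArg (fun p => p.1.2) h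
  rw [← Complex.exp_nat_mul, ← Complex.exp_nat_mul, Complex.exp_eq_exp_iff_exists_int] at h2
  obtain ⟨k, hk⟩ := h2
  refine ⟨k, Subtype.ext (Prod.ext h1 ?_)⟩
  change z.1.2 = z'.1.2 + k * (π * I)
  push_cast at hk
  linear_combination hk / 2

theorem crossingSubgroup_eq_top : crossingSubgroup = ⊤ := by
  rw [eq_top_iff]
  rintro g -
  obtain ⟨γ, rfl⟩ := Quotient.exists_rep g
  obtain ⟨p, hp, hp0⟩ := exists_lift γ.toContinuousMap coverBase (by simp)
  have h1 : logCoverMap (p 1) = logCoverMap coverBase := by rw [hp]; simp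
  obtain ⟨k, hk⟩ := exists_deckShift_eq h1
  have hA : p 1 ∈ rayFree := hk ▸ deckShift_mem_rayFree k _ coverBase.2
  have hleg : legLoop logCoverMap rayFree coverBase hA h1 = shiftLoop ^ k := by
    rw [← deckLoop_deckShift, deckLoop]
    congr 1
  refine (congrArg (· ∈ crossingSubgroup)
    (mk_eq_legLoop_mul logCoverMap rayFree coverBase p γ hp hp0 hA)).mpr (mul_mem ?_ ?_)
  · rw [hleg]
    exact zpow_mem shiftLoop_mem k
  · exact closedClass_mem p (hp0 ▸ coverBase.2) hA

instance : PathConnectedSpace logCover := by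
  have hA : ∀ z ∈ rayFree, ∀ z' ∈ rayFree, Joined z z' := fun z hz z' hz' =>
    (PathConnectedSpace.joined (⟨z, hz⟩ : rayFree) ⟨z', hz'⟩).map continuous_subtype_val
  have h : ∀ z : logCover, ∃ z' ∈ rayFree, Joined z z' := fun z => by
    obtain ⟨N, hzN, hN⟩ := exists_isGenNhd z
    have := hN.simplyConnectedSpace
    obtain ⟨z', hz', hz'N⟩ := dense_rayFree.exists_mem_open hN.isOpen ⟨z, hzN⟩
    exact ⟨z', hz', (PathConnectedSpace.joined (⟨z, hzN⟩ : N) ⟨z', hz'N⟩).map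
      continuous_subtype_val⟩
  refine ⟨⟨coverBase⟩, fun z z' => ?_⟩
  obtain ⟨a, ha, hza⟩ := h z
  obtain ⟨b, hb, hzb⟩ := h z'
  exact hza.trans ((hA a ha b hb).trans hzb.symm)

theorem surjective_logCoverMap : Function.Surjective logCoverMap := by
  rintro ⟨⟨x, y⟩, hy, h⟩
  have e : Complex.exp (Complex.log y / 2) ^ 2 = y := by
    rw [← Complex.exp_nat_mul, Nat.cast_ofNat, mul_div_cancel₀ _ two_ne_zero, Complex.exp_log hy]
  exact ⟨⟨(x, Complex.log y / 2), by rwa [← e] at h⟩, Subtype.ext (Prod.ext rfl e)⟩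

instance : PathConnectedSpace affineComplement :=
  surjective_logCoverMap.pathConnectedSpace logCoverMap.continuous

/-! ### The relation at a point of tangency -/

/-- The parameters `(s, ω)` of the points `(x, ω)` of `logCover` close to the tangency `x² = 2`,
where `x² = 2 + s + exp (2 ω)`. -/
def tangencyDomain : Set (ℂ × ℂ) :=
  {p | ‖p.1‖ < 1 ∧ p.2.re < 0 ∧ p.1 ^ 2 ≠ 16 * Complex.exp p.2 ^ 2}

theorem two_add_add_exp_sq_mem_slitPlane {s w : ℂ} (hs : ‖s‖ < 1) (hw : w.re < 0) :
    2 + s + Complex.exp w ^ 2 ∈ Complex.slitPlane := by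
  have hs' := (abs_le.1 (Complex.abs_re_le_norm s)).1
  have hw' := (abs_le.1 (Complex.abs_re_le_norm (Complex.exp w ^ 2))).1
  have hexp : ‖Complex.exp w ^ 2‖ < 1 := by
    rw [norm_pow, Complex.norm_exp]
    exact pow_lt_one₀ (Real.exp_pos _).le (Real.exp_lt_one_iff.2 hw) two_ne_zero
  rw [Complex.mem_slitPlane_iff]
  left
  simp only [Complex.add_re, Complex.re_ofNat]
  linarith

theorem exp_log_div_two_sq {z : ℂ} (h : z ≠ 0) : Complex.exp (Complex.log z / 2) ^ 2 = z := by
  rw [← Complex.exp_nat_mul, Nat.cast_ofNat, mul_div_cancel₀ _ two_ne_zero, Complex.exp_log h]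

/-- The map `(s, ω) ↦ (x, ω)`, with the branch of `x` of negative real part. -/
noncomputable def tangencyMap : C(tangencyDomain, logCover) where
  toFun p := ⟨(-Complex.exp (Complex.log (2 + p.1.1 + Complex.exp p.1.2 ^ 2) / 2), p.1.2), by
    change (_ ^ 2 - _ - 2) ^ 2 ≠ _
    rw [neg_sq, exp_log_div_two_sq (Complex.slitPlane_ne_zero
      (two_add_add_exp_sq_mem_slitPlane p.2.1 p.2.2.1))]
    convert p.2.2.2 using 2
    ring⟩
  continuous_toFun := by
    have h : Continuous fun p : tangencyDomain =>
        Complex.log (2 + p.1.1 + Complex.exp p.1.2 ^ 2) :=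
      Continuous.clog (by fun_prop) fun p => two_add_add_exp_sq_mem_slitPlane p.2.1 p.2.2.1
    fun_prop

/-- The rotation of `tangencyDomain` turning both `s` and `exp ω` by the angle `2 π t`; it is
compatible with the equation because the two branches of the curve there are `s = ± 4 exp ω`. -/
noncomputable def tangencyRotation : C(unitInterval × tangencyDomain, tangencyDomain) where
  toFun q := ⟨(Complex.exp ((2 * π * (q.1 : ℝ) : ℝ) * I) * q.2.1.1,
      q.2.1.2 + (2 * π * (q.1 : ℝ) : ℝ) * I), by
    refine ⟨?_, ?_, fun h => q.2.2.2.2 ?_⟩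
    · rw [norm_mul, Complex.norm_exp_ofReal_mul_I, one_mul]
      exact q.2.2.1
    · rw [Complex.add_re, Complex.re_ofReal_mul, Complex.I_re, mul_zero, add_zero]
      exact q.2.2.2.1
    · rw [Complex.exp_add] at h
      refine mul_left_cancel₀ (pow_ne_zero 2 (Complex.exp_ne_zero
        ((2 * π * (q.1 : ℝ) : ℝ) * I))) ?_
      linear_combination h⟩
  continuous_toFun := by fun_prop

theorem tangencyRotation_zero (p : tangencyDomain) : tangencyRotation (0, p) = p := by
  refine Subtype.ext (Prod.ext ?_ ?_) <;> simp [tangencyRotation]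

theorem tangencyMap_tangencyRotation_one (p : tangencyDomain) :
    tangencyMap (tangencyRotation (1, p)) = deckShift 2 (tangencyMap p) := by
  have hexp : Complex.exp ((2 * π * ((1 : unitInterval) : ℝ) : ℝ) * I) = 1 := by
    simp [Complex.exp_two_pi_mul_I]
  refine Subtype.ext (Prod.ext ?_ ?_)
  · change -Complex.exp (Complex.log (2 + Complex.exp _ * p.1.1 +
      Complex.exp (p.1.2 + _ * I) ^ 2) / 2) =
      -Complex.exp (Complex.log (2 + p.1.1 + Complex.exp p.1.2 ^ 2) / 2)
    rw [Complex.exp_add, hexp, one_mul, mul_one]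
  · change p.1.2 + (2 * π * ((1 : unitInterval) : ℝ) : ℝ) * I =
      p.1.2 + ((2 : ℤ) : ℂ) * (π * I)
    simp only [Set.Icc.coe_one]
    push_cast
    ring

/-- The path in `logCover` swept out by a point of `tangencyDomain` under a full rotation. -/
noncomputable def rotationPath (p : tangencyDomain) : C(unitInterval, logCover) :=
  ⟨fun t => tangencyMap (tangencyRotation (t, p)), by fun_prop⟩

/-- The loop in `affineComplement` obtained from a full rotation; the factor `shiftLoop ^ 2` brings
the end point of `rotationPath` back. -/
noncomputable def rotationClass (p : tangencyDomain) :
    FundamentalGroup affineComplement (logCoverMap coverBase) :=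
  shiftLoop ^ (2 : ℤ) * closedClass (rotationPath p) 0 1

/-- Going around the square `(t, s) ↦ rotation by t of P s`. -/
theorem closedClass_mul_rotationClass (P : C(unitInterval, tangencyDomain))
    (h₀ : tangencyMap (P 0) ∈ rayFree) (h₁ : tangencyMap (P 1) ∈ rayFree) :
    closedClass (tangencyMap.comp P) 0 1 * rotationClass (P 0) =
      rotationClass (P 1) * closedClass (tangencyMap.comp P) 0 1 := by
  let g : C(unitInterval × unitInterval, logCover) :=
    ⟨fun q => tangencyMap (tangencyRotation (q.1, P q.2)), by fun_prop⟩
  have g_zero (s : unitInterval) : g (0, s) = tangencyMap (P s) :=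
    congrArg tangencyMap (tangencyRotation_zero _)
  have g_one (s : unitInterval) : g (1, s) = deckShift 2 (tangencyMap (P s)) :=
    tangencyMap_tangencyRotation_one _
  have side_zero : closedClass (tangencyMap.comp P) 0 1 = closedClass g (0, 0) (0, 1) := by
    rw [show tangencyMap.comp P = g.comp (ContinuousMap.mk
      (fun s : unitInterval => ((0 : unitInterval), s)) (by fun_prop)) from
        ContinuousMap.ext fun s => (g_zero s).symm]
    exact basedClass_comp g _ 0 1
  have side_one : closedClass ((deckShift 2).comp (tangencyMap.comp P)) 0 1 =
      closedClass g (1, 0) (1, 1) := by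
    rw [show (deckShift 2).comp (tangencyMap.comp P) = g.comp (ContinuousMap.mk
      (fun s : unitInterval => ((1 : unitInterval), s)) (by fun_prop)) from
        ContinuousMap.ext fun s => (g_one s).symm]
    exact basedClass_comp g _ 0 1
  have side_rotation (s : unitInterval) :
      rotationClass (P s) = shiftLoop ^ (2 : ℤ) * closedClass g (0, s) (1, s) :=
    congrArg (shiftLoop ^ (2 : ℤ) * ·) (basedClass_comp g (ContinuousMap.mk
      (fun t : unitInterval => (t, s)) (by fun_prop)) 0 1)
  have h₀₀ : g (0, 0) ∈ rayFree := by rwa [g_zero]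
  have h₀₁ : g (0, 1) ∈ rayFree := by rwa [g_zero]
  have h₁₀ : g (1, 0) ∈ rayFree := by rw [g_one]; exact deckShift_mem_rayFree 2 _ h₀
  have h₁₁ : g (1, 1) ∈ rayFree := by rw [g_one]; exact deckShift_mem_rayFree 2 _ h₁
  have around : closedClass g (1, 0) (1, 1) * closedClass g (0, 0) (1, 0) =
      closedClass g (0, 1) (1, 1) * closedClass g (0, 0) (0, 1) :=
    (basedClass_mul g h₀₀ h₁₀ h₁₁).trans (basedClass_mul g h₀₀ h₀₁ h₁₁).symm
  rw [← side_one, closedClass_deckShift (tangencyMap.comp P) h₀ h₁, ← side_zero] at around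
  rw [side_rotation, side_rotation, mul_assoc (shiftLoop ^ (2 : ℤ)), ← around]
  group

theorem rotationClass_eq_of_forall_mem (P : C(unitInterval, tangencyDomain))
    (h : ∀ t, tangencyMap (P t) ∈ rayFree) : rotationClass (P 0) = rotationClass (P 1) := by
  have hone : closedClass (tangencyMap.comp P) 0 1 = 1 := basedClass_of_forall_mem _ _ _ h
  simpa [hone] using closedClass_mul_rotationClass P (h 0) (h 1)

/-- The value of `2 - x²` at the place near the tangency where a crossing is rotated. It is chosen
so that `x² + 2 = (-2 + i / 100)²`. -/
noncomputable def nearOffset : ℂ := (1 / 100) ^ 2 + 4 * (1 / 100) * I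

theorem norm_ofReal_mul_nearOffset_lt {κ : ℝ} (hκ : κ ∈ Set.Icc (0 : ℝ) 1) :
    ‖κ * nearOffset‖ < 1 / 20 := by
  have hoff : ‖nearOffset‖ < 1 / 20 := by
    refine (norm_add_le _ _).trans_lt ?_
    norm_num [Complex.norm_I]
  rw [norm_mul, Complex.norm_real, Real.norm_of_nonneg hκ.1]
  exact (mul_le_of_le_one_left (norm_nonneg _) hκ.2).trans_lt hoff

theorem norm_exp_sq_le {w : ℂ} (hw : w.re ≤ Real.log (1 / 2)) :
    ‖Complex.exp w ^ 2‖ ≤ 1 / 4 := by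
  have h := Real.exp_le_exp.2 hw
  rw [Real.exp_log (by norm_num)] at h
  rw [norm_pow, Complex.norm_exp]
  nlinarith [Real.exp_pos w.re]

theorem log_half_neg : Real.log (1 / 2) < 0 := Real.log_neg (by norm_num) (by norm_num)

/-- The coordinate `x` close to `-√2` with `x² = 2 - κ * nearOffset`. -/
noncomputable def nearX (κ : ℝ) : ℂ := -Complex.exp (Complex.log (2 - κ * nearOffset) / 2)

theorem nearX_sq {κ : ℝ} (hκ : κ ∈ Set.Icc (0 : ℝ) 1) : nearX κ ^ 2 = 2 - κ * nearOffset := by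
  rw [nearX, neg_sq, exp_log_div_two_sq]
  intro h
  have hlt := norm_ofReal_mul_nearOffset_lt hκ
  rw [← sub_eq_zero.1 h] at hlt
  norm_num at hlt

/-- The condition that `(nearX κ, w)` is a point of `logCover` in the image of `tangencyMap`. -/
structure IsNearPoint (κ : ℝ) (w : ℂ) : Prop where
  mem_Icc : κ ∈ Set.Icc (0 : ℝ) 1
  re_le : w.re ≤ Real.log (1 / 2)
  mem_logCover : (nearX κ, w) ∈ logCover

namespace IsNearPoint

theorem mem_tangencyDomain {κ : ℝ} {w : ℂ} (h : IsNearPoint κ w) :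
    (-κ * nearOffset - Complex.exp w ^ 2, w) ∈ tangencyDomain := by
  refine ⟨?_, h.re_le.trans_lt log_half_neg, ?_⟩
  · refine (norm_sub_le _ _).trans_lt ?_
    have := norm_exp_sq_le h.re_le
    have := norm_ofReal_mul_nearOffset_lt h.mem_Icc
    rw [neg_mul, norm_neg]
    linarith
  · have hmem : (nearX κ ^ 2 - Complex.exp w ^ 2 - 2) ^ 2 ≠ 16 * Complex.exp w ^ 2 :=
      h.mem_logCover
    rw [nearX_sq h.mem_Icc] at hmem
    convert hmem using 2
    ring

/-- The point of `tangencyDomain` over `(nearX κ, w)`. -/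
noncomputable def lift {κ : ℝ} {w : ℂ} (h : IsNearPoint κ w) : tangencyDomain :=
  ⟨_, h.mem_tangencyDomain⟩

theorem tangencyMap_lift {κ : ℝ} {w : ℂ} (h : IsNearPoint κ w) :
    tangencyMap h.lift = ⟨(nearX κ, w), h.mem_logCover⟩ := by
  refine Subtype.ext (Prod.ext ?_ rfl)
  change -Complex.exp (Complex.log (2 + (-κ * nearOffset - Complex.exp w ^ 2) +
    Complex.exp w ^ 2) / 2) = -Complex.exp (Complex.log (2 - κ * nearOffset) / 2)
  ring_nf

/-- The path of points of `tangencyDomain` over `(nearX (κ t), w t)`. -/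
noncomputable def path {κ : unitInterval → ℝ} {w : unitInterval → ℂ}
    (h : ∀ t, IsNearPoint (κ t) (w t)) (hκ : Continuous κ) (hw : Continuous w) :
    C(unitInterval, tangencyDomain) where
  toFun t := (h t).lift
  continuous_toFun := by unfold lift; fun_prop

theorem rotationClass_lift_eq {κ : unitInterval → ℝ} {w : unitInterval → ℂ}
    (h : ∀ t, IsNearPoint (κ t) (w t)) (hκ : Continuous κ) (hw : Continuous w)
    (hA : ∀ t, (⟨_, (h t).mem_logCover⟩ : logCover) ∈ rayFree) :
    rotationClass (h 0).lift = rotationClass (h 1).lift :=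
  rotationClass_eq_of_forall_mem (path h hκ hw) fun t => (h t).tangencyMap_lift ▸ hA t

end IsNearPoint

theorem abs_im_exp_add_ofReal_ge {w : ℂ} (hw : Real.log (1 / 2) ≤ w.re)
    (hs : 1 / 2 ≤ Real.sin w.im) {r : ℝ} (hr : 0 ≤ r) :
    1 / 4 ≤ |(Complex.exp (w + r)).im| := by
  have hexp := Real.exp_le_exp.2 (show Real.log (1 / 2) ≤ w.re + r by linarith)
  rw [Real.exp_log (by norm_num)] at hexp
  rw [Complex.exp_im, Complex.add_re, Complex.add_im, Complex.ofReal_re, Complex.ofReal_im,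
    add_zero, abs_of_nonneg (by positivity)]
  nlinarith

theorem mem_rayFree_of_sin_ge {x w : ℂ} (hx : ‖x ^ 2 - 2‖ < 1 / 16)
    (hw : Real.log (1 / 2) ≤ w.re) (hs : 1 / 2 ≤ Real.sin w.im) :
    ∃ h : (x, w) ∈ logCover, (⟨(x, w), h⟩ : logCover) ∈ rayFree := by
  suffices key : ∀ r : ℝ, 0 ≤ r → (x, w + r) ∈ logCover from ⟨by simpa using key 0 le_rfl, key⟩
  intro r hr h
  change (x ^ 2 - Complex.exp (w + r) ^ 2 - 2) ^ 2 = 16 * Complex.exp (w + r) ^ 2 at h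
  have him := abs_im_exp_add_ofReal_ge hw hs hr
  set e := Complex.exp (w + r)
  have far (c : ℝ) : 1 / 4 ≤ ‖e + c‖ := by
    refine him.trans ((le_of_eq ?_).trans (Complex.abs_im_le_norm _))
    simp
  have ne (c : ℝ) : x ^ 2 - 2 ≠ e * (e + c) := by
    intro hc
    have := congrArg norm hc
    rw [norm_mul] at this
    have := far c
    have : 1 / 4 ≤ ‖e‖ := by simpa using far 0
    nlinarith
  have hprod : (x ^ 2 - 2 - e * (e + (4 : ℝ))) * (x ^ 2 - 2 - e * (e + (-4 : ℝ))) = 0 := by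
    push_cast
    linear_combination h
  exact (mul_eq_zero.1 hprod).elim (fun h => ne _ (sub_eq_zero.1 h))
    fun h => ne _ (sub_eq_zero.1 h)

theorem isCrossing_nearX_one : IsCrossing (nearX 1) (-2 + 1 / 100 * I) (Real.log 2)
    (π / 4) where
  sq_eq := by
    rw [nearX_sq ⟨zero_le_one, le_rfl⟩, nearOffset]
    push_cast
    linear_combination (1 / 10000 : ℂ) * Complex.I_sq
  mem_slitPlane := by simp [Complex.mem_slitPlane_iff]
  r_pos := Real.log_pos one_lt_two
  η_pos := by positivity
  η_lt := by linarith [Real.pi_pos]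
  -- The left-hand side has nonpositive real part, the right-hand side positive real part.
  avoid u v _ hv h := by
    have hre := congrArg Complex.re h
    have heq : (2 + (-2 + 1 / 100 * I)) ^ 2 = ((-(1 / 100) ^ 2 : ℝ) : ℂ) := by
      push_cast
      linear_combination (1 / 10000 : ℂ) * Complex.I_sq
    have heq' : (2 - (-2 + 1 / 100 * I)) ^ 2 =
        ((16 - (1 / 100) ^ 2 : ℝ) : ℂ) - (8 / 100 : ℝ) * I := by
      push_cast
      linear_combination (1 / 10000 : ℂ) * Complex.I_sq
    have him : (((2 : ℕ) : ℂ) * (u + v * I)).im = 2 * v := by simp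
    rw [heq, heq', ← Complex.exp_nat_mul, mul_comm, Complex.re_ofReal_mul, Complex.exp_re, him,
      Complex.sub_re, Complex.ofReal_re, Complex.re_ofReal_mul, Complex.I_re] at hre
    have hcos : 0 ≤ Real.cos (2 * v) := Real.cos_nonneg_of_mem_Icc
      ⟨by linarith [(abs_le.1 hv).1], by linarith [(abs_le.1 hv).2]⟩
    have := mul_nonneg (Real.exp_pos (2 * u)).le hcos
    norm_num at hre
    linarith

theorem log_two_add_near : Complex.log (2 + (-2 + 1 / 100 * I)) =
    Real.log (1 / 100) + (π / 2 : ℝ) * I := by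
  have e : (2 + (-2 + 1 / 100 * I)) = ((1 / 100 : ℝ) : ℂ) * I := by
    push_cast
    ring
  rw [e, Complex.log_ofReal_mul (by norm_num) Complex.I_ne_zero, Complex.log_I]
  push_cast
  rfl

/-- The coordinate `ω` of real part `p` at height `θ` above `im ω = π / 2`, the height of
`log (i / 100)`. -/
noncomputable def nearW (p θ : ℝ) : ℂ := p + (π / 2 + θ : ℝ) * I

theorem nearW_re (p θ : ℝ) : (nearW p θ).re = p := by simp [nearW]

theorem nearW_im (p θ : ℝ) : (nearW p θ).im = π / 2 + θ := by simp [nearW]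

theorem continuous_nearW {p θ : unitInterval → ℝ} (hp : Continuous p) (hθ : Continuous θ) :
    Continuous fun t => nearW (p t) (θ t) := by
  unfold nearW
  fun_prop

theorem nearW_mem_logCover {p θ : ℝ} (hp : Real.log (1 / 200) ≤ p) (hθ : |θ| ≤ π / 4)
    (h : p < Real.log (1 / 100) ∨ θ ≠ 0) : (nearX 1, nearW p θ) ∈ logCover := by
  have hlog : Real.log (1 / 200) = Real.log (1 / 100) - Real.log 2 := by
    rw [← Real.log_div (by norm_num) (by norm_num)]
    norm_num
  have := isCrossing_nearX_one.mem_logCover (u := p - Real.log (1 / 100)) (by linarith) hθ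
    (h.imp_left fun h => (sub_neg.2 h).ne)
  rw [log_two_add_near] at this
  convert this using 2
  rw [nearW]
  push_cast
  ring

theorem nearW_mem_rayFree {p θ : ℝ} (hp : Real.log (1 / 200) ≤ p) (hθ : |θ| ≤ π / 4)
    (h : θ ≠ 0) :
    (⟨_, nearW_mem_logCover hp hθ (Or.inr h)⟩ : logCover) ∈ rayFree := by
  intro r hr
  convert nearW_mem_logCover (p := p + r) (by linarith) hθ (Or.inr h) using 2
  simp only [nearW]
  push_cast
  ring

theorem exists_nearW_half_mem_rayFree {κ θ : ℝ} (hκ : κ ∈ Set.Icc (0 : ℝ) 1)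
    (hθ : |θ| ≤ π / 4) :
    ∃ h : (nearX κ, nearW (Real.log (1 / 2)) θ) ∈ logCover, (⟨_, h⟩ : logCover) ∈ rayFree := by
  refine mem_rayFree_of_sin_ge ?_ (nearW_re _ _).ge ?_
  · rw [nearX_sq hκ, sub_sub_cancel_left, norm_neg]
    exact (norm_ofReal_mul_nearOffset_lt hκ).trans (by norm_num)
  · rw [nearW_im, add_comm, Real.sin_add_pi_div_two, ← Real.cos_abs, ← Real.cos_pi_div_three]
    exact Real.cos_le_cos_of_nonneg_of_le_pi (abs_nonneg _) (by linarith [Real.pi_pos])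
      (by linarith [Real.pi_pos])

theorem isNearPoint_nearW_half {κ θ : ℝ} (hκ : κ ∈ Set.Icc (0 : ℝ) 1) (hθ : |θ| ≤ π / 4) :
    IsNearPoint κ (nearW (Real.log (1 / 2)) θ) :=
  ⟨hκ, (nearW_re _ _).le, (exists_nearW_half_mem_rayFree hκ hθ).1⟩

theorem isNearPoint_one_nearW {p θ : ℝ} (hp : Real.log (1 / 200) ≤ p)
    (hp' : p ≤ Real.log (1 / 2)) (hθ : |θ| ≤ π / 4)
    (h : p < Real.log (1 / 100) ∨ θ ≠ 0) : IsNearPoint 1 (nearW p θ) :=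
  ⟨⟨zero_le_one, le_rfl⟩, (nearW_re _ _).trans_le hp', nearW_mem_logCover hp hθ h⟩

theorem isNearPoint_zero : IsNearPoint 0 (nearW (Real.log (1 / 2)) 0) :=
  isNearPoint_nearW_half ⟨le_rfl, zero_le_one⟩ (by rw [abs_zero]; positivity)

/-- The point of `tangencyDomain` over `(-√2, log (i / 2))`, at which the relation is read off. -/
noncomputable def tangencyPoint : tangencyDomain := isNearPoint_zero.lift

theorem tangencyMap_tangencyPoint_mem : tangencyMap tangencyPoint ∈ rayFree :=
  isNearPoint_zero.tangencyMap_lift ▸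
    (exists_nearW_half_mem_rayFree ⟨le_rfl, zero_le_one⟩ (by rw [abs_zero]; positivity)).2

theorem rotationClass_tangencyPoint_eq_half {θ : ℝ} (hθ : |θ| ≤ π / 4)
    (h : IsNearPoint 1 (nearW (Real.log (1 / 2)) θ)) :
    rotationClass tangencyPoint = rotationClass h.lift := by
  have hθt (t : unitInterval) : |(t : ℝ) * θ| ≤ π / 4 := by
    rw [abs_mul, abs_of_nonneg t.2.1]
    exact (mul_le_of_le_one_left (abs_nonneg _) t.2.2).trans hθ
  have key := IsNearPoint.rotationClass_lift_eq
    (fun t : unitInterval => isNearPoint_nearW_half t.2 (hθt t))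
    (by fun_prop) (continuous_nearW (by fun_prop) (by fun_prop))
    fun t => (exists_nearW_half_mem_rayFree t.2 (hθt t)).2
  simpa only [tangencyPoint, Set.Icc.coe_zero, Set.Icc.coe_one, zero_mul, one_mul] using key

theorem rotationClass_lift_half_eq {p θ : ℝ} (hp : Real.log (1 / 200) ≤ p)
    (hp' : p ≤ Real.log (1 / 2)) (hθ : |θ| ≤ π / 4) (hθ₀ : θ ≠ 0)
    (h : IsNearPoint 1 (nearW (Real.log (1 / 2)) θ)) (h' : IsNearPoint 1 (nearW p θ)) :
    rotationClass h.lift = rotationClass h'.lift := by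
  have hpt (t : unitInterval) :
      p ≤ Real.log (1 / 2) + (t : ℝ) * (p - Real.log (1 / 2)) ∧
        Real.log (1 / 2) + (t : ℝ) * (p - Real.log (1 / 2)) ≤ Real.log (1 / 2) := by
    constructor <;> nlinarith [t.2.1, t.2.2]
  have key := IsNearPoint.rotationClass_lift_eq
    (fun t : unitInterval =>
      isNearPoint_one_nearW (hp.trans (hpt t).1) (hpt t).2 hθ (Or.inr hθ₀))
    continuous_const (continuous_nearW (by fun_prop) continuous_const)
    fun t => nearW_mem_rayFree (hp.trans (hpt t).1) hθ hθ₀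
  simpa only [Set.Icc.coe_zero, Set.Icc.coe_one, zero_mul, one_mul, add_zero,
    add_sub_cancel] using key

theorem log_one_div_two_hundred_lt : Real.log (1 / 200) < Real.log (1 / 100) :=
  Real.log_lt_log (by norm_num) (by norm_num)

theorem rotationClass_tangencyPoint_eq {θ : ℝ} (hθ : |θ| = π / 4)
    (h : IsNearPoint 1 (nearW (Real.log (1 / 200)) θ)) :
    rotationClass tangencyPoint = rotationClass h.lift := by
  have hθ₀ : θ ≠ 0 := abs_pos.1 (hθ ▸ by positivity)
  have hhalf := isNearPoint_nearW_half (κ := 1) ⟨zero_le_one, le_rfl⟩ hθ.le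
  exact (rotationClass_tangencyPoint_eq_half hθ.le hhalf).trans
    (rotationClass_lift_half_eq le_rfl ((nearW_re _ θ).symm.trans_le h.re_le) hθ.le hθ₀ hhalf h)

theorem isNearPoint_segment (t : unitInterval) :
    IsNearPoint 1 (nearW (Real.log (1 / 200)) ((2 * (t : ℝ) - 1) * (π / 4))) :=
  isNearPoint_one_nearW le_rfl (Real.log_le_log (by norm_num) (by norm_num))
    (isCrossing_nearX_one.abs_segment_le t) (Or.inl log_one_div_two_hundred_lt)

/-- The lift to `tangencyDomain` of the crossing `isCrossing_nearX_one`. -/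
noncomputable def nearSegment : C(unitInterval, tangencyDomain) :=
  IsNearPoint.path isNearPoint_segment continuous_const
    (continuous_nearW continuous_const (by fun_prop))

theorem tangencyMap_comp_nearSegment :
    tangencyMap.comp nearSegment = isCrossing_nearX_one.segment := by
  refine ContinuousMap.ext fun t => (isNearPoint_segment t).tangencyMap_lift.trans
    (Subtype.ext (Prod.ext rfl ?_))
  have hlog : Real.log (1 / 200) = Real.log (1 / 100) - Real.log 2 := by
    rw [← Real.log_div (by norm_num) (by norm_num)]
    norm_num
  change nearW (Real.log (1 / 200)) ((2 * (t : ℝ) - 1) * (π / 4)) =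
    Complex.log (2 + (-2 + 1 / 100 * I)) + ((-Real.log 2 : ℝ) +
      ((2 * (t : ℝ) - 1) * (π / 4) : ℝ) * I)
  rw [log_two_add_near, hlog, nearW]
  push_cast
  ring

theorem commute_crossingClass_rotationClass :
    Commute crossingClass (rotationClass tangencyPoint) := by
  have hcross : closedClass (tangencyMap.comp nearSegment) 0 1 = crossingClass := by
    rw [tangencyMap_comp_nearSegment]
    exact isCrossing_nearX_one.cls_eq_crossingClass (by simp [Complex.mem_slitPlane_iff])
  have hpi : |π / 4| = π / 4 := abs_of_pos (by positivity)
  have h₀ : rotationClass tangencyPoint = rotationClass (nearSegment 0) :=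
    rotationClass_tangencyPoint_eq (by norm_num [hpi]) (isNearPoint_segment 0)
  have h₁ : rotationClass tangencyPoint = rotationClass (nearSegment 1) :=
    rotationClass_tangencyPoint_eq (by norm_num [hpi]) (isNearPoint_segment 1)
  have key := closedClass_mul_rotationClass nearSegment
    (congr($tangencyMap_comp_nearSegment 0) ▸ isCrossing_nearX_one.segment_zero_mem)
    (congr($tangencyMap_comp_nearSegment 1) ▸ isCrossing_nearX_one.segment_one_mem)
  rwa [hcross, ← h₀, ← h₁] at key

theorem exp_nearW_half_sq (θ : ℝ) :
    Complex.exp (nearW (Real.log (1 / 2)) θ) ^ 2 =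
      -(1 / 4) * Complex.exp (θ * I) ^ 2 := by
  have h : nearW (Real.log (1 / 2)) θ =
      (Real.log (1 / 2) : ℝ) + ((π / 2) * I + θ * I) := by
    rw [nearW]
    push_cast
    ring
  rw [h, Complex.exp_add, Complex.exp_add, Complex.exp_pi_div_two_mul_I, ← Complex.ofReal_exp,
    Real.exp_log (by norm_num)]
  push_cast
  linear_combination (1 / 4 * Complex.exp (θ * I) ^ 2) * Complex.I_sq

/-- The first coordinate of `rotationHomotopy`. -/
noncomputable def rotationHomotopyFst (q : unitInterval × unitInterval) : ℂ :=
  (1 - (q.1 : ℝ) : ℝ) * (1 / 4 * Complex.exp ((2 * π * q.2 : ℝ) * I)) +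
    (q.1 : ℝ) * (1 / 4 * Complex.exp ((2 * π * q.2 : ℝ) * I) ^ 2)

theorem norm_rotationHomotopyFst_le (q : unitInterval × unitInterval) :
    ‖rotationHomotopyFst q‖ ≤ 1 / 4 := by
  refine (norm_add_le _ _).trans ?_
  rw [norm_mul, norm_mul, norm_mul, norm_mul, norm_pow, Complex.norm_exp_ofReal_mul_I,
    Complex.norm_real, Complex.norm_real, Real.norm_of_nonneg q.1.2.1,
    Real.norm_of_nonneg (sub_nonneg.2 q.1.2.2)]
  norm_num
  linarith

theorem rotationHomotopyFst_eq {q : unitInterval × unitInterval}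
    (h : Complex.exp ((2 * π * q.2 : ℝ) * I) = 1) :
    rotationHomotopyFst q = 1 / 4 := by
  rw [rotationHomotopyFst, h]
  push_cast
  ring

/-- The homotopy `s = (1 - q) e / 4 + q e² / 4`, where `e = exp (2 π i t)`, from the rotation of
`tangencyPoint` to the path along which `ω` rotates while `x` stays fixed. -/
noncomputable def rotationHomotopy : C(unitInterval × unitInterval, tangencyDomain) where
  toFun q := ⟨(rotationHomotopyFst q, nearW (Real.log (1 / 2)) (2 * π * q.2)), by
    have hle := norm_rotationHomotopyFst_le q
    refine ⟨hle.trans_lt (by norm_num), (nearW_re _ _).trans_lt log_half_neg, fun he => ?_⟩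
    have hnorm := congrArg norm he
    rw [exp_nearW_half_sq, norm_pow, norm_mul, norm_mul, norm_pow,
      Complex.norm_exp_ofReal_mul_I] at hnorm
    have hsq := pow_le_pow_left₀ (norm_nonneg _) hle 2
    rw [hnorm] at hsq
    norm_num at hsq⟩
  continuous_toFun := by
    unfold nearW rotationHomotopyFst
    fun_prop

theorem tangencyPoint_coe : tangencyPoint.1 = (1 / 4, nearW (Real.log (1 / 2)) 0) := by
  refine Prod.ext ?_ rfl
  change -((0 : ℝ) : ℂ) * nearOffset - Complex.exp (nearW (Real.log (1 / 2)) 0) ^ 2 = 1 / 4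
  rw [exp_nearW_half_sq]
  simp

theorem tangencyRotation_tangencyPoint_coe (t : unitInterval) :
    (tangencyRotation (t, tangencyPoint)).1 =
      (1 / 4 * Complex.exp ((2 * π * t : ℝ) * I),
        nearW (Real.log (1 / 2)) (2 * π * t)) := by
  refine Prod.ext ?_ ?_
  · rw [mul_comm (1 / 4)]
    exact congrArg (_ * ·) congr(Prod.fst $tangencyPoint_coe)
  · refine (congrArg (· + _) congr(Prod.snd $tangencyPoint_coe)).trans ?_
    simp only [nearW]
    push_cast
    ring

theorem rotationHomotopy_zero_left (t : unitInterval) :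
    rotationHomotopy (0, t) = tangencyRotation (t, tangencyPoint) := by
  rw [Subtype.ext_iff, tangencyRotation_tangencyPoint_coe]
  refine Prod.ext ?_ rfl
  simp [rotationHomotopy, rotationHomotopyFst]

theorem rotationHomotopy_zero_right (q : unitInterval) :
    rotationHomotopy (q, 0) = tangencyPoint := by
  rw [Subtype.ext_iff, tangencyPoint_coe]
  refine Prod.ext (rotationHomotopyFst_eq (q := (q, 0)) (by simp)) ?_
  simp [rotationHomotopy]

theorem rotationHomotopy_one_right (q : unitInterval) :
    rotationHomotopy (q, 1) = tangencyRotation (1, tangencyPoint) := by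
  have hexp : Complex.exp ((2 * π * ((1 : unitInterval) : ℝ) : ℝ) * I) = 1 := by
    simp [Complex.exp_two_pi_mul_I]
  rw [Subtype.ext_iff, tangencyRotation_tangencyPoint_coe, hexp, mul_one]
  exact Prod.ext (rotationHomotopyFst_eq (q := (q, 1)) hexp) rfl

/-- The path in `logCover` along which `ω` turns by `2 π` while `x = nearX 0` stays fixed. -/
noncomputable def turnPath : C(unitInterval, logCover) :=
  ⟨fun t => tangencyMap (rotationHomotopy (1, t)), by fun_prop⟩

theorem turnPath_coe (t : unitInterval) :
    (turnPath t).1 = (nearX 0, nearW (Real.log (1 / 2)) (2 * π * t)) := by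
  refine Prod.ext ?_ rfl
  change -Complex.exp (Complex.log (2 + rotationHomotopyFst (1, t) +
    Complex.exp (nearW (Real.log (1 / 2)) (2 * π * t)) ^ 2) / 2) = nearX 0
  rw [exp_nearW_half_sq, nearX, rotationHomotopyFst]
  congr 3
  simp

theorem closedClass_rotationPath_tangencyPoint :
    closedClass (rotationPath tangencyPoint) 0 1 = closedClass turnPath 0 1 := by
  set g : C(unitInterval × unitInterval, logCover) := tangencyMap.comp rotationHomotopy
  have side (q : unitInterval) : closedClass (g.comp (ContinuousMap.mk
      (fun t : unitInterval => (q, t)) (by fun_prop))) 0 1 = closedClass g (q, 0) (q, 1) :=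
    basedClass_comp g _ 0 1
  have hrot : rotationPath tangencyPoint = g.comp (ContinuousMap.mk
      (fun t : unitInterval => ((0 : unitInterval), t)) (by fun_prop)) :=
    ContinuousMap.ext fun t => congrArg tangencyMap (rotationHomotopy_zero_left t).symm
  have h₀ (q : unitInterval) : g (q, 0) ∈ rayFree := by
    rw [ContinuousMap.comp_apply, rotationHomotopy_zero_right]
    exact tangencyMap_tangencyPoint_mem
  have h₁ (q : unitInterval) : g (q, 1) ∈ rayFree := by
    rw [ContinuousMap.comp_apply, rotationHomotopy_one_right, tangencyMap_tangencyRotation_one]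
    exact deckShift_mem_rayFree 2 _ tangencyMap_tangencyPoint_mem
  rw [hrot, side]
  exact (basedClass_square g h₀ h₁).trans (side 1).symm

theorem nearX_zero_sq : nearX 0 ^ 2 = 2 := by
  rw [nearX_sq ⟨le_rfl, zero_le_one⟩]
  simp

theorem isCrossing_nearX_zero : IsCrossing (nearX 0) 2 (Real.log 8) (π / 2) :=
  isCrossing_two nearX_zero_sq (Real.log_pos (by norm_num)) (by positivity)
    (by linarith [Real.pi_pos])

theorem deckShift_segment_coe (k : ℤ) (t : unitInterval) :
    (deckShift k (isCrossing_nearX_zero.segment t)).1 =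
      (nearX 0, nearW (Real.log (1 / 2)) (π * t + (k - 1) * π)) := by
  refine Prod.ext rfl ?_
  change Complex.log (2 + 2) + ((-Real.log 8 : ℝ) +
    ((2 * (t : ℝ) - 1) * (π / 2) : ℝ) * I) + k * (π * I) = _
  have hfour : Complex.log (2 + 2) = (Real.log 4 : ℝ) := by
    rw [Complex.ofReal_log (by norm_num)]
    norm_num
  have hhalf : Real.log (1 / 2) = Real.log 4 - Real.log 8 := by
    rw [← Real.log_div (by norm_num) (by norm_num)]
    norm_num
  rw [hfour, nearW, hhalf]
  push_cast
  ring

theorem turnPath_eq_deckShift_segment {k : ℤ} {s t : unitInterval}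
    (h : (s : ℝ) = ((t : ℝ) + (k - 1)) / 2) :
    turnPath s = deckShift k (isCrossing_nearX_zero.segment t) := by
  refine Subtype.ext ((turnPath_coe s).trans (Eq.trans ?_ (deckShift_segment_coe k t).symm))
  rw [h]
  ring_nf

theorem closedClass_turnPath {k : ℤ} (p : C(unitInterval, unitInterval))
    (hp : ∀ t, (p t : ℝ) = ((t : ℝ) + (k - 1)) / 2) :
    closedClass turnPath (p 0) (p 1) = (shiftLoop ^ k)⁻¹ * crossingClass * shiftLoop ^ k := by
  have hcomp : turnPath.comp p = (deckShift k).comp isCrossing_nearX_zero.segment :=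
    ContinuousMap.ext fun t => turnPath_eq_deckShift_segment (hp t)
  refine (basedClass_comp turnPath p 0 1).symm.trans ?_
  rw [hcomp, ← isCrossing_nearX_zero.cls_eq_crossingClass (by simp)]
  exact closedClass_deckShift _ isCrossing_nearX_zero.segment_zero_mem
    isCrossing_nearX_zero.segment_one_mem k

theorem rotationClass_tangencyPoint :
    rotationClass tangencyPoint = crossingClass * shiftLoop * crossingClass * shiftLoop := by
  let firstHalf : C(unitInterval, unitInterval) :=
    ⟨fun t => ⟨(t : ℝ) / 2, by linarith [t.2.1], by linarith [t.2.2]⟩, by fun_prop⟩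
  let secondHalf : C(unitInterval, unitInterval) :=
    ⟨fun t => ⟨((t : ℝ) + 1) / 2, by linarith [t.2.1], by linarith [t.2.2]⟩, by fun_prop⟩
  have zero_eq : firstHalf 0 = 0 := Subtype.ext (by simp [firstHalf])
  have mid_eq : firstHalf 1 = secondHalf 0 := Subtype.ext (by simp [firstHalf, secondHalf])
  have one_eq : secondHalf 1 = 1 := Subtype.ext (by norm_num [secondHalf])
  have first := closedClass_turnPath (k := 1) firstHalf fun t => by simp [firstHalf]
  have second := closedClass_turnPath (k := 2) secondHalf fun t => by
    norm_num [secondHalf]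
  rw [zero_eq, mid_eq] at first
  rw [one_eq] at second
  have h₀ : turnPath 0 ∈ rayFree := by
    rw [turnPath_eq_deckShift_segment (k := 1) (t := 0) (by simp)]
    exact deckShift_mem_rayFree 1 _ isCrossing_nearX_zero.segment_zero_mem
  have hmid : turnPath (secondHalf 0) ∈ rayFree := by
    rw [turnPath_eq_deckShift_segment (k := 2) (t := 0) (by norm_num [secondHalf])]
    exact deckShift_mem_rayFree 2 _ isCrossing_nearX_zero.segment_zero_mem
  have h₁ : turnPath 1 ∈ rayFree := by
    rw [turnPath_eq_deckShift_segment (k := 2) (t := 1) (by norm_num)]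
    exact deckShift_mem_rayFree 2 _ isCrossing_nearX_zero.segment_one_mem
  rw [rotationClass, closedClass_rotationPath_tangencyPoint, closedClass,
    ← basedClass_mul turnPath h₀ hmid h₁]
  change _ * (closedClass _ _ _ * closedClass _ _ _) = _
  rw [first, second]
  group

theorem crossingClass_mul_shiftLoop_sq :
    (crossingClass * shiftLoop) ^ 2 = (shiftLoop * crossingClass) ^ 2 := by
  have h := commute_crossingClass_rotationClass.eq
  rw [rotationClass_tangencyPoint] at h
  refine mul_left_cancel (a := crossingClass) ?_
  simpa only [pow_two, mul_assoc] using h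

/-! ### A covering of the complement with a prescribed monodromy -/

/-- Two branches of the square root: `true` for the principal one, continuous off the negative real
axis, and `false` for the one with values in the upper half plane, continuous off the positive real
axis. -/
noncomputable def sheetRoot : Bool → ℂ → ℂ
  | true, Y => Complex.exp (Complex.log Y / 2)
  | false, Y => I * Complex.exp (Complex.log (-Y) / 2)

/-- The domain of continuity of `sheetRoot σ`. -/
def sheetDomain : Bool → Set ℂ
  | true => Complex.slitPlane
  | false => {Y | -Y ∈ Complex.slitPlane}

theorem isOpen_sheetDomain (σ : Bool) : IsOpen (sheetDomain σ) := by
  cases σ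
  · exact Complex.isOpen_slitPlane.preimage continuous_neg
  · exact Complex.isOpen_slitPlane

theorem sheetRoot_sq {Y : ℂ} (h : Y ≠ 0) (σ : Bool) : sheetRoot σ Y ^ 2 = Y := by
  cases σ
  · rw [sheetRoot, mul_pow, exp_log_div_two_sq (neg_ne_zero.2 h), Complex.I_sq]
    ring
  · exact exp_log_div_two_sq h

theorem sheetRoot_ne_zero (σ : Bool) (Y : ℂ) : sheetRoot σ Y ≠ 0 := by
  cases σ
  · exact mul_ne_zero Complex.I_ne_zero (Complex.exp_ne_zero _)
  · exact Complex.exp_ne_zero _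

theorem continuousAt_sheetRoot {σ : Bool} {Y : ℂ} (h : Y ∈ sheetDomain σ) :
    ContinuousAt (sheetRoot σ) Y := by
  cases σ
  · have hlog : ContinuousAt (fun Y : ℂ => Complex.log (-Y)) Y :=
      ContinuousAt.clog (by fun_prop) h
    unfold sheetRoot
    fun_prop
  · have hlog : ContinuousAt (fun Y : ℂ => Complex.log Y) Y := ContinuousAt.clog (by fun_prop) h
    unfold sheetRoot
    fun_prop

theorem im_ne_zero_of_mem_sheetDomain {Y : ℂ} (h : Y ∈ sheetDomain true)
    (h' : Y ∈ sheetDomain false) : Y.im ≠ 0 := by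
  intro him
  have hpos : 0 < Y.re := (Complex.mem_slitPlane_iff.1 h).resolve_right (by simp [him])
  have hneg : 0 < (-Y).re := (Complex.mem_slitPlane_iff.1 h').resolve_right (by simp [him])
  exact hpos.not_gt (neg_pos.1 hneg)

theorem sheetRoot_false_of_im_pos {Y : ℂ} (h : 0 < Y.im) :
    sheetRoot false Y = sheetRoot true Y := by
  have hlog : Complex.log (-Y) / 2 = Complex.log Y / 2 + -(π / 2 * I) := by
    rw [Complex.log, Complex.log, norm_neg, Complex.arg_neg_eq_arg_sub_pi_of_im_pos h]
    push_cast
    ring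
  rw [sheetRoot, sheetRoot, hlog, Complex.exp_add, Complex.exp_neg, Complex.exp_pi_div_two_mul_I,
    Complex.inv_I]
  linear_combination (-Complex.exp (Complex.log Y / 2)) * Complex.I_sq

theorem sheetRoot_false_of_im_neg {Y : ℂ} (h : Y.im < 0) :
    sheetRoot false Y = -sheetRoot true Y := by
  have hlog : Complex.log (-Y) / 2 = Complex.log Y / 2 + π / 2 * I := by
    rw [Complex.log, Complex.log, norm_neg, Complex.arg_neg_eq_arg_add_pi_of_im_neg h]
    push_cast
    ring
  rw [sheetRoot, sheetRoot, hlog, Complex.exp_add, Complex.exp_pi_div_two_mul_I]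
  linear_combination Complex.exp (Complex.log Y / 2) * Complex.I_sq

/-- The coordinate `m = (y + 2 - x²) / √y` on the sheets of `√y`; the curve is `m = ± 4`. -/
noncomputable def sheetCoord (σ : Bool) (p : affineComplement) : ℂ :=
  -(p.1.1 ^ 2 - p.1.2 - 2) / sheetRoot σ p.1.2

theorem sheetCoord_sq_ne (σ : Bool) (p : affineComplement) : sheetCoord σ p ^ 2 ≠ 16 := by
  intro h
  rw [sheetCoord, div_pow, neg_sq, sheetRoot_sq p.2.1, div_eq_iff p.2.1] at h
  exact p.2.2 h

theorem continuousAt_sheetCoord {σ : Bool} {p : affineComplement} (h : p.1.2 ∈ sheetDomain σ) :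
    ContinuousAt (sheetCoord σ) p := by
  have hroot : ContinuousAt (fun q : affineComplement => sheetRoot σ q.1.2) p :=
    ContinuousAt.comp (f := fun q : affineComplement => q.1.2) (continuousAt_sheetRoot h)
      (by fun_prop)
  unfold sheetCoord
  exact ContinuousAt.div (by fun_prop) hroot (sheetRoot_ne_zero _ _)

/-- Two open sets covering the complement of `± 4` in the plane: the half planes beyond `± 4`, and
the plane without the rays `± [4, ∞)`. -/
def coordRegion : Bool → Set ℂ
  | true => {m | 4 < |m.re|}
  | false => {m | m.im ≠ 0 ∨ |m.re| < 4}

theorem isOpen_coordRegion (j : Bool) : IsOpen (coordRegion j) := by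
  cases j
  · exact (isOpen_ne_fun Complex.continuous_im continuous_const).union
      (isOpen_lt Complex.continuous_re.abs continuous_const)
  · exact isOpen_lt continuous_const Complex.continuous_re.abs

theorem exists_mem_coordRegion {m : ℂ} (h : m ^ 2 ≠ 16) : ∃ j, m ∈ coordRegion j := by
  rcases lt_trichotomy |m.re| 4 with hlt | heq | hgt
  · exact ⟨false, Or.inr hlt⟩
  · refine ⟨false, Or.inl fun him => h ?_⟩
    have hsq : m.re ^ 2 = 16 := by
      rw [← sq_abs, heq]
      norm_num
    rw [show m = (m.re : ℂ) from Complex.ext rfl him]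
    exact_mod_cast hsq
  · exact ⟨true, hgt⟩

theorem re_ne_zero_of_mem_coordRegion {m : ℂ} (h : m ∈ coordRegion true) : m.re ≠ 0 :=
  abs_pos.1 (four_pos.trans h)

theorem neg_mem_coordRegion {j : Bool} {m : ℂ} : -m ∈ coordRegion j ↔ m ∈ coordRegion j := by
  cases j <;> simp [coordRegion]

theorem sheetCoord_false_of_im_pos {p : affineComplement} (h : 0 < p.1.2.im) :
    sheetCoord false p = sheetCoord true p := by
  rw [sheetCoord, sheetCoord, sheetRoot_false_of_im_pos h]

theorem sheetCoord_false_of_im_neg {p : affineComplement} (h : p.1.2.im < 0) :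
    sheetCoord false p = -sheetCoord true p := by
  rw [sheetCoord, sheetCoord, sheetRoot_false_of_im_neg h, div_neg]

theorem mem_coordRegion_true_of_false {j : Bool} {p : affineComplement}
    (hp : sheetCoord false p ∈ coordRegion j) (hp' : p.1.2.im ≠ 0) :
    sheetCoord true p ∈ coordRegion j := by
  rcases lt_or_gt_of_ne hp' with him | him
  · rwa [sheetCoord_false_of_im_neg him, neg_mem_coordRegion] at hp
  · rwa [sheetCoord_false_of_im_pos him] at hp

section Values

variable {G : Type*} [Group G] (β γ : G)

open Classical in
/-- The values of the cocycle on the sheet with coordinate `m`. Only the jumps across the rays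
`± [4, ∞)` matter: they are `β` and its conjugate by `γ`. -/
noncomputable def coordValue : Bool → ℂ → G
  | true, m => if 0 < m.re then (if m.im < 0 then β else 1) else
      if 0 < m.im then γ * β * γ⁻¹ else 1
  | false, _ => 1

theorem coordValue_neg (h : Commute (γ ^ 2) β) {j : Bool} {m : ℂ} (hm : m ∈ coordRegion j) :
    coordValue β γ j (-m) = γ * coordValue β γ j m * γ⁻¹ := by
  have hconj : γ * (γ * β * γ⁻¹) * γ⁻¹ = β := by
    calc γ * (γ * β * γ⁻¹) * γ⁻¹ = γ ^ 2 * β * (γ ^ 2)⁻¹ := by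
          simp only [sq, mul_inv_rev, mul_assoc]
      _ = β := by rw [h.eq, mul_inv_cancel_right]
  cases j
  · simp [coordValue]
  · simp only [coordValue, Complex.neg_re, Complex.neg_im, Left.neg_pos_iff, Left.neg_neg_iff]
    rcases lt_or_gt_of_ne (re_ne_zero_of_mem_coordRegion hm) with hre | hre
    · rw [if_pos hre, if_neg hre.not_gt]
      split_ifs
      · exact hconj.symm
      · simp
    · rw [if_neg hre.not_gt, if_pos hre]
      split_ifs <;> simp

theorem eventually_pos_iff {X : Type*} [TopologicalSpace X] {f : X → ℝ} {x : X}
    (hf : ContinuousAt f x) (h : f x ≠ 0) : ∀ᶠ y in nhds x, (0 < f y ↔ 0 < f x) := by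
  rcases lt_or_gt_of_ne h with hneg | hpos
  · filter_upwards [hf.eventually_lt_const hneg] with y hy
    exact iff_of_false hy.not_gt hneg.not_gt
  · filter_upwards [hf.eventually_const_lt hpos] with y hy
    exact iff_of_true hy hpos

theorem eventually_neg_iff {X : Type*} [TopologicalSpace X] {f : X → ℝ} {x : X}
    (hf : ContinuousAt f x) (h : f x ≠ 0) : ∀ᶠ y in nhds x, (f y < 0 ↔ f x < 0) := by
  simpa using eventually_pos_iff hf.neg (neg_ne_zero.2 h)

theorem eventually_coordValue_true {m : ℂ} (hre : m.re ≠ 0) (him : m.im ≠ 0) :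
    ∀ᶠ m' in nhds m, coordValue β γ true m' = coordValue β γ true m := by
  filter_upwards [eventually_pos_iff Complex.continuous_re.continuousAt hre,
    eventually_pos_iff Complex.continuous_im.continuousAt him,
    eventually_neg_iff Complex.continuous_im.continuousAt him] with m' hre' hpos hneg
  simp only [coordValue, hre', hpos, hneg]

theorem eventually_coordValue_ratio {m : ℂ} {i j : Bool} (hi : m ∈ coordRegion i)
    (hj : m ∈ coordRegion j) : ∀ᶠ m' in nhds m,
      coordValue β γ j m' * (coordValue β γ i m')⁻¹ =
        coordValue β γ j m * (coordValue β γ i m)⁻¹ := by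
  have hconst (htrue : m ∈ coordRegion true) (hfalse : m ∈ coordRegion false) :
      ∀ᶠ m' in nhds m, coordValue β γ true m' = coordValue β γ true m :=
    eventually_coordValue_true β γ (re_ne_zero_of_mem_coordRegion htrue)
      (hfalse.resolve_right (not_lt_of_gt htrue))
  cases i <;> cases j
  · simp [coordValue]
  · filter_upwards [hconst hj hi] with m' h
    rw [h]
    rfl
  · filter_upwards [hconst hi hj] with m' h
    rw [h]
    rfl
  · simp

open Classical in
/-- The factor relating the sheets: `√y` changes sign where the branches are glued on `im y < 0`. -/
noncomputable def sheetValue : Bool → ℂ → G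
  | true, _ => 1
  | false, Y => if Y.im < 0 then γ else 1

/-- The charts of `sheetCocycle`: a branch of `√y` and a region for the coordinate `m`. -/
def sheetChart (i : Bool × Bool) : Set affineComplement :=
  {p | p.1.2 ∈ sheetDomain i.1 ∧ sheetCoord i.1 p ∈ coordRegion i.2}

theorem isOpen_sheetChart (i : Bool × Bool) : IsOpen (sheetChart i) := by
  refine isOpen_iff_mem_nhds.2 fun p hp => ?_
  have hsnd : Continuous fun q : affineComplement => q.1.2 := by fun_prop
  exact Filter.inter_mem (hsnd.continuousAt ((isOpen_sheetDomain i.1).mem_nhds hp.1))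
    (continuousAt_sheetCoord hp.1 ((isOpen_coordRegion i.2).mem_nhds hp.2))

theorem exists_mem_sheetChart (p : affineComplement) : ∃ i, p ∈ sheetChart i := by
  obtain ⟨σ, hσ⟩ : ∃ σ, p.1.2 ∈ sheetDomain σ :=
    (Complex.mem_slitPlane_or_neg_mem_slitPlane p.2.1).elim (⟨true, ·⟩) (⟨false, ·⟩)
  obtain ⟨j, hj⟩ := exists_mem_coordRegion (sheetCoord_sq_ne σ p)
  exact ⟨(σ, j), hσ, hj⟩

/-- The local values of `sheetCocycle`. -/
noncomputable def chartValue (i : Bool × Bool) (p : affineComplement) : G :=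
  coordValue β γ i.2 (sheetCoord i.1 p) * sheetValue γ i.1 p.1.2

theorem chartValue_false (h : Commute (γ ^ 2) β) {j : Bool} {p : affineComplement}
    (hp : p ∈ sheetChart (false, j)) (hp' : p.1.2.im ≠ 0) :
    chartValue β γ (false, j) p = sheetValue γ false p.1.2 * chartValue β γ (true, j) p := by
  simp only [chartValue, sheetValue, mul_one]
  rcases lt_or_gt_of_ne hp' with him | him
  · rw [if_pos him, sheetCoord_false_of_im_neg him,
      coordValue_neg β γ h (mem_coordRegion_true_of_false hp.2 hp'), inv_mul_cancel_right]
  · rw [if_neg him.not_gt, sheetCoord_false_of_im_pos him, mul_one, one_mul]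

theorem eventually_chartValue_ratio_same (σ i j : Bool) {p : affineComplement}
    (hi : p ∈ sheetChart (σ, i)) (hj : p ∈ sheetChart (σ, j)) : ∀ᶠ q in nhds p,
      chartValue β γ (σ, j) q * (chartValue β γ (σ, i) q)⁻¹ =
        chartValue β γ (σ, j) p * (chartValue β γ (σ, i) p)⁻¹ := by
  filter_upwards [(continuousAt_sheetCoord hi.1).eventually
    (eventually_coordValue_ratio β γ hi.2 hj.2)] with q hq
  simpa [chartValue] using hq

theorem eventually_chartValue_ratio_diff (h : Commute (γ ^ 2) β) (i j : Bool)
    {p : affineComplement} (hi : p ∈ sheetChart (true, i)) (hj : p ∈ sheetChart (false, j)) :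
    ∀ᶠ q in nhds p, chartValue β γ (false, j) q * (chartValue β γ (true, i) q)⁻¹ =
      chartValue β γ (false, j) p * (chartValue β γ (true, i) p)⁻¹ := by
  have him : p.1.2.im ≠ 0 := im_ne_zero_of_mem_sheetDomain hi.1 hj.1
  have hcont : Continuous fun q : affineComplement => q.1.2.im := by fun_prop
  filter_upwards [eventually_neg_iff hcont.continuousAt him,
    hcont.continuousAt.eventually_ne him, (isOpen_sheetChart _).mem_nhds hj,
    eventually_chartValue_ratio_same β γ true i j hi
      ⟨hi.1, mem_coordRegion_true_of_false hj.2 him⟩] with q hneg hne hchart hratio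
  rw [chartValue_false β γ h hchart hne, chartValue_false β γ h hj him, mul_assoc, mul_assoc,
    hratio]
  simp only [sheetValue, hneg]

/-- The covering of `affineComplement` along which a loop around the curve acts by `β` and a loop
around `y = 0` by `γ`; `γ ^ 2` commutes with `β` because two turns around `y = 0` fix the sheet. -/
noncomputable def sheetCocycle (h : Commute (γ ^ 2) β) :
    RatioCocycle (Bool × Bool) affineComplement G where
  chart := sheetChart
  isOpen_chart := isOpen_sheetChart
  index p := (exists_mem_sheetChart p).choose
  mem_chart p := (exists_mem_sheetChart p).choose_spec
  value := chartValue β γ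
  eventually_ratio := by
    rintro ⟨σ, i⟩ ⟨σ', j⟩ p ⟨hi, hj⟩
    cases σ <;> cases σ'
    · exact eventually_chartValue_ratio_same β γ false i j hi hj
    · filter_upwards [eventually_chartValue_ratio_diff β γ h j i hj hi] with q hq
      simpa using congrArg (·⁻¹) hq
    · exact eventually_chartValue_ratio_diff β γ h i j hi hj
    · exact eventually_chartValue_ratio_same β γ true i j hi hj

end Values

theorem exp_mem_slitPlane_of_abs_im_lt {v : ℂ} (h : |v.im| < π) :
    Complex.exp v ∈ Complex.slitPlane := by
  rw [Complex.mem_slitPlane_iff_arg, Complex.arg_exp, toIocMod_eq_self Real.two_pi_pos |>.2]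
  · exact ⟨(abs_lt.1 h).2.ne, Complex.exp_ne_zero _⟩
  · exact ⟨(abs_lt.1 h).1, by linarith [(abs_lt.1 h).2]⟩

theorem log_exp_of_abs_im_lt {v : ℂ} (h : |v.im| < π) : Complex.log (Complex.exp v) = v :=
  Complex.log_exp (abs_lt.1 h).1 (abs_lt.1 h).2.le

theorem sheetCoord_logCoverMap_of_sq_eq_two {z : logCover} (hz : z.1.1 ^ 2 = 2) {σ : Bool} {u : ℂ}
    (hroot : sheetRoot σ (Complex.exp z.1.2 ^ 2) = Complex.exp u)
    (hsq : Complex.exp z.1.2 ^ 2 = Complex.exp u ^ 2) :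
    sheetCoord σ (logCoverMap z) = Complex.exp u := by
  change -(z.1.1 ^ 2 - Complex.exp z.1.2 ^ 2 - 2) / sheetRoot σ (Complex.exp z.1.2 ^ 2) = _
  rw [hroot, div_eq_iff (Complex.exp_ne_zero _), hz, hsq]
  ring

theorem sheetCoord_true_logCoverMap {z : logCover} (hz : z.1.1 ^ 2 = 2) (n : ℤ)
    (h : |z.1.2.im - n * π| < π / 2) :
    (logCoverMap z).1.2 ∈ sheetDomain true ∧
      sheetCoord true (logCoverMap z) = Complex.exp (z.1.2 - n * (π * I)) := by
  set u := z.1.2 - n * (π * I) with hu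
  have hsq : Complex.exp z.1.2 ^ 2 = Complex.exp u ^ 2 := by
    rw [← exp_add_int_mul_pi_sq u n, hu, sub_add_cancel]
  have him : |(2 * u).im| < π := by
    have : (2 * u).im = 2 * (z.1.2.im - n * π) := by simp [hu]
    rw [this, abs_mul, abs_two]
    linarith
  have hexp : Complex.exp u ^ 2 = Complex.exp (2 * u) := by
    rw [← Complex.exp_nat_mul, Nat.cast_ofNat]
  refine ⟨?_, sheetCoord_logCoverMap_of_sq_eq_two hz ?_ hsq⟩
  · change Complex.exp z.1.2 ^ 2 ∈ Complex.slitPlane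
    rw [hsq, hexp]
    exact exp_mem_slitPlane_of_abs_im_lt him
  · rw [hsq, hexp, sheetRoot, log_exp_of_abs_im_lt him, mul_div_cancel_left₀ _ two_ne_zero]

theorem sheetCoord_false_logCoverMap {z : logCover} (hz : z.1.1 ^ 2 = 2)
    (h : |z.1.2.im - π / 2| < π / 2) :
    (logCoverMap z).1.2 ∈ sheetDomain false ∧
      sheetCoord false (logCoverMap z) = Complex.exp z.1.2 := by
  set u := 2 * z.1.2 - π * I with hu
  have him : |u.im| < π := by
    have : u.im = 2 * (z.1.2.im - π / 2) := by
      simp only [hu, Complex.sub_im, Complex.mul_im, Complex.re_ofNat, Complex.im_ofNat, zero_mul,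
        add_zero, Complex.ofReal_re, Complex.I_im, mul_one, Complex.ofReal_im, Complex.I_re,
        mul_zero]
      ring
    rw [this, abs_mul, abs_two]
    linarith
  have hexp : -Complex.exp z.1.2 ^ 2 = Complex.exp u := by
    rw [Complex.exp_sub, Complex.exp_pi_mul_I, ← Complex.exp_nat_mul, div_neg, div_one,
      Nat.cast_ofNat]
  refine ⟨?_, sheetCoord_logCoverMap_of_sq_eq_two hz ?_ rfl⟩
  · change -Complex.exp z.1.2 ^ 2 ∈ Complex.slitPlane
    rw [hexp]
    exact exp_mem_slitPlane_of_abs_im_lt him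
  · have hhalf : u / 2 = z.1.2 - π / 2 * I := by
      rw [hu]
      ring
    rw [sheetRoot, hexp, log_exp_of_abs_im_lt him, hhalf, Complex.exp_sub,
      Complex.exp_pi_div_two_mul_I, mul_div_cancel₀ _ Complex.I_ne_zero]

theorem logCoverMap_mem_sheetChart_true_false {z : logCover} (hz : z.1.1 ^ 2 = 2)
    (him : |z.1.2.im| < π / 2) (h : z.1.2.im ≠ 0 ∨ z.1.2.re < Real.log 4) :
    logCoverMap z ∈ sheetChart (true, false) := by
  obtain ⟨hdom, hcoord⟩ := sheetCoord_true_logCoverMap hz 0 (by simpa using him)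
  rw [Int.cast_zero, zero_mul, sub_zero] at hcoord
  refine ⟨hdom, ?_⟩
  change (sheetCoord true (logCoverMap z)).im ≠ 0 ∨ |(sheetCoord true (logCoverMap z)).re| < 4
  rw [hcoord]
  refine h.imp (fun h0 => ?_) fun hre => (Complex.abs_re_le_norm _).trans_lt ?_
  · rw [Complex.exp_im]
    obtain ⟨hlo, hhi⟩ := abs_lt.1 him
    exact mul_ne_zero (Real.exp_pos _).ne' ((Real.sin_eq_zero_iff_of_lt_of_lt
      (by linarith) (by linarith)).not.2 h0)
  · rwa [Complex.norm_exp, ← Real.lt_log_iff_exp_lt four_pos]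

theorem logCoverMap_mem_sheetChart_false_false {z : logCover} (hz : z.1.1 ^ 2 = 2)
    (h0 : 0 < z.1.2.im) (hpi : z.1.2.im < π) :
    logCoverMap z ∈ sheetChart (false, false) := by
  obtain ⟨hdom, hcoord⟩ := sheetCoord_false_logCoverMap hz
    (abs_lt.2 ⟨by linarith, by linarith⟩)
  refine ⟨hdom, Or.inl ?_⟩
  change (sheetCoord false (logCoverMap z)).im ≠ 0
  rw [hcoord, Complex.exp_im]
  exact (mul_pos (Real.exp_pos _) (Real.sin_pos_of_pos_of_lt_pi h0 hpi)).ne'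

/-- The point of `rayFree` over `x = √2` at height `θ`, to the right of all obstruction points. -/
noncomputable def highPoint (θ : ℝ) : logCover :=
  ⟨((Real.sqrt 2 : ℝ), 4 + θ * I),
    farRegion_subset_logCover (sqrt_two_mk_mem_farRegion (by simp))⟩

theorem highPoint_mem_rayFree (θ : ℝ) : highPoint θ ∈ rayFree :=
  mem_rayFree_of_mem_farRegion (sqrt_two_mk_mem_farRegion (by simp))

theorem continuous_highPoint : Continuous highPoint := by
  unfold highPoint
  fun_prop

theorem highPoint_im (θ : ℝ) : (highPoint θ).1.2.im = θ := by simp [highPoint]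

theorem coverBase_eq_highPoint : (coverBase : logCover) = highPoint 0 :=
  Subtype.ext (Prod.ext rfl (by simp [highPoint, coverBase]))

theorem deckShift_coverBase : deckShift 1 coverBase = highPoint π :=
  Subtype.ext (Prod.ext rfl (by simp [highPoint, coverBase, deckShift]))

theorem sixteen_le_exp_four : 16 ≤ Real.exp 4 := by
  have h := Real.add_one_le_exp 1
  calc (16 : ℝ) = 2 ^ 4 := by norm_num
    _ ≤ Real.exp 1 ^ 4 := pow_le_pow_left₀ (by norm_num) (by linarith) 4
    _ = Real.exp 4 := by rw [← Real.exp_nat_mul]; norm_num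

theorem sheetCoord_true_highPoint (n : ℤ) {θ : ℝ} (h : |θ - n * π| ≤ π / 4) :
    4 < (sheetCoord true (logCoverMap (highPoint θ))).re ∧
      (sheetCoord true (logCoverMap (highPoint θ))).im =
        Real.exp 4 * Real.sin (θ - n * π) := by
  have hpi := Real.pi_pos
  obtain ⟨-, hcoord⟩ := sheetCoord_true_logCoverMap (z := highPoint θ) ofReal_sqrt_two_sq n (by
    rw [highPoint_im]
    linarith)
  have hre : ((highPoint θ).1.2 - n * (π * I)).re = 4 := by simp [highPoint]
  have him : ((highPoint θ).1.2 - n * (π * I)).im = θ - n * π := by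
    simp [highPoint]
  have hcos : 1 / 2 ≤ Real.cos (θ - n * π) := by
    rw [← Real.cos_abs, ← Real.cos_pi_div_three]
    exact Real.cos_le_cos_of_nonneg_of_le_pi (abs_nonneg _) (by linarith) (by linarith)
  rw [hcoord, Complex.exp_re, Complex.exp_im, hre, him]
  exact ⟨by nlinarith [sixteen_le_exp_four], rfl⟩

theorem highPoint_mem_sheetChart_true_true (n : ℤ) {θ : ℝ}
    (h : |θ - n * π| ≤ π / 4) :
    logCoverMap (highPoint θ) ∈ sheetChart (true, true) :=
  ⟨(sheetCoord_true_logCoverMap (z := highPoint θ) ofReal_sqrt_two_sq n (by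
    rw [highPoint_im]
    linarith [Real.pi_pos])).1, (sheetCoord_true_highPoint n h).1.trans_le (le_abs_self _)⟩

theorem highPoint_mem_sheetChart_false_false {θ : ℝ} (h0 : 0 < θ) (hpi : θ < π) :
    logCoverMap (highPoint θ) ∈ sheetChart (false, false) :=
  logCoverMap_mem_sheetChart_false_false ofReal_sqrt_two_sq (by rwa [highPoint_im])
    (by rwa [highPoint_im])

section ChartValue

variable {G : Type*} [Group G] (β γ : G)

@[simp]
theorem chartValue_true_false (p : affineComplement) : chartValue β γ (true, false) p = 1 := by
  simp [chartValue, coordValue, sheetValue]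

theorem chartValue_true_true_highPoint_of_sin_nonneg (n : ℤ) {θ : ℝ}
    (h : |θ - n * π| ≤ π / 4) (hsin : 0 ≤ Real.sin (θ - n * π)) :
    chartValue β γ (true, true) (logCoverMap (highPoint θ)) = 1 := by
  obtain ⟨hre, him⟩ := sheetCoord_true_highPoint n h
  simp only [chartValue, coordValue, sheetValue, mul_one]
  rw [if_pos (four_pos.trans hre), him, if_neg (mul_nonneg (Real.exp_pos 4).le hsin).not_gt]

theorem chartValue_true_true_highPoint_of_sin_neg (n : ℤ) {θ : ℝ}
    (h : |θ - n * π| ≤ π / 4) (hsin : Real.sin (θ - n * π) < 0) :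
    chartValue β γ (true, true) (logCoverMap (highPoint θ)) = β := by
  obtain ⟨hre, him⟩ := sheetCoord_true_highPoint n h
  simp only [chartValue, coordValue, sheetValue, mul_one]
  rw [if_pos (four_pos.trans hre), him, if_pos (mul_neg_of_pos_of_neg (Real.exp_pos 4) hsin)]

theorem im_logCoverMap_highPoint (θ : ℝ) :
    (logCoverMap (highPoint θ)).1.2.im = Real.exp 8 * Real.sin (2 * θ) := by
  change (Complex.exp (4 + θ * I) ^ 2).im = _
  rw [← Complex.exp_nat_mul, Complex.exp_im]
  norm_num

theorem chartValue_false_false_highPoint (θ : ℝ) :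
    chartValue β γ (false, false) (logCoverMap (highPoint θ)) =
      if Real.sin (2 * θ) < 0 then γ else 1 := by
  simp only [chartValue, coordValue, sheetValue, one_mul, im_logCoverMap_highPoint,
    ← smul_eq_mul (Real.exp 8), smul_neg_iff_of_pos_left (Real.exp_pos 8)]

end ChartValue

section Monodromy

variable {G : Type*} [Group G] [TopologicalSpace G] [DiscreteTopology G]

namespace RatioCocycle

variable {ι : Type*} (S : RatioCocycle ι affineComplement G)

/-- The monodromy along a path in `rayFree` from the base point. -/
noncomputable def legMonodromy (z : logCover) (hz : z ∈ rayFree) (k : G) : G :=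
  S.monodromy (inTransport logCoverMap rayFree coverBase.2 hz) k

theorem legMonodromy_base {z : logCover} (hz : z ∈ rayFree) (h : (coverBase : logCover) = z)
    (k : G) : S.legMonodromy z hz k = k := by
  subst h
  rw [legMonodromy, inTransport_self]
  exact S.monodromy_id _ k

theorem legMonodromy_eq (f : C(unitInterval, logCover)) {z z' : logCover} (h₀ : f 0 = z)
    (h₁ : f 1 = z') (hA : ∀ t, f t ∈ rayFree) (i : ι)
    (hi : ∀ t, logCoverMap (f t) ∈ S.chart i) (hz : z ∈ rayFree) (hz' : z' ∈ rayFree) (k : G) :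
    S.legMonodromy z' hz' k = (S.value i (logCoverMap z'))⁻¹ *
      (S.value i (logCoverMap z) * S.legMonodromy z hz k) := by
  subst h₀ h₁
  rw [legMonodromy, ← inTransport_trans logCoverMap rayFree coverBase.2 hz hz', S.monodromy_comp,
    ← pathTransport_eq_inTransport_of_forall_mem logCoverMap f rayFree hA 0 1]
  exact S.monodromy_pathTransport (logCoverMap.comp f) i hi 0 1 _

theorem monodromy_inv {x y : affineComplement}
    (γ : FundamentalGroupoid.mk x ⟶ FundamentalGroupoid.mk y) (k : G) :
    S.monodromy (inv γ) (S.monodromy γ k) = k := by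
  rw [← S.monodromy_comp, IsIso.hom_inv_id, S.monodromy_id]

theorem monodromyHom_closedClass (f : C(unitInterval, logCover)) (h₀ : f 0 ∈ rayFree)
    (h₁ : f 1 ∈ rayFree) (i : ι) (hi : ∀ t, logCoverMap (f t) ∈ S.chart i) {k l : G}
    (h : S.legMonodromy _ h₁ l = (S.value i (logCoverMap (f 1)))⁻¹ *
      (S.value i (logCoverMap (f 0)) * S.legMonodromy _ h₀ k)) :
    S.monodromyHom _ (closedClass f 0 1) k = l := by
  rw [monodromyHom_apply, closedClass, basedClass_eq f h₀ h₁]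
  refine (S.monodromy_comp _ _ k).trans ((S.monodromy_comp _ _ _).trans ?_)
  refine (congrArg _ (S.monodromy_pathTransport (logCoverMap.comp f) i hi 0 1 _)).trans ?_
  exact (congrArg _ h.symm).trans (S.monodromy_inv _ l)

theorem monodromyHom_shiftLoop (k : G) : S.monodromyHom _ shiftLoop k =
    S.legMonodromy (deckShift 1 coverBase) (deckShift_mem_rayFree 1 _ coverBase.2) k := by
  rw [monodromyHom_apply]
  exact (S.monodromy_comp _ _ k).trans (S.monodromy_eqToHom
    (DFunLike.congr_fun (logCoverMap_comp_deckShift 1) (coverBase : logCover)) _)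

theorem legMonodromy_highPoint (θ θ' : ℝ) (i : ι)
    (hi : ∀ ϑ ∈ Set.uIcc θ θ', logCoverMap (highPoint ϑ) ∈ S.chart i) (k : G) :
    S.legMonodromy (highPoint θ') (highPoint_mem_rayFree θ') k =
      (S.value i (logCoverMap (highPoint θ')))⁻¹ *
        (S.value i (logCoverMap (highPoint θ)) *
          S.legMonodromy (highPoint θ) (highPoint_mem_rayFree θ) k) := by
  have hmem : ∀ t : unitInterval, θ + (t : ℝ) * (θ' - θ) ∈ Set.uIcc θ θ' := fun t =>
    (convex_uIcc θ θ').add_smul_sub_mem Set.left_mem_uIcc Set.right_mem_uIcc t.2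
  exact S.legMonodromy_eq
    ⟨fun t => highPoint (θ + (t : ℝ) * (θ' - θ)), continuous_highPoint.comp (by fun_prop)⟩
    (by simp) (by simp) (fun t => highPoint_mem_rayFree _) i (fun t => hi _ (hmem t)) _ _ k

end RatioCocycle

variable (β γ : G) (h : Commute (γ ^ 2) β)

theorem legMonodromy_highPoint_of_abs_le {θ : ℝ} (hθ : |θ| ≤ π / 4) (k : G) :
    (sheetCocycle β γ h).legMonodromy (highPoint θ) (highPoint_mem_rayFree θ) k =
      (chartValue β γ (true, true) (logCoverMap (highPoint θ)))⁻¹ * k := by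
  have hchart : ∀ ϑ ∈ Set.uIcc 0 θ, logCoverMap (highPoint ϑ) ∈ sheetChart (true, true) :=
    fun ϑ hϑ => by
      have hle := Set.abs_sub_left_of_mem_uIcc hϑ
      rw [sub_zero, sub_zero] at hle
      exact highPoint_mem_sheetChart_true_true 0 (by simpa using hle.trans hθ)
  have hbase := chartValue_true_true_highPoint_of_sin_nonneg β γ 0 (θ := 0)
    (by simpa using (by positivity : 0 ≤ π / 4)) (by simp)
  rw [(sheetCocycle β γ h).legMonodromy_highPoint 0 θ (true, true) hchart,
    RatioCocycle.legMonodromy_base _ _ coverBase_eq_highPoint]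
  change _ * (chartValue β γ (true, true) _ * k) = _
  rw [hbase, one_mul]
  rfl

theorem legMonodromy_highPoint_three_pi_div_four (k : G) :
    (sheetCocycle β γ h).legMonodromy (highPoint (3 * π / 4)) (highPoint_mem_rayFree _) k =
      γ⁻¹ * k := by
  have hpi := Real.pi_pos
  have habs : |π / 4| = π / 4 := abs_of_pos (by positivity)
  have hstart : chartValue β γ (true, true) (logCoverMap (highPoint (π / 4))) = 1 :=
    chartValue_true_true_highPoint_of_sin_nonneg β γ 0 (by simp [habs]) (by
      rw [Int.cast_zero, zero_mul, sub_zero, Real.sin_pi_div_four]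
      positivity)
  have hleft : chartValue β γ (false, false) (logCoverMap (highPoint (π / 4))) = 1 := by
    rw [chartValue_false_false_highPoint, show 2 * (π / 4) = π / 2 by ring,
      Real.sin_pi_div_two, if_neg one_pos.not_gt]
  have hright : chartValue β γ (false, false) (logCoverMap (highPoint (3 * π / 4))) = γ := by
    rw [chartValue_false_false_highPoint,
      show 2 * (3 * π / 4) = π / 2 + π by ring, Real.sin_add_pi,
      Real.sin_pi_div_two, if_pos (neg_one_lt_zero)]
  rw [(sheetCocycle β γ h).legMonodromy_highPoint (π / 4) (3 * π / 4) (false, false)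
      (fun ϑ hϑ => by
        rw [Set.uIcc_of_le (by linarith)] at hϑ
        exact highPoint_mem_sheetChart_false_false (by linarith [hϑ.1]) (by linarith [hϑ.2])),
    legMonodromy_highPoint_of_abs_le β γ h habs.le, hstart]
  change (chartValue β γ _ _)⁻¹ * (chartValue β γ _ _ * _) = _
  rw [hleft, hright, inv_one, one_mul, one_mul]

theorem sheetCocycle_monodromyHom_shiftLoop (k : G) :
    (sheetCocycle β γ h).monodromyHom _ shiftLoop k = β * γ⁻¹ * k := by
  have hpi := Real.pi_pos
  have hleft : chartValue β γ (true, true) (logCoverMap (highPoint (3 * π / 4))) = β :=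
    chartValue_true_true_highPoint_of_sin_neg β γ 1
      (abs_le.2 ⟨by push_cast; linarith, by push_cast; linarith⟩)
      (Real.sin_neg_of_neg_of_neg_pi_lt (by push_cast; linarith) (by push_cast; linarith))
  have hright : chartValue β γ (true, true) (logCoverMap (highPoint π)) = 1 :=
    chartValue_true_true_highPoint_of_sin_nonneg β γ 1
      (by simpa using (by positivity : 0 ≤ π / 4)) (by simp)
  rw [RatioCocycle.monodromyHom_shiftLoop]
  simp only [deckShift_coverBase]
  rw [(sheetCocycle β γ h).legMonodromy_highPoint (3 * π / 4) π (true, true)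
      (fun ϑ hϑ => by
        rw [Set.uIcc_of_le (by linarith)] at hϑ
        exact highPoint_mem_sheetChart_true_true 1
          (abs_le.2 ⟨by push_cast; linarith [hϑ.1], by push_cast; linarith [hϑ.2]⟩)),
    legMonodromy_highPoint_three_pi_div_four]
  change (chartValue β γ _ _)⁻¹ * (chartValue β γ _ _ * _) = _
  rw [hleft, hright, inv_one, one_mul, mul_assoc]

theorem log_two_add_two : Complex.log (2 + 2) = (Real.log 4 : ℝ) := by
  rw [Complex.ofReal_log (by norm_num)]
  norm_num

theorem isCrossing_base_segment_coe (t : unitInterval) : (isCrossing_base.segment t : ℂ × ℂ) =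
    (((Real.sqrt 2 : ℝ) : ℂ), (((2 * (t : ℝ) - 1) * (π / 4) : ℝ) : ℂ) * I) := by
  refine Prod.ext rfl ?_
  change Complex.log (2 + 2) + ((-Real.log 4 : ℝ) + _) = _
  rw [log_two_add_two]
  push_cast
  ring

theorem logCoverMap_segment_mem_sheetChart (t : unitInterval) :
    logCoverMap (isCrossing_base.segment t) ∈ sheetChart (true, false) := by
  have hsnd := congrArg Prod.snd (isCrossing_base_segment_coe t)
  refine logCoverMap_mem_sheetChart_true_false ofReal_sqrt_two_sq ?_ (Or.inr ?_)
  · rw [hsnd, Complex.im_ofReal_mul, Complex.I_im, mul_one]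
    exact (isCrossing_base.abs_segment_le t).trans_lt (by linarith [Real.pi_pos])
  · rw [hsnd, Complex.re_ofReal_mul, Complex.I_re, mul_zero]
    exact isCrossing_base.r_pos

theorem exists_mem_rayFree_of_abs_eq {θ : ℝ} (hθ : |θ| = π / 4) {r : ℝ} (hr : 0 ≤ r) :
    ∃ hz : (((Real.sqrt 2 : ℝ) : ℂ), r + θ * I) ∈ logCover,
      (⟨_, hz⟩ : logCover) ∈ rayFree := by
  have hθ0 : θ ≠ 0 := abs_pos.1 (hθ ▸ by positivity)
  have hmem := isCrossing_base.mem_rayFree (u := r - Real.log 4) (by linarith) hθ.le hθ0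
  have hlog : Complex.log (2 + 2) + ((r - Real.log 4 : ℝ) + θ * I) =
      r + θ * I := by
    rw [log_two_add_two]
    push_cast
    ring
  simp only [hlog] at hmem
  exact ⟨_, hmem⟩

theorem legMonodromy_segment_end {θ : ℝ} (hθ : |θ| = π / 4) {z : logCover}
    (hz : z ∈ rayFree) (hzθ : z.1 = (((Real.sqrt 2 : ℝ) : ℂ), θ * I)) (k : G) :
    (sheetCocycle β γ h).legMonodromy z hz k =
      (chartValue β γ (true, true) (logCoverMap (highPoint θ)))⁻¹ * k := by
  have hpi := Real.pi_pos
  have hmem (t : unitInterval) := exists_mem_rayFree_of_abs_eq hθ (r := (1 - (t : ℝ)) * 4)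
    (mul_nonneg (sub_nonneg.2 t.2.2) four_pos.le)
  have him (t : unitInterval) : (((1 - (t : ℝ)) * 4 : ℝ) + θ * I).im = θ := by simp
  have hchart (t : unitInterval) : logCoverMap ⟨_, (hmem t).1⟩ ∈ sheetChart (true, false) := by
    refine logCoverMap_mem_sheetChart_true_false ofReal_sqrt_two_sq ?_ (Or.inl ?_)
    · rw [him, hθ]
      linarith
    · rw [him]
      exact abs_pos.1 (hθ ▸ by positivity)
  rw [(sheetCocycle β γ h).legMonodromy_eq
      (⟨fun t => ⟨_, (hmem t).1⟩, by fun_prop⟩ : C(unitInterval, logCover)) (z := highPoint θ)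
      (Subtype.ext (by simp [highPoint])) (Subtype.ext (by simp [hzθ])) (fun t => (hmem t).2)
      (true, false) hchart (highPoint_mem_rayFree θ) hz,
    legMonodromy_highPoint_of_abs_le β γ h hθ.le]
  change (chartValue β γ (true, false) _)⁻¹ * (chartValue β γ (true, false) _ * _) = _
  rw [chartValue_true_false, chartValue_true_false, inv_one, one_mul, one_mul]

theorem sheetCocycle_monodromyHom_crossingClass (k : G) :
    (sheetCocycle β γ h).monodromyHom _ crossingClass k = β⁻¹ * k := by
  have hpos : |π / 4| = π / 4 := abs_of_pos (by positivity)
  have hneg : |-(π / 4)| = π / 4 := by rw [abs_neg, hpos]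
  have hupper : chartValue β γ (true, true) (logCoverMap (highPoint (π / 4))) = 1 :=
    chartValue_true_true_highPoint_of_sin_nonneg β γ 0 (by simpa using hpos.le) (by
      rw [Int.cast_zero, zero_mul, sub_zero, Real.sin_pi_div_four]
      positivity)
  have hlower : chartValue β γ (true, true) (logCoverMap (highPoint (-(π / 4)))) = β :=
    chartValue_true_true_highPoint_of_sin_neg β γ 0 (by simpa using hneg.le) (by simp)
  refine RatioCocycle.monodromyHom_closedClass _ isCrossing_base.segment
    isCrossing_base.segment_zero_mem isCrossing_base.segment_one_mem (true, false)
    logCoverMap_segment_mem_sheetChart ?_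
  rw [legMonodromy_segment_end β γ h hpos _ ((isCrossing_base_segment_coe 1).trans (by norm_num)),
    legMonodromy_segment_end β γ h hneg _ ((isCrossing_base_segment_coe 0).trans (by norm_num)),
    hupper, hlower]
  change _ = (chartValue β γ (true, false) _)⁻¹ * (chartValue β γ (true, false) _ * _)
  simp only [chartValue_true_false, inv_one, one_mul]

end Monodromy

/-! ### The affine chart and the presentation -/

/-- The affine coordinates `(x / (y - z), (x² + 2y² - 2z²) / (y - z)²)` of the point `[x : y : z]`;
they are meaningful off the line `y = z`. -/
noncomputable def affineRatios (v : Fin 3 → ℂ) : ℂ × ℂ :=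
  (v 0 / (v 1 - v 2), (v 0 ^ 2 + 2 * v 1 ^ 2 - 2 * v 2 ^ 2) / (v 1 - v 2) ^ 2)

theorem affineRatios_smul {t : ℂ} (ht : t ≠ 0) (v : Fin 3 → ℂ) :
    affineRatios (t • v) = affineRatios v := by
  have hden : t * v 1 - t * v 2 = t * (v 1 - v 2) := by ring
  have hnum : (t * v 0) ^ 2 + 2 * (t * v 1) ^ 2 - 2 * (t * v 2) ^ 2 =
      t ^ 2 * (v 0 ^ 2 + 2 * v 1 ^ 2 - 2 * v 2 ^ 2) := by ring
  simp only [affineRatios, Pi.smul_apply, smul_eq_mul, hden, hnum, mul_pow t (v 1 - v 2)]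
  exact Prod.ext (mul_div_mul_left _ _ ht) (mul_div_mul_left _ _ (pow_ne_zero 2 ht))

theorem continuousAt_affineRatios {v : Fin 3 → ℂ} (h : v 1 - v 2 ≠ 0) :
    ContinuousAt affineRatios v := by
  have hsq : (v 1 - v 2) ^ 2 ≠ 0 := pow_ne_zero 2 h
  unfold affineRatios
  fun_prop (disch := assumption)

/-- The map induced by `affineRatios` on the projective plane. -/
noncomputable def affineCoord : Projectivization ℂ (Fin 3 → ℂ) → ℂ × ℂ :=
  Projectivization.lift (fun v => affineRatios v.1) fun v w t hvw => by
    have ht : t ≠ 0 := fun h => v.2 (by rw [hvw, h, zero_smul])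
    simp only [hvw, affineRatios_smul ht]

theorem affineCoord_mk {v : Fin 3 → ℂ} (hv : v ≠ 0) :
    affineCoord (Projectivization.mk ℂ v hv) = affineRatios v :=
  Projectivization.lift_mk _ _ _ _

theorem F_smul (t : ℂ) (v : Fin 3 → ℂ) : F (t • v) = t ^ 5 * F v := by
  simp only [F, Pi.smul_apply, smul_eq_mul]
  ring

theorem mk_mem_U_iff {v : Fin 3 → ℂ} (hv : v ≠ 0) : Projectivization.mk ℂ v hv ∈ U ↔ F v ≠ 0 := by
  refine not_congr ⟨?_, fun h => ⟨v, hv, h, rfl⟩⟩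
  rintro ⟨w, hw, h, hvw⟩
  obtain ⟨t, rfl⟩ := (Projectivization.mk_eq_mk_iff' ℂ _ _ _ _).1 hvw
  rw [F_smul, h, mul_zero]

theorem isQuotientMap_mk' : Topology.IsQuotientMap (Projectivization.mk' ℂ (V := Fin 3 → ℂ)) :=
  isQuotientMap_quotient_mk'

theorem isOpen_U : IsOpen U := by
  have hF : Continuous F := by
    unfold F
    fun_prop
  have hpre : Projectivization.mk' ℂ ⁻¹' U = {v : {v : Fin 3 → ℂ // v ≠ 0} | F v.1 ≠ 0} :=
    Set.ext fun v => mk_mem_U_iff v.2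
  rw [← isQuotientMap_mk'.isOpen_preimage, hpre]
  exact isOpen_ne_fun (hF.comp continuous_subtype_val) continuous_const

theorem sub_ne_zero_of_F_ne_zero {v : Fin 3 → ℂ} (h : F v ≠ 0) : v 1 - v 2 ≠ 0 :=
  right_ne_zero_of_mul h

theorem F_ne_zero_iff {v : Fin 3 → ℂ} (h : v 1 - v 2 ≠ 0) :
    F v ≠ 0 ↔ affineRatios v ∈ affineComplement := by
  have hsnd : (affineRatios v).2 ≠ 0 ↔ v 0 ^ 2 + 2 * v 1 ^ 2 - 2 * v 2 ^ 2 ≠ 0 :=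
    div_ne_zero_iff.trans (and_iff_left (pow_ne_zero 2 h))
  have hquartic : ((affineRatios v).1 ^ 2 - (affineRatios v).2 - 2) ^ 2 -
      16 * (affineRatios v).2 =
      -16 / (v 1 - v 2) ^ 2 * (v 0 ^ 2 + v 1 ^ 2 - 2 * v 2 ^ 2) := by
    simp only [affineRatios]
    field_simp
    ring
  have hcoeff : -16 / (v 1 - v 2) ^ 2 ≠ 0 := div_ne_zero (by norm_num) (pow_ne_zero 2 h)
  change _ ↔ (affineRatios v).2 ≠ 0 ∧ _ ≠ 16 * (affineRatios v).2
  rw [hsnd, ← sub_ne_zero (b := 16 * _), hquartic, mul_ne_zero_iff_left hcoeff, F,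
    mul_ne_zero_iff_right h, mul_ne_zero_iff, and_comm]

theorem affineCoord_mem {p : Projectivization ℂ (Fin 3 → ℂ)} (hp : p ∈ U) :
    affineCoord p ∈ affineComplement := by
  induction p with | h v hv =>
  rw [mk_mem_U_iff] at hp
  rw [affineCoord_mk]
  exact (F_ne_zero_iff (sub_ne_zero_of_F_ne_zero hp)).1 hp

/-- The vector `(x, y, z)` with `y - z = 1` and given affine coordinates. -/
noncomputable def affineVector (q : ℂ × ℂ) : Fin 3 → ℂ :=
  ![q.1, (1 + (q.2 - q.1 ^ 2) / 2) / 2, ((q.2 - q.1 ^ 2) / 2 - 1) / 2]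

theorem continuous_affineVector : Continuous affineVector := by
  unfold affineVector
  fun_prop

theorem affineVector_sub (q : ℂ × ℂ) : affineVector q 1 - affineVector q 2 = 1 := by
  change (1 + (q.2 - q.1 ^ 2) / 2) / 2 - ((q.2 - q.1 ^ 2) / 2 - 1) / 2 = 1
  ring

theorem affineVector_ne_zero (q : ℂ × ℂ) : affineVector q ≠ 0 := fun h => by
  simpa [h] using affineVector_sub q

theorem affineRatios_affineVector (q : ℂ × ℂ) : affineRatios (affineVector q) = q := by
  rw [affineRatios, affineVector_sub, one_pow, div_one, div_one]
  refine Prod.ext rfl ?_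
  change q.1 ^ 2 + 2 * ((1 + (q.2 - q.1 ^ 2) / 2) / 2) ^ 2 -
    2 * (((q.2 - q.1 ^ 2) / 2 - 1) / 2) ^ 2 = q.2
  ring

theorem affineVector_affineRatios {v : Fin 3 → ℂ} (h : v 1 - v 2 ≠ 0) :
    affineVector (affineRatios v) = (v 1 - v 2)⁻¹ • v := by
  funext i
  fin_cases i <;> simp [affineVector, affineRatios] <;> field_simp <;> ring

theorem mk_affineVector_mem {q : ℂ × ℂ} (hq : q ∈ affineComplement) :
    Projectivization.mk ℂ (affineVector q) (affineVector_ne_zero q) ∈ U := by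
  rwa [mk_mem_U_iff, F_ne_zero_iff (affineVector_sub q ▸ one_ne_zero), affineRatios_affineVector]

theorem mk_affineVector_affineCoord {p : Projectivization ℂ (Fin 3 → ℂ)} (hp : p ∈ U) :
    Projectivization.mk ℂ (affineVector (affineCoord p)) (affineVector_ne_zero _) = p := by
  induction p with | h v hv =>
  rw [mk_mem_U_iff] at hp
  rw [Projectivization.mk_eq_mk_iff', affineCoord_mk]
  exact ⟨_, (affineVector_affineRatios (sub_ne_zero_of_F_ne_zero hp)).symm⟩

theorem continuousOn_affineCoord : ContinuousOn affineCoord U := by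
  rw [continuousOn_iff_continuous_domRestrict,
    (isQuotientMap_mk'.restrictPreimage_isOpen isOpen_U).continuous_iff,
    continuous_iff_continuousAt]
  intro v
  have hv : F v.1.1 ≠ 0 := (mk_mem_U_iff v.1.2).1 v.2
  exact (continuousAt_affineRatios (sub_ne_zero_of_F_ne_zero hv)).comp
    (f := fun v : Projectivization.mk' ℂ ⁻¹' U => v.1.1) (by fun_prop)

/-- The affine chart off the line `y = z`, restricted to the complement of the curve. -/
noncomputable def affineHomeo : U ≃ₜ affineComplement where
  toFun p := ⟨affineCoord p, affineCoord_mem p.2⟩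
  invFun q := ⟨_, mk_affineVector_mem q.2⟩
  left_inv p := Subtype.ext (mk_affineVector_affineCoord p.2)
  right_inv q := Subtype.ext ((affineCoord_mk _).trans (affineRatios_affineVector q.1))
  continuous_toFun := continuousOn_affineCoord.domRestrict.subtype_mk _
  continuous_invFun := (isQuotientMap_mk'.continuous.comp
    ((continuous_affineVector.comp continuous_subtype_val).subtype_mk
      fun q => affineVector_ne_zero q.1)).subtype_mk _

/-- The isomorphism of fundamental groups induced by a homotopy equivalence. -/
noncomputable def fundamentalGroupMulEquivOfHomotopyEquiv {X Y : Type*} [TopologicalSpace X]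
    [TopologicalSpace Y] (e : ContinuousMap.HomotopyEquiv X Y) (x : X) :
    FundamentalGroup X x ≃* FundamentalGroup Y (e x) :=
  (FundamentalGroupoidFunctor.equivOfHomotopyEquiv (X := TopCat.of X) (Y := TopCat.of Y)
    e).fullyFaithfulFunctor.mulEquivEnd _

/-- The homomorphism from the presented group sending `a` and `b` to `crossingClass` and
`shiftLoop`. -/
noncomputable def presentedHom :
    PresentedGroup rels →* FundamentalGroup affineComplement (logCoverMap coverBase) :=
  PresentedGroup.toGroup (f := ![crossingClass, shiftLoop]) <| by
    rintro r rfl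
    simp only [map_mul, map_pow, map_inv, FreeGroup.lift_apply_of, Matrix.cons_val_zero,
      Matrix.cons_val_one]
    rw [crossingClass_mul_shiftLoop_sq, mul_inv_cancel]

theorem presentedHom_of_zero : presentedHom (PresentedGroup.of 0) = crossingClass :=
  PresentedGroup.toGroup.of _

theorem presentedHom_of_one : presentedHom (PresentedGroup.of 1) = shiftLoop :=
  PresentedGroup.toGroup.of _

theorem presentedHom_surjective : Function.Surjective presentedHom := by
  rw [← MonoidHom.range_eq_top, eq_top_iff, ← crossingSubgroup_eq_top, crossingSubgroup,
    Subgroup.closure_le]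
  rintro _ (rfl | rfl)
  · exact ⟨_, presentedHom_of_zero⟩
  · exact ⟨_, presentedHom_of_one⟩

theorem commute_mul_sq_left_of_mul_sq_eq {M : Type*} [Monoid M] {a b : M}
    (h : (a * b) ^ 2 = (b * a) ^ 2) : Commute ((a * b) ^ 2) a := by
  change (a * b) ^ 2 * a = a * (a * b) ^ 2
  nth_rw 2 [h]
  simp only [pow_two, mul_assoc]

theorem presentedHom_injective : Function.Injective presentedHom := by
  let _ : TopologicalSpace (PresentedGroup rels) := ⊥
  have : DiscreteTopology (PresentedGroup rels) := ⟨rfl⟩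
  set a : PresentedGroup rels := PresentedGroup.of 0
  set b : PresentedGroup rels := PresentedGroup.of 1
  have hrel : (a * b) ^ 2 = (b * a) ^ 2 :=
    PresentedGroup.mk_eq_mk_of_mul_inv_mem (rels := rels) rfl
  have hcomm : Commute ((a * b)⁻¹ ^ 2) a⁻¹ := by
    rw [inv_pow]
    exact (commute_mul_sq_left_of_mul_sq_eq hrel).inv_inv
  let S := sheetCocycle a⁻¹ (a * b)⁻¹ hcomm
  -- On the generators the monodromy is left translation, hence it is so on the whole group.
  have hregular : (S.monodromyHom (logCoverMap coverBase)).comp presentedHom =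
      MulAction.toPermHom (PresentedGroup rels) (PresentedGroup rels) := by
    refine PresentedGroup.ext fun i => Equiv.ext fun k => ?_
    rw [MonoidHom.comp_apply, MulAction.toPermHom_apply, MulAction.toPerm_apply, smul_eq_mul]
    fin_cases i
    · change S.monodromyHom _ (presentedHom (PresentedGroup.of 0)) k = a * k
      rw [presentedHom_of_zero, sheetCocycle_monodromyHom_crossingClass, inv_inv]
    · change S.monodromyHom _ (presentedHom (PresentedGroup.of 1)) k = b * k
      rw [presentedHom_of_one, sheetCocycle_monodromyHom_shiftLoop, inv_inv, inv_mul_cancel_left]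
  refine Function.Injective.of_comp (f := S.monodromyHom (logCoverMap coverBase)) ?_
  rw [← MonoidHom.coe_comp, hregular]
  exact MulAction.toPerm_injective

theorem pi1_two_tangent_conics_with_tangent_line (u : U) :
    Nonempty (FundamentalGroup U u ≃* PresentedGroup rels) :=
  have presentation : PresentedGroup rels ≃* _ :=
    MulEquiv.ofBijective presentedHom ⟨presentedHom_injective, presentedHom_surjective⟩
  ⟨(fundamentalGroupMulEquivOfHomotopyEquiv affineHomeo.toHomotopyEquiv u).trans
    ((FundamentalGroup.fundamentalGroupMulEquivOfPathConnected _ _).trans presentation.symm)⟩
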